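/- arXiv:1801.09789 — 4 statements merged into one kernel-verified Lean document; each statement's English description precedes it below -/
import Mathlib

section
/- Let T be a self-adjoint operator in a complex Hilbert space H whose spectrum lies inside pairwise disjoint intervals Δ_k = [α_{2k−1}, α_{2k}] ⊂ ℝ, k ∈ ℤ, such that inf_{k∈ℤ} (α_{2k+1} − α_{2k}) = d > 0 (i.e., the gaps between consecutive intervals have length at least d). Let B be a bounded (in general non-self-adjoint) operator on H with ‖B‖ = b* < d/2. Then for every ε ∈ (b*, d/2) the spectrum of the perturbed operator A = T + B lies in the union ⋃_k U_ε(Δ_k), where the U_ε(Δ_k) are the mutually disjoint ε-neighborhoods of the intervals Δ_k in ℂ; and if Q_k = −(1/2πi)∮_{Γ_k} (A − λ)^{−1} dλ with Γ_k = ∂U_ε(Δ_k) are the Riesz projections onto the invariant subspaces of A corresponding to the parts of the spectrum in U_ε(Δ_k), then the subspaces L_k = Q_k(H), k ∈ ℤ, form an unconditional basis of subspaces of H. -/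
noncomputable section

variable {H : Type*} [NormedAddCommGroup H] [InnerProductSpace ℂ H] [CompleteSpace H]

/-- `R` is a two-sided bounded inverse of `T - z` (so `z` is in the resolvent set of `T`). -/
def IsResolventOf (T : H →ₗ.[ℂ] H) (z : ℂ) (R : H →L[ℂ] H) : Prop :=
  (∀ x : T.domain, R (T x - z • (x : H)) = (x : H)) ∧
  (∀ y : H, ∃ hy : R y ∈ T.domain, T ⟨R y, hy⟩ - z • (R y) = y)

/-- The resolvent set of the (in general unbounded) operator `T`. -/
def pmResolventSet (T : H →ₗ.[ℂ] H) : Set ℂ := {z | ∃ R, IsResolventOf T z R}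

/-- The spectrum of the (in general unbounded) operator `T`. -/
def pmSpectrum (T : H →ₗ.[ℂ] H) : Set ℂ := (pmResolventSet T)ᶜ

/-- The operator sum `A = T + B` of an unbounded operator `T` and a bounded operator `B`,
defined on the domain of `T`. -/
def pmSumCLM (T : H →ₗ.[ℂ] H) (B : H →L[ℂ] H) : H →ₗ.[ℂ] H :=
  ⟨T.domain, T.toFun + B.toLinearMap.comp T.domain.subtype⟩

/-- `A - z` restricts to a bijection (with bounded inverse `R` preserving `V`) of the part
of `A` in the `A`-invariant subspace `V`. -/
def MapsResolvently (A : H →ₗ.[ℂ] H) (V : Submodule ℂ H) (z : ℂ) : Prop :=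
  ∃ R : H →L[ℂ] H, (∀ y ∈ V, R y ∈ V) ∧
    (∀ x : A.domain, (x : H) ∈ V → R (A x - z • (x : H)) = (x : H)) ∧
    (∀ y ∈ V, ∃ hy : R y ∈ A.domain, A ⟨R y, hy⟩ - z • (R y) = y)

/-- `Q` is the Riesz projection of `A` associated with the part of the spectrum of `A` in `U`:
`Q` is a bounded projection commuting with `A` such that the spectrum of the part of `A` in the
invariant subspace `ran Q` lies in `U` and the spectrum of the part of `A` in `ker Q` lies
outside `U`.  (This characterizes the contour-integral Riesz projection
`Q = −(2πi)⁻¹ ∮_{∂U} (A−λ)⁻¹ dλ`.) -/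
def IsRieszProjFor (A : H →ₗ.[ℂ] H) (U : Set ℂ) (Q : H →L[ℂ] H) : Prop :=
  Q.comp Q = Q ∧
  (∀ x : A.domain, ∃ hQx : Q (x : H) ∈ A.domain, A ⟨Q (x : H), hQx⟩ = Q (A x)) ∧
  (∀ z ∉ U, MapsResolvently A (LinearMap.range (Q : H →ₗ[ℂ] H)) z) ∧
  (∀ z ∈ U, MapsResolvently A (LinearMap.ker (Q : H →ₗ[ℂ] H)) z)

/-!
Every operator `A` that occurs has a point `c` in its resolvent set, and with `S = (A - c)⁻¹` one
has `(A - z)⁻¹ = S (1 - (z - c) S)⁻¹`, so the whole argument can be carried out with the bounded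
pencil `1 - (z - c) S`.  The Riesz projection of `A` for a set `U` is determined by the way in which
it splits this pencil, and contour integrals of the resolvent over circles provide such projections.

Let `Γ_k` be the circle around `Δ_k` that crosses the real axis at distance `d / 2` from `Δ_k`.
For `t` in the spectrum of `T`, the Poisson integral gives `∑_k ∮_{Γ_k} |z - t|⁻² |dz| ≤ C`, hence
`∑_k ∮_{Γ_k} ‖(T - z)⁻¹ f‖² |dz| ≤ C ‖f‖²` because `T` is self-adjoint.  On the circles,
`‖(T - z)⁻¹‖ ≤ ε⁻¹` and `‖B‖ < ε`, so the same estimate holds for `T + B` and its adjoint.  With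
`(T + B - z)⁻¹ - (T - z)⁻¹ = -(T + B - z)⁻¹ B (T - z)⁻¹`, Cauchy-Schwarz therefore bounds the norm
of `∑_{k ∈ F} (Q_k - P_k)` uniformly in the finite set `F`, where `P_k` are the spectral projections
of `T`.  The sums of the `Q_k` are thus uniformly bounded, and unconditional convergence only has to
be verified on a dense set.  On the range of `(T + B - c)⁻¹` the partial sums converge along
`F = {-N, …, N}`, by the same estimate on the large circle around `Δ_{-N}, …, Δ_N`.
-/

open Metric Set Filter Topology

section Pencil

variable {𝕜 𝔄 : Type*} [CommRing 𝕜] [Ring 𝔄] [Algebra 𝕜 𝔄]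
variable {S G G' K X Y : 𝔄} {c z w : 𝕜} {V W : Set 𝕜}

/-- If `S = (A - c)⁻¹`, this is `(A - z) * S`. Working with it, an unbounded operator `A` is handled
through its bounded resolvent `S` alone. -/
def pencil (S : 𝔄) (c z : 𝕜) : 𝔄 := 1 - (z - c) • S

/-- If `S = (A - c)⁻¹`, this is `(A - z)⁻¹` when `z` is in the resolvent set of `A`, and `0`
otherwise. -/
def pencilResolvent (S : 𝔄) (c z : 𝕜) : 𝔄 := S * Ring.inverse (pencil S c z)

lemma commute_pencil (h : Commute X S) (c z : 𝕜) : Commute X (pencil S c z) :=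
  (Commute.one_right X).sub_right (h.smul_right _)

lemma commute_ringInverse (h : Commute X Y) : Commute X (Ring.inverse Y) := by
  by_cases hY : IsUnit Y
  · obtain ⟨u, rfl⟩ := hY
    rw [Ring.inverse_unit]
    exact h.units_inv_right
  · rw [Ring.inverse_non_unit _ hY]
    exact Commute.zero_right _

lemma commute_pencilResolvent (h : Commute X S) (c z : 𝕜) : Commute X (pencilResolvent S c z) :=
  h.mul_right (commute_ringInverse (commute_pencil h c z))

lemma pencilResolvent_mul_pencil (h : IsUnit (pencil S c z)) :
    pencilResolvent S c z * pencil S c z = S := by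
  rw [pencilResolvent, mul_assoc, Ring.inverse_mul_cancel _ h, mul_one]

lemma pencil_mul_pencilResolvent (h : IsUnit (pencil S c z)) :
    pencil S c z * pencilResolvent S c z = S := by
  rw [(commute_pencilResolvent (commute_pencil (Commute.refl S) c z).symm c z).eq,
    pencilResolvent_mul_pencil h]

lemma pencil_mul_pencilResolvent_of_ne (h : IsUnit (pencil S c z)) (w : 𝕜) :
    pencil S c w * pencilResolvent S c z = S + (z - w) • (S * pencilResolvent S c z) := by
  have hw : pencil S c w = pencil S c z + (z - w) • S := by
    simp only [pencil]; module
  rw [hw, add_mul, pencil_mul_pencilResolvent h, smul_mul_assoc]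

lemma eq_pencilResolvent_mul (h : IsUnit (pencil S c z)) (hX : pencil S c z * X = S * Y) :
    X = pencilResolvent S c z * Y :=
  h.mul_left_cancel <| by rw [hX, ← mul_assoc, pencil_mul_pencilResolvent h]

/-- If `S = (A - c)⁻¹` and `G` is a projection commuting with `A`, this says that the part of
`A - w` in the range of `G` has a bounded inverse; it is given by the operator `K`. -/
def IsInvertibleOn (S : 𝔄) (c : 𝕜) (G : 𝔄) (w : 𝕜) : Prop :=
  ∃ K : 𝔄, pencil S c w * K = S * G ∧ K * pencil S c w = S * G

namespace IsInvertibleOn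

lemma of_isUnit (h : IsUnit (pencil S c w)) (hG : Commute G S) : IsInvertibleOn S c G w := by
  refine ⟨pencilResolvent S c w * G, by rw [← mul_assoc, pencil_mul_pencilResolvent h], ?_⟩
  rw [mul_assoc, (commute_pencil hG c w).eq, ← mul_assoc, pencilResolvent_mul_pencil h]

lemma of_mul_eq (h : pencil S c w * K = S * G) (hK : Commute K S) : IsInvertibleOn S c G w :=
  ⟨K, h, (commute_pencil hK c w).eq.trans h⟩

lemma mul_right (h : IsInvertibleOn S c G w) (hX : Commute X S) :
    IsInvertibleOn S c (G * X) w := by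
  obtain ⟨K, h₁, h₂⟩ := h
  refine ⟨K * X, by rw [← mul_assoc, h₁, mul_assoc], ?_⟩
  rw [mul_assoc, (commute_pencil hX c w).eq, ← mul_assoc, h₂, mul_assoc]

lemma add (h : IsInvertibleOn S c G w) (h' : IsInvertibleOn S c G' w) :
    IsInvertibleOn S c (G + G') w := by
  obtain ⟨K, h₁, h₂⟩ := h
  obtain ⟨K', h₁', h₂'⟩ := h'
  exact ⟨K + K', by rw [mul_add, h₁, h₁', mul_add], by rw [add_mul, h₂, h₂', mul_add]⟩

end IsInvertibleOn

/-- If `S = (A - c)⁻¹`, this says that `X` is a spectral projection of `A` for the set `V`: it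
reduces `A` to a part with spectrum in `V` and a part with spectrum outside `V`. -/
structure IsSpectralProj (S : 𝔄) (c : 𝕜) (V : Set 𝕜) (X : 𝔄) : Prop where
  isIdempotentElem : IsIdempotentElem X
  commute : Commute X S
  on_range : ∀ z ∉ V, IsInvertibleOn S c X z
  on_ker : ∀ z ∈ V, IsInvertibleOn S c (1 - X) z

namespace IsSpectralProj

lemma compl (hX : IsSpectralProj S c V X) : IsSpectralProj S c Vᶜ (1 - X) where
  isIdempotentElem := hX.isIdempotentElem.one_sub
  commute := (Commute.one_left S).sub_left hX.commute
  on_range z hz := hX.on_ker z (notMem_compl_iff.1 hz)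
  on_ker z hz := by rw [sub_sub_cancel]; exact hX.on_range z hz

lemma inter (hX : IsSpectralProj S c V X) (hY : IsSpectralProj S c W Y) (hXY : Commute X Y) :
    IsSpectralProj S c (V ∩ W) (X * Y) where
  isIdempotentElem := hX.isIdempotentElem.mul_of_commute hXY hY.isIdempotentElem
  commute := hX.commute.mul_left hY.commute
  on_range z hz := by
    by_cases hzV : z ∈ V
    · rw [hXY.eq]
      exact (hY.on_range z fun hzW ↦ hz ⟨hzV, hzW⟩).mul_right hX.commute
    · exact (hX.on_range z hzV).mul_right hY.commute
  on_ker z hz := by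
    have hdecomp : 1 - X * Y = (1 - X) + (1 - Y) * X := by rw [sub_mul, one_mul, hXY.eq]; abel
    rw [hdecomp]
    exact (hX.on_ker z hz.1).add ((hY.on_ker z hz.2).mul_right hX.commute)

lemma union (hX : IsSpectralProj S c V X) (hY : IsSpectralProj S c W Y) (hXY : X * Y = 0)
    (hYX : Y * X = 0) : IsSpectralProj S c (V ∪ W) (X + Y) := by
  have hcomm : Commute (1 - X) (1 - Y) :=
    ((Commute.one_right _).sub_right ((Commute.one_left _).sub_left (hXY.trans hYX.symm)))
  have hsum : X + Y = 1 - (1 - X) * (1 - Y) := by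
    rw [mul_sub, mul_one, sub_mul, one_mul, hXY]; abel
  rw [hsum, ← compl_compl (V ∪ W), compl_union]
  exact (hX.compl.inter hY.compl hcomm).compl

lemma zero : IsSpectralProj S c ∅ (0 : 𝔄) where
  isIdempotentElem := IsIdempotentElem.zero
  commute := Commute.zero_left S
  on_range _ _ := ⟨0, by simp, by simp⟩
  on_ker _ hz := hz.elim

lemma sum {ι : Type*} {U : ι → Set 𝕜} {P : ι → 𝔄} (F : Finset ι)
    (hP : ∀ i ∈ F, IsSpectralProj S c (U i) (P i))
    (horth : ∀ i ∈ F, ∀ j ∈ F, i ≠ j → P i * P j = 0) :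
    IsSpectralProj S c (⋃ i ∈ F, U i) (∑ i ∈ F, P i) := by
  classical
  induction F using Finset.induction_on with
  | empty => simpa using zero
  | insert i F hi ih =>
    have hne : ∀ j ∈ F, i ≠ j := fun j hj hij ↦ hi (hij ▸ hj)
    rw [Finset.sum_insert hi, Finset.set_biUnion_insert]
    refine (hP i (Finset.mem_insert_self i F)).union
      (ih (fun j hj ↦ hP j (Finset.mem_insert_of_mem hj)) fun j hj k hk ↦
        horth j (Finset.mem_insert_of_mem hj) k (Finset.mem_insert_of_mem hk)) ?_ ?_
    · rw [Finset.mul_sum]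
      exact Finset.sum_eq_zero fun j hj ↦
        horth i (Finset.mem_insert_self i F) j (Finset.mem_insert_of_mem hj) (hne j hj)
    · rw [Finset.sum_mul]
      exact Finset.sum_eq_zero fun j hj ↦
        horth j (Finset.mem_insert_of_mem hj) i (Finset.mem_insert_self i F) (hne j hj).symm

end IsSpectralProj

/-- If `S = (A - c)⁻¹` and `X` is a projection commuting with `A`, this says that `A - c` is bounded
on the range of `X`; it is given there by the operator `M`. -/
def IsBoundedOn (S X : 𝔄) : Prop := ∃ M : 𝔄, S * M = X ∧ M * S = X

namespace IsBoundedOn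

lemma mul_right (hX : IsBoundedOn S X) (hY : Commute Y S) : IsBoundedOn S (X * Y) := by
  obtain ⟨M, h₁, h₂⟩ := hX
  refine ⟨M * Y, by rw [← mul_assoc, h₁], ?_⟩
  rw [mul_assoc, hY.eq, ← mul_assoc, h₂]

lemma sum {ι : Type*} {P : ι → 𝔄} (F : Finset ι) (hP : ∀ i ∈ F, IsBoundedOn S (P i)) :
    IsBoundedOn S (∑ i ∈ F, P i) := by
  choose! M h₁ h₂ using hP
  exact ⟨∑ i ∈ F, M i, by rw [Finset.mul_sum, Finset.sum_congr rfl h₁],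
    by rw [Finset.sum_mul, Finset.sum_congr rfl h₂]⟩

end IsBoundedOn

lemma IsSpectralProj.isUnit_one_sub_smul (hG : IsSpectralProj S c ∅ G) (hbdd : IsBoundedOn S G)
    (z : 𝕜) : IsUnit (1 - z • (S * G)) := by
  obtain ⟨M, hSM, hMS⟩ := hbdd
  obtain ⟨K, hpK, hKp⟩ := hG.on_range (z + c) (notMem_empty _)
  have hGG : G * G = G := hG.isIdempotentElem
  have hGG' : G * (1 - G) = 0 := hG.isIdempotentElem.mul_one_sub_self
  have hG'G : (1 - G) * G = 0 := hG.isIdempotentElem.one_sub_mul_self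
  have hG'G' : (1 - G) * (1 - G) = 1 - G := hG.isIdempotentElem.one_sub
  have hpG := (commute_pencil hG.commute c (z + c)).eq
  set p := pencil S c (z + c) with hp
  have hdecomp : 1 - z • (S * G) = p * G + (1 - G) := by
    rw [hp, pencil, add_sub_cancel_right, sub_mul, one_mul, smul_mul_assoc]; abel
  rw [hdecomp]
  refine isUnit_iff_exists_and_exists.2 ⟨⟨G * (K * M) + (1 - G), ?_⟩, ⟨M * K * G + (1 - G), ?_⟩⟩
  · have hrange : p * G * (G * (K * M)) = G := by
      rw [mul_assoc, ← mul_assoc G G, hGG, ← mul_assoc, ← hpG, mul_assoc, ← mul_assoc p, hpK,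
        ← hG.commute.eq, mul_assoc, hSM, hGG]
      exact hGG
    rw [mul_add, add_mul, add_mul, hrange, ← mul_assoc (1 - G), hG'G, mul_assoc p, hGG', hG'G',
      zero_mul, mul_zero, add_zero, zero_add, add_sub_cancel]
  · have hrange : M * K * G * (p * G) = G := by
      rw [← hpG, ← mul_assoc, mul_assoc _ G G, hGG, mul_assoc _ G, hpG, ← mul_assoc, mul_assoc M,
        hKp, ← mul_assoc, hMS, hGG, hGG]
    rw [add_mul, mul_add, mul_add, hrange, mul_assoc _ G, hGG', ← hpG, ← mul_assoc, hG'G, hG'G',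
      zero_mul, mul_zero, add_zero, zero_add, add_sub_cancel]

end Pencil

section Vanishing

variable {𝔄 : Type*} [NormedRing 𝔄] [NormedAlgebra ℂ 𝔄] [CompleteSpace 𝔄]
variable {S T G M X Y : 𝔄} {c z : ℂ} {V W : Set ℂ}

lemma eq_zero_of_forall_isUnit_one_sub_smul (hMT : M * T = G) (hMG : M * G = M)
    (hT : ∀ z : ℂ, IsUnit (1 - z • T)) : G = 0 := by
  set F : ℂ → 𝔄 := fun z ↦ G * Ring.inverse (1 - z • T) with hF
  have hdiff : Differentiable ℂ F := fun z ↦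
    (differentiableAt_const G).mul <|
      (differentiableAt_inverse (𝕜 := ℂ) (hT z)).comp z
        ((differentiableAt_const 1).sub (differentiableAt_id.smul_const T))
  have hsmul (z : ℂ) : z • F z = M * F z - M := by
    have hinv : z • (T * Ring.inverse (1 - z • T)) = Ring.inverse (1 - z • T) - 1 := by
      have := Ring.mul_inverse_cancel _ (hT z)
      rw [sub_mul, one_mul, smul_mul_assoc] at this
      exact eq_sub_of_add_eq' (sub_eq_iff_eq_add.1 this).symm
    calc z • F z = M * (z • (T * Ring.inverse (1 - z • T))) := by
          simp only [hF, ← hMT, mul_smul_comm, mul_assoc]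
      _ = M * F z - M := by simp only [hinv, mul_sub, mul_one, hF, ← mul_assoc, hMG]
  have hbound : ∀ᶠ z : ℂ in cocompact ℂ, ‖F z‖ ≤ ‖M‖ * (‖z‖ - ‖M‖)⁻¹ := by
    filter_upwards [tendsto_norm_cocompact_atTop.eventually_gt_atTop ‖M‖] with z hz
    rw [← div_eq_mul_inv, le_div_iff₀ (sub_pos.2 hz)]
    have h₁ : ‖z‖ * ‖F z‖ ≤ ‖M‖ * ‖F z‖ + ‖M‖ := by
      rw [← norm_smul, hsmul]
      exact (norm_sub_le _ _).trans (by gcongr; exact norm_mul_le _ _)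
    linarith
  have hlim : Tendsto F (cocompact ℂ) (𝓝 0) := by
    refine squeeze_zero_norm' hbound ?_
    rw [← mul_zero ‖M‖]
    exact (tendsto_inv_atTop_zero.comp
      (tendsto_atTop_add_const_right _ (-‖M‖) tendsto_norm_cocompact_atTop)).const_mul _
  simpa [hF] using hdiff.apply_eq_of_tendsto_cocompact 0 hlim

lemma IsSpectralProj.eq_zero_of_empty (hG : IsSpectralProj S c ∅ G) (hbdd : IsBoundedOn S G) :
    G = 0 := by
  have hGG : G * G = G := hG.isIdempotentElem
  have hT := hG.isUnit_one_sub_smul hbdd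
  obtain ⟨M, -, hMS⟩ := hbdd
  refine eq_zero_of_forall_isUnit_one_sub_smul (T := S * G) (M := M * G) ?_
    (by rw [mul_assoc, hGG]) hT
  rw [mul_assoc, ← mul_assoc G, hG.commute.eq, mul_assoc, hGG, ← mul_assoc, hMS, hGG]

lemma IsSpectralProj.mul_eq_zero (hX : IsSpectralProj S c V X) (hbdd : IsBoundedOn S X)
    (hY : IsSpectralProj S c W Y) (hXY : Commute X Y) (hVW : Disjoint V W) : X * Y = 0 := by
  have h := hX.inter hY hXY
  rw [hVW.inter_eq] at h
  exact h.eq_zero_of_empty (hbdd.mul_right hY.commute)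

lemma IsSpectralProj.mul_eq_left (hX : IsSpectralProj S c V X) (hbdd : IsBoundedOn S X)
    (hY : IsSpectralProj S c W Y) (hXY : Commute X Y) (hVW : V ⊆ W) : X * Y = X := by
  have h := hX.mul_eq_zero hbdd hY.compl ((Commute.one_right X).sub_right hXY)
    (disjoint_compl_right_iff_subset.2 hVW)
  rw [mul_sub, mul_one, sub_eq_zero] at h
  exact h.symm

lemma IsSpectralProj.eq_of_isBoundedOn (hX : IsSpectralProj S c V X) (hXb : IsBoundedOn S X)
    (hY : IsSpectralProj S c V Y) (hYb : IsBoundedOn S Y) (hXY : Commute X Y) : X = Y := by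
  rw [← hX.mul_eq_left hXb hY hXY Subset.rfl, hXY.eq, hY.mul_eq_left hYb hX hXY.symm Subset.rfl]

end Vanishing

section RieszIntegral

lemma clm_circleIntegral {E F : Type*} [NormedAddCommGroup E] [NormedSpace ℂ E] [CompleteSpace E]
    [NormedAddCommGroup F] [NormedSpace ℂ F] [CompleteSpace F] (L : E →L[ℂ] F) {f : ℂ → E} {m : ℂ}
    {ρ : ℝ} (hf : CircleIntegrable f m ρ) :
    (∮ z in C(m, ρ), L (f z)) = L (∮ z in C(m, ρ), f z) := by
  simp only [circleIntegral, ← map_smul]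
  exact L.intervalIntegral_comp_comm hf.out

lemma circleIntegral_sub_inv_of_notMem_closedBall {m w : ℂ} {ρ : ℝ} (hρ : 0 ≤ ρ)
    (hw : w ∉ closedBall m ρ) : (∮ z in C(m, ρ), (z - w)⁻¹) = 0 := by
  refine DiffContOnCl.circleIntegral_eq_zero hρ
    (DifferentiableOn.diffContOnCl (s := ball m ρ) fun z hz ↦ ?_)
  have hzw : z - w ≠ 0 := sub_ne_zero.2 fun h ↦ hw (h ▸ closure_ball_subset_closedBall hz)
  exact ((differentiableAt_id.sub_const w).inv hzw).differentiableWithinAt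

lemma continuousOn_sub_inv {m w : ℂ} {ρ : ℝ} (hw : w ∉ sphere m ρ) :
    ContinuousOn (fun z : ℂ ↦ (z - w)⁻¹) (sphere m ρ) :=
  ContinuousOn.inv₀ (by fun_prop) fun _ hz ↦ sub_ne_zero.2 fun h ↦ hw (h ▸ hz)

variable {𝔄 : Type*} [NormedRing 𝔄] [NormedAlgebra ℂ 𝔄] [CompleteSpace 𝔄]
variable {S X : 𝔄} {c m w z : ℂ} {ρ ρ' : ℝ} {g : ℂ → ℂ} {V : Set ℂ}

lemma differentiableAt_pencilResolvent (h : IsUnit (pencil S c z)) :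
    DifferentiableAt ℂ (pencilResolvent S c) z := by
  have hpencil : DifferentiableAt ℂ (pencil S c) z :=
    (differentiableAt_const 1).sub ((differentiableAt_id.sub_const c).smul_const S)
  exact (differentiableAt_const S).mul ((differentiableAt_inverse (𝕜 := ℂ) h).comp z hpencil)

lemma continuousOn_pencilResolvent {s : Set ℂ} (h : ∀ z ∈ s, IsUnit (pencil S c z)) :
    ContinuousOn (pencilResolvent S c) s := fun z hz ↦
  (differentiableAt_pencilResolvent (h z hz)).continuousAt.continuousWithinAt

/-- If `S = (A - c)⁻¹`, this is the Cauchy integral `-(1/2πi) ∮ g(z) (A - z)⁻¹ dz` over the circle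
`|z - m| = ρ`. -/
def rieszIntegral (S : 𝔄) (c m : ℂ) (ρ : ℝ) (g : ℂ → ℂ) : 𝔄 :=
  -((2 * Real.pi * Complex.I : ℂ)⁻¹ • ∮ z in C(m, ρ), g z • pencilResolvent S c z)

/-- The Riesz projection `-(1/2πi) ∮ (A - z)⁻¹ dz` of `A` over the circle `|z - m| = ρ`, where
`S = (A - c)⁻¹`. -/
def rieszProj (S : 𝔄) (c m : ℂ) (ρ : ℝ) : 𝔄 := rieszIntegral S c m ρ fun _ ↦ 1

/-- The integral `-(1/2πi) ∮ (z - w)⁻¹ (A - z)⁻¹ dz` over the circle `|z - m| = ρ`, where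
`S = (A - c)⁻¹`. It inverts `A - w` on the range of the Riesz projection if `w` is outside the
circle, and `w - A` on its kernel if `w` is inside. -/
def localResolvent (S : 𝔄) (c m : ℂ) (ρ : ℝ) (w : ℂ) : 𝔄 :=
  rieszIntegral S c m ρ fun z ↦ (z - w)⁻¹

lemma circleIntegrable_smul_pencilResolvent (hρ : 0 < ρ)
    (hunit : ∀ z ∈ sphere m ρ, IsUnit (pencil S c z)) (hg : ContinuousOn g (sphere m ρ)) :
    CircleIntegrable (fun z ↦ g z • pencilResolvent S c z) m ρ :=
  ContinuousOn.circleIntegrable hρ.le (hg.smul (continuousOn_pencilResolvent hunit))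

lemma map_rieszIntegral {E : Type*} [NormedAddCommGroup E] [NormedSpace ℂ E] [CompleteSpace E]
    (L : 𝔄 →L[ℂ] E) (hρ : 0 < ρ) (hunit : ∀ z ∈ sphere m ρ, IsUnit (pencil S c z))
    (hg : ContinuousOn g (sphere m ρ)) :
    L (rieszIntegral S c m ρ g) = -((2 * Real.pi * Complex.I : ℂ)⁻¹ •
      ∮ z in C(m, ρ), g z • L (pencilResolvent S c z)) := by
  simp only [rieszIntegral, map_neg, map_smul,
    ← clm_circleIntegral L (circleIntegrable_smul_pencilResolvent hρ hunit hg)]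

lemma mul_rieszIntegral (hρ : 0 < ρ) (hunit : ∀ z ∈ sphere m ρ, IsUnit (pencil S c z))
    (hg : ContinuousOn g (sphere m ρ)) (X : 𝔄) :
    X * rieszIntegral S c m ρ g = -((2 * Real.pi * Complex.I : ℂ)⁻¹ •
      ∮ z in C(m, ρ), g z • (X * pencilResolvent S c z)) :=
  map_rieszIntegral (ContinuousLinearMap.mul ℂ 𝔄 X) hρ hunit hg

lemma rieszIntegral_mul (hρ : 0 < ρ) (hunit : ∀ z ∈ sphere m ρ, IsUnit (pencil S c z))
    (hg : ContinuousOn g (sphere m ρ)) (X : 𝔄) :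
    rieszIntegral S c m ρ g * X = -((2 * Real.pi * Complex.I : ℂ)⁻¹ •
      ∮ z in C(m, ρ), g z • (pencilResolvent S c z * X)) :=
  map_rieszIntegral ((ContinuousLinearMap.mul ℂ 𝔄).flip X) hρ hunit hg

lemma commute_rieszIntegral (hX : Commute X S) (hρ : 0 < ρ)
    (hunit : ∀ z ∈ sphere m ρ, IsUnit (pencil S c z)) (hg : ContinuousOn g (sphere m ρ)) :
    Commute X (rieszIntegral S c m ρ g) := by
  rw [Commute, SemiconjBy, mul_rieszIntegral hρ hunit hg, rieszIntegral_mul hρ hunit hg]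
  simp only [(commute_pencilResolvent hX c _).eq]

lemma commute_rieszProj (hX : Commute X S) (hρ : 0 < ρ)
    (hunit : ∀ z ∈ sphere m ρ, IsUnit (pencil S c z)) : Commute X (rieszProj S c m ρ) :=
  commute_rieszIntegral hX hρ hunit continuousOn_const

lemma commute_localResolvent (hX : Commute X S) (hρ : 0 < ρ)
    (hunit : ∀ z ∈ sphere m ρ, IsUnit (pencil S c z)) (hw : w ∉ sphere m ρ) :
    Commute X (localResolvent S c m ρ w) :=
  commute_rieszIntegral hX hρ hunit (continuousOn_sub_inv hw)

lemma pencil_mul_localResolvent (hρ : 0 < ρ) (hunit : ∀ z ∈ sphere m ρ, IsUnit (pencil S c z))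
    (hw : w ∉ sphere m ρ) :
    pencil S c w * localResolvent S c m ρ w = S * rieszProj S c m ρ -
      ((2 * Real.pi * Complex.I : ℂ)⁻¹ * ∮ z in C(m, ρ), (z - w)⁻¹) • S := by
  have hexpand : (∮ z in C(m, ρ), (z - w)⁻¹ • (pencil S c w * pencilResolvent S c z)) =
      ∮ z in C(m, ρ), ((z - w)⁻¹ • S + (1 : ℂ) • (S * pencilResolvent S c z)) := by
    refine circleIntegral.integral_congr hρ.le fun z hz ↦ ?_
    have hzw : z - w ≠ 0 := sub_ne_zero.2 fun h ↦ hw (h ▸ hz)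
    simp only [pencil_mul_pencilResolvent_of_ne (hunit z hz), smul_add, smul_smul,
      inv_mul_cancel₀ hzw]
  have hint : CircleIntegrable (fun z ↦ (z - w)⁻¹ • S) m ρ :=
    ((continuousOn_sub_inv hw).smul continuousOn_const).circleIntegrable hρ.le
  have hint' : CircleIntegrable (fun z ↦ (1 : ℂ) • (S * pencilResolvent S c z)) m ρ :=
    (continuousOn_const.smul (continuousOn_const.mul
      (continuousOn_pencilResolvent hunit))).circleIntegrable hρ.le
  rw [circleIntegral.integral_add hint hint', circleIntegral.integral_smul_const] at hexpand
  rw [localResolvent, mul_rieszIntegral hρ hunit (continuousOn_sub_inv hw), hexpand, rieszProj,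
    mul_rieszIntegral hρ hunit continuousOn_const, smul_add, smul_smul]
  abel

lemma pencil_mul_localResolvent_of_mem_ball (hρ : 0 < ρ)
    (hunit : ∀ z ∈ sphere m ρ, IsUnit (pencil S c z)) (hw : w ∈ ball m ρ) :
    pencil S c w * localResolvent S c m ρ w = S * (rieszProj S c m ρ - 1) := by
  rw [pencil_mul_localResolvent hρ hunit fun h ↦ (mem_ball.1 hw).ne (mem_sphere.1 h),
    circleIntegral.integral_sub_inv_of_mem_ball hw, inv_mul_cancel₀ Complex.two_pi_I_ne_zero,
    one_smul, mul_sub, mul_one]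

lemma pencil_mul_localResolvent_of_notMem_closedBall (hρ : 0 < ρ)
    (hunit : ∀ z ∈ sphere m ρ, IsUnit (pencil S c z)) (hw : w ∉ closedBall m ρ) :
    pencil S c w * localResolvent S c m ρ w = S * rieszProj S c m ρ := by
  rw [pencil_mul_localResolvent hρ hunit fun h ↦ hw (sphere_subset_closedBall h),
    circleIntegral_sub_inv_of_notMem_closedBall hρ.le hw, mul_zero, zero_smul, sub_zero]

lemma isInvertibleOn_rieszProj (hρ : 0 < ρ) (hunit : ∀ z ∈ sphere m ρ, IsUnit (pencil S c z))
    (hw : w ∉ closedBall m ρ) : IsInvertibleOn S c (rieszProj S c m ρ) w :=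
  .of_mul_eq (pencil_mul_localResolvent_of_notMem_closedBall hρ hunit hw)
    (commute_localResolvent (Commute.refl S) hρ hunit fun h ↦
      hw (sphere_subset_closedBall h)).symm

lemma isInvertibleOn_one_sub_rieszProj (hρ : 0 < ρ)
    (hunit : ∀ z ∈ sphere m ρ, IsUnit (pencil S c z)) (hw : w ∈ ball m ρ) :
    IsInvertibleOn S c (1 - rieszProj S c m ρ) w := by
  refine .of_mul_eq (K := -localResolvent S c m ρ w) ?_
    (commute_localResolvent (Commute.refl S) hρ hunit fun h ↦
      (mem_ball.1 hw).ne (mem_sphere.1 h)).symm.neg_left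
  rw [mul_neg, pencil_mul_localResolvent_of_mem_ball hρ hunit hw, ← mul_neg, neg_sub]

-- Since `(z - c) S (A - z)⁻¹ = (A - z)⁻¹ - S`, the weight `z - c` gives the operator `(A - c) Q`.
lemma isBoundedOn_rieszProj (hρ : 0 < ρ) (hunit : ∀ z ∈ sphere m ρ, IsUnit (pencil S c z)) :
    IsBoundedOn S (rieszProj S c m ρ) := by
  have hg : ContinuousOn (fun z ↦ z - c) (sphere m ρ) := by fun_prop
  have hSM : S * rieszIntegral S c m ρ (fun z ↦ z - c) = rieszProj S c m ρ := by
    have hexpand : (∮ z in C(m, ρ), (z - c) • (S * pencilResolvent S c z)) =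
        ∮ z in C(m, ρ), ((1 : ℂ) • pencilResolvent S c z - S) := by
      refine circleIntegral.integral_congr hρ.le fun z hz ↦ ?_
      have h := pencil_mul_pencilResolvent (hunit z hz)
      rw [pencil, sub_mul, one_mul, smul_mul_assoc] at h
      simp only [one_smul]
      exact (sub_eq_of_eq_add' (sub_eq_iff_eq_add.1 h)).symm
    rw [mul_rieszIntegral hρ hunit hg, hexpand, circleIntegral.integral_sub
      (circleIntegrable_smul_pencilResolvent hρ hunit continuousOn_const)
      (circleIntegrable_const _ _ _), DiffContOnCl.circleIntegral_eq_zero hρ.le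
      (diffContOnCl_const (c := S)), sub_zero, rieszProj, rieszIntegral]
  refine ⟨_, hSM, ?_⟩
  rw [← (commute_rieszIntegral (Commute.refl S) hρ hunit hg).eq, hSM]

lemma rieszProj_eq_of_annulus (hρ' : 0 < ρ') (hle : ρ' ≤ ρ)
    (hunit : ∀ z ∈ closedBall m ρ \ ball m ρ', IsUnit (pencil S c z)) :
    rieszProj S c m ρ = rieszProj S c m ρ' := by
  rw [rieszProj, rieszProj, rieszIntegral, rieszIntegral]
  congr 2
  simp only [one_smul]
  refine Complex.circleIntegral_eq_of_differentiable_on_annulus_off_countable hρ' hle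
    countable_empty (continuousOn_pencilResolvent hunit) fun z hz ↦
      differentiableAt_pencilResolvent (hunit z ⟨ball_subset_closedBall hz.1.1, fun h ↦
        hz.1.2 (ball_subset_closedBall h)⟩)

lemma circleIntegral_localResolvent_eq_zero (hρ' : 0 < ρ') (hlt : ρ' < ρ)
    (hunit : ∀ z ∈ sphere m ρ, IsUnit (pencil S c z)) :
    (∮ z in C(m, ρ'), localResolvent S c m ρ z) = 0 := by
  have hρ : 0 < ρ := hρ'.trans hlt
  have hR : ((ρ.toNNReal : NNReal) : ℝ) = ρ := Real.coe_toNNReal _ hρ.le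
  have hp := hasFPowerSeriesOn_cauchy_integral (f := pencilResolvent S c) (c := m)
    (R := ρ.toNNReal)
    (by rw [hR]; exact (continuousOn_pencilResolvent hunit).circleIntegrable hρ.le)
    (Real.toNNReal_pos.2 hρ)
  have hdiff := hp.differentiableOn.neg
  rw [eball_coe, hR] at hdiff
  exact DiffContOnCl.circleIntegral_eq_zero hρ'.le <| DifferentiableOn.diffContOnCl <|
    hdiff.mono fun z hz ↦ closedBall_subset_ball hlt (closure_ball_subset_closedBall hz)

-- For `z` on the smaller circle `(A - z)⁻¹ (Q - 1)` is the local resolvent at `z`, which is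
-- holomorphic inside the larger circle.
lemma isIdempotentElem_rieszProj (hρ' : 0 < ρ') (hlt : ρ' < ρ)
    (hunit : ∀ z ∈ closedBall m ρ \ ball m ρ', IsUnit (pencil S c z)) :
    IsIdempotentElem (rieszProj S c m ρ) := by
  have hρ : 0 < ρ := hρ'.trans hlt
  have hsphere : ∀ z ∈ sphere m ρ, IsUnit (pencil S c z) := fun z hz ↦
    hunit z ⟨sphere_subset_closedBall hz, fun h ↦ (hlt.trans_eq hz.symm).not_gt h⟩
  have hsphere' : ∀ z ∈ sphere m ρ', IsUnit (pencil S c z) := fun z hz ↦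
    hunit z ⟨closedBall_subset_closedBall hlt.le (sphere_subset_closedBall hz),
      fun h ↦ (mem_ball.1 h).ne (mem_sphere.1 hz)⟩
  have hzero : rieszProj S c m ρ' * (rieszProj S c m ρ - 1) = 0 := by
    rw [rieszProj, rieszIntegral_mul hρ' hsphere' continuousOn_const]
    have hcongr : (∮ z in C(m, ρ'), (1 : ℂ) • (pencilResolvent S c z * (rieszProj S c m ρ - 1))) =
        ∮ z in C(m, ρ'), localResolvent S c m ρ z :=
      circleIntegral.integral_congr hρ'.le fun z hz ↦ by
        simp only [one_smul]
        exact (eq_pencilResolvent_mul (hsphere' z hz) (pencil_mul_localResolvent_of_mem_ball hρ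
          hsphere (sphere_subset_ball hlt hz))).symm
    rw [hcongr, circleIntegral_localResolvent_eq_zero hρ' hlt hsphere, smul_zero, neg_zero]
  rwa [← rieszProj_eq_of_annulus hρ' hlt.le hunit, mul_sub, mul_one, sub_eq_zero] at hzero

lemma isSpectralProj_rieszProj (hρ' : 0 < ρ') (hlt : ρ' < ρ) (hV : V ⊆ ball m ρ')
    (hunit : ∀ z ∈ closedBall m ρ \ V, IsUnit (pencil S c z)) :
    IsSpectralProj S c V (rieszProj S c m ρ) := by
  have hρ : 0 < ρ := hρ'.trans hlt
  have hV' : V ⊆ ball m ρ := hV.trans (ball_subset_ball hlt.le)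
  have hsphere : ∀ z ∈ sphere m ρ, IsUnit (pencil S c z) := fun z hz ↦
    hunit z ⟨sphere_subset_closedBall hz, fun h ↦ (mem_ball.1 (hV' h)).ne (mem_sphere.1 hz)⟩
  have hcomm := (commute_rieszProj (Commute.refl S) hρ hsphere).symm
  refine ⟨isIdempotentElem_rieszProj hρ' hlt fun z hz ↦ hunit z ⟨hz.1, fun h ↦ hz.2 (hV h)⟩, hcomm,
    fun z hz ↦ ?_, fun z hz ↦ isInvertibleOn_one_sub_rieszProj hρ hsphere (hV' hz)⟩
  by_cases hzρ : z ∈ closedBall m ρ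
  · exact .of_isUnit (hunit z ⟨hzρ, hz⟩) hcomm
  · exact isInvertibleOn_rieszProj hρ hsphere hzρ

end RieszIntegral

section Unbounded

variable {E : Type*} [NormedAddCommGroup E] [InnerProductSpace ℂ E]
variable {A : E →ₗ.[ℂ] E} {S R R' G X B : E →L[ℂ] E} {c z : ℂ} {U : Set ℂ}

lemma pencil_apply (S : E →L[ℂ] E) (c z : ℂ) (y : E) : pencil S c z y = y - (z - c) • S y := rfl

namespace IsResolventOf

lemma apply_mem_domain (hS : IsResolventOf A c S) (y : E) : S y ∈ A.domain := (hS.2 y).1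

lemma apply_of_eq (hS : IsResolventOf A c S) {x y : E} (hxy : S y = x) (hx : x ∈ A.domain) :
    A ⟨x, hx⟩ = y + c • x := by
  subst hxy
  exact sub_eq_iff_eq_add.1 (hS.2 y).2

lemma exists_eq (hS : IsResolventOf A c S) (x : A.domain) : ∃ y, S y = (x : E) :=
  ⟨A x - c • (x : E), hS.1 x⟩

lemma sub_smul_eq_pencil (hS : IsResolventOf A c S) (z : ℂ) {x y : E} (hxy : S y = x)
    (hx : x ∈ A.domain) : A ⟨x, hx⟩ - z • x = pencil S c z y := by
  rw [hS.apply_of_eq hxy, pencil_apply, hxy]; module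

lemma mul_pencil (hS : IsResolventOf A c S) (hR : IsResolventOf A z R) :
    R * pencil S c z = S := by
  ext y
  have h := hR.1 ⟨S y, hS.apply_mem_domain y⟩
  rwa [hS.sub_smul_eq_pencil z rfl] at h

lemma isUnit_pencil (hS : IsResolventOf A c S) (hR : IsResolventOf A z R) :
    IsUnit (pencil S c z) := by
  have h {S R : E →L[ℂ] E} {c z : ℂ} (hS : IsResolventOf A c S) (hR : IsResolventOf A z R) :
      pencil S c z * pencil R z c = 1 := by
    nth_rewrite 1 [pencil]
    rw [sub_mul, one_mul, smul_mul_assoc, hR.mul_pencil hS, pencil]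
    module
  exact ⟨⟨pencil S c z, pencil R z c, h hS hR, h hR hS⟩, rfl⟩

lemma isUnit_pencil_of_mem (hS : IsResolventOf A c S) (hz : z ∈ pmResolventSet A) :
    IsUnit (pencil S c z) :=
  hz.elim fun _ ↦ hS.isUnit_pencil

lemma pencilResolvent (hS : IsResolventOf A c S) (hz : z ∈ pmResolventSet A) :
    IsResolventOf A z (pencilResolvent S c z) := by
  obtain ⟨R, hR⟩ := hz
  have hunit := hS.isUnit_pencil hR
  rwa [← hunit.mul_right_cancel ((hS.mul_pencil hR).trans (pencilResolvent_mul_pencil hunit).symm)]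

end IsResolventOf

lemma IsInvertibleOn.mapsResolvently (hS : IsResolventOf A c S) (hG : IsIdempotentElem G)
    (hGS : Commute G S) (h : IsInvertibleOn S c G z) {V : Submodule ℂ E}
    (hV : ∀ y, y ∈ V ↔ G y = y) : MapsResolvently A V z := by
  obtain ⟨K, hpK, hKp⟩ := h
  have hGSG : G * (S * G) = S * G := by rw [← mul_assoc, hGS.eq, mul_assoc, hG.eq]
  have hpGK (y : E) : pencil S c z ((G * K) y) = S (G y) := by
    have h : pencil S c z * (G * K) = S * G := by
      rw [← mul_assoc, ← (commute_pencil hGS c z).eq, mul_assoc, hpK, hGSG]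
    exact congr($h y)
  have hGKp (y : E) : (G * K) (pencil S c z y) = S (G y) := by
    have h : G * K * pencil S c z = S * G := by rw [mul_assoc, hKp, hGSG]
    exact congr($h y)
  refine ⟨G * K, fun y _ ↦ (hV _).2 congr($(hG.eq) (K y)), fun x hx ↦ ?_, fun y hy ↦ ?_⟩
  · obtain ⟨y, hy⟩ := hS.exists_eq x
    rw [hS.sub_smul_eq_pencil z hy, hGKp, ← (hV _).1 hx, ← hy]
    exact congr($(hGS.eq) y).symm
  · have hKy : S (y + (z - c) • (G * K) y) = (G * K) y := by
      have h := hpGK y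
      rw [pencil_apply, (hV _).1 hy, sub_eq_iff_eq_add] at h
      rw [map_add, map_smul, ← h]
    refine ⟨hKy ▸ hS.apply_mem_domain _, ?_⟩
    rw [hS.apply_of_eq hKy]; module

lemma MapsResolvently.isInvertibleOn (hS : IsResolventOf A c S) (hG : IsIdempotentElem G)
    (hGS : Commute G S) {V : Submodule ℂ E} (hV : ∀ y, y ∈ V ↔ G y = y)
    (h : MapsResolvently A V z) : IsInvertibleOn S c G z := by
  obtain ⟨R, -, hleft, hright⟩ := h
  have hGV (y : E) : G y ∈ V := (hV _).2 congr($(hG.eq) y)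
  refine ⟨R * G, ?_, ?_⟩
  · ext y
    obtain ⟨hRG, hR⟩ := hright _ (hGV y)
    obtain ⟨x, hx⟩ := hS.exists_eq ⟨R (G y), hRG⟩
    have hpx : pencil S c z x = G y := by rw [← hS.sub_smul_eq_pencil z hx hRG, hR]
    calc pencil S c z (R (G y)) = pencil S c z (S x) := by rw [hx]
      _ = S (pencil S c z x) := congr($((commute_pencil (Commute.refl S) c z).eq) x).symm
      _ = S (G y) := by rw [hpx]
  · ext y
    have hSG : S (G y) ∈ V := congr($(hGS.eq) y) ▸ hGV (S y)
    calc R (G (pencil S c z y)) = R (pencil S c z (G y)) :=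
          congr(R ($((commute_pencil hGS c z).eq) y))
      _ = S (G y) := by
          rw [← hS.sub_smul_eq_pencil z rfl (hS.apply_mem_domain _)]
          exact hleft ⟨S (G y), hS.apply_mem_domain _⟩ hSG

lemma mem_range_iff_of_isIdempotentElem (hX : IsIdempotentElem X) (y : E) :
    y ∈ LinearMap.range (X : E →ₗ[ℂ] E) ↔ X y = y :=
  ⟨by rintro ⟨x, rfl⟩; exact congr($(hX.eq) x), fun h ↦ ⟨y, h⟩⟩

lemma mem_ker_iff_one_sub_apply (X : E →L[ℂ] E) (y : E) :
    y ∈ LinearMap.ker (X : E →ₗ[ℂ] E) ↔ (1 - X) y = y := by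
  simp

lemma IsSpectralProj.isRieszProjFor (hS : IsResolventOf A c S) (hX : IsSpectralProj S c U X) :
    IsRieszProjFor A U X := by
  refine ⟨hX.isIdempotentElem, fun x ↦ ?_, fun z hz ↦ ?_, fun z hz ↦ ?_⟩
  · obtain ⟨y, hy⟩ := hS.exists_eq x
    have hXy : S (X y) = X x := by rw [← hy]; exact congr($(hX.commute.eq) y).symm
    refine ⟨hXy ▸ hS.apply_mem_domain _, ?_⟩
    rw [hS.apply_of_eq hXy, hS.apply_of_eq hy, map_add, map_smul]
  · exact (hX.on_range z hz).mapsResolvently hS hX.isIdempotentElem hX.commute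
      (mem_range_iff_of_isIdempotentElem hX.isIdempotentElem)
  · exact (hX.on_ker z hz).mapsResolvently hS hX.compl.isIdempotentElem hX.compl.commute
      (mem_ker_iff_one_sub_apply X)

lemma IsRieszProjFor.isSpectralProj (hS : IsResolventOf A c S) (hX : IsRieszProjFor A U X) :
    IsSpectralProj S c U X := by
  obtain ⟨hidem, hcomm, hrange, hker⟩ := hX
  have hidem' : IsIdempotentElem X := hidem
  have hXS : Commute X S := by
    ext y
    obtain ⟨hXSy, h⟩ := hcomm ⟨S y, hS.apply_mem_domain y⟩
    obtain ⟨x, hx⟩ := hS.exists_eq ⟨X (S y), hXSy⟩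
    rw [hS.apply_of_eq hx, hS.apply_of_eq rfl, map_add, map_smul] at h
    rw [mul_apply_eq_comp, mul_apply_eq_comp, ← add_right_cancel h, hx]
  exact ⟨hidem, hXS,
    fun z hz ↦ (hrange z hz).isInvertibleOn hS hidem' hXS
      (mem_range_iff_of_isIdempotentElem hidem'),
    fun z hz ↦ (hker z hz).isInvertibleOn hS hidem'.one_sub
      ((Commute.one_left S).sub_left hXS) (mem_ker_iff_one_sub_apply X)⟩

lemma IsResolventOf.mem_pmResolventSet_pmSumCLM (hR : IsResolventOf A z R)
    (hunit : IsUnit (1 + B * R)) : z ∈ pmResolventSet (pmSumCLM A B) := by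
  obtain ⟨u, hu⟩ := hunit
  have hright (y : E) : (↑u⁻¹ : E →L[ℂ] E) y + B (R ((↑u⁻¹ : E →L[ℂ] E) y)) = y := by
    have h : (1 + B * R) * ↑u⁻¹ = 1 := by rw [← hu, Units.mul_inv]
    exact congr($h y)
  have hleft (y : E) : (↑u⁻¹ : E →L[ℂ] E) (y + B (R y)) = y := by
    have h : ↑u⁻¹ * (1 + B * R) = 1 := by rw [← hu, Units.inv_mul]
    exact congr($h y)
  refine ⟨R * ↑u⁻¹, ?_, fun y ↦ ⟨hR.apply_mem_domain _, ?_⟩⟩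
  · rintro ⟨x, hx : x ∈ A.domain⟩
    obtain ⟨y, hy⟩ := hR.exists_eq ⟨x, hx⟩
    have hAx : A ⟨x, hx⟩ + B x - z • x = y + B (R y) := by
      rw [hR.apply_of_eq hy, hy]; abel
    calc R ((↑u⁻¹ : E →L[ℂ] E) (A ⟨x, hx⟩ + B x - z • x)) = R y := by rw [hAx, hleft]
      _ = x := hy
  · change A ⟨R ((↑u⁻¹ : E →L[ℂ] E) y), hR.apply_mem_domain _⟩ + B (R ((↑u⁻¹ : E →L[ℂ] E) y)) -
      z • R ((↑u⁻¹ : E →L[ℂ] E) y) = y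
    rw [hR.apply_of_eq rfl, add_right_comm, add_sub_cancel_right, hright]

lemma IsResolventOf.sub_eq_neg_mul_mul (hR : IsResolventOf A z R)
    (hR' : IsResolventOf (pmSumCLM A B) z R') : R' - R = -(R' * B * R) := by
  ext y
  have h : R' (A ⟨R y, hR.apply_mem_domain y⟩ + B (R y) - z • R y) = R y :=
    hR'.1 ⟨R y, hR.apply_mem_domain y⟩
  rw [hR.apply_of_eq rfl, add_right_comm, add_sub_cancel_right, map_add] at h
  change R' y - R y = -R' (B (R y))
  rw [sub_eq_iff_eq_add', ← sub_eq_add_neg, eq_sub_iff_add_eq, h]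

lemma IsResolventOf.sub_eq_neg_mul_mul' (hR : IsResolventOf A z R)
    (hR' : IsResolventOf (pmSumCLM A B) z R') : R' - R = -(R * B * R') := by
  ext y
  obtain ⟨hmem, h⟩ := hR'.2 y
  change R' y ∈ A.domain at hmem
  have hRy : R (A ⟨R' y, hmem⟩ - z • R' y) = R' y := hR.1 ⟨R' y, hmem⟩
  have hy : A ⟨R' y, hmem⟩ - z • R' y + B (R' y) = y := (sub_add_eq_add_sub _ _ _).trans h
  rw [eq_sub_of_add_eq hy, map_sub] at hRy
  change R' y - R y = -R (B (R' y))
  rw [sub_eq_iff_eq_add', ← sub_eq_add_neg, hRy]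

lemma IsResolventOf.denseRange (hA : Dense (A.domain : Set E)) (hS : IsResolventOf A c S) :
    DenseRange S :=
  hA.mono fun x hx ↦ hS.exists_eq ⟨x, hx⟩

lemma IsResolventOf.isSelfAdjoint {T : H →ₗ.[ℂ] H} (hT : IsSelfAdjoint T) {c : ℝ} {S : H →L[ℂ] H}
    (hS : IsResolventOf T c S) : IsSelfAdjoint S := by
  have hsymm : T.IsFormalAdjoint T := by
    simpa only [LinearPMap.isSelfAdjoint_def.1 hT] using
      LinearPMap.adjoint_isFormalAdjoint hT.dense_domain
  rw [ContinuousLinearMap.isSelfAdjoint_iff', eq_comm, ContinuousLinearMap.eq_adjoint_iff]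
  intro x y
  have h := hsymm ⟨S x, hS.apply_mem_domain x⟩ ⟨S y, hS.apply_mem_domain y⟩
  rw [hS.apply_of_eq rfl, hS.apply_of_eq rfl] at h
  simp only [inner_add_left, inner_add_right, inner_smul_left, inner_smul_right,
    Complex.conj_ofReal] at h
  exact (add_right_cancel h).symm

end Unbounded

section NormalResolvent

variable {𝔄 : Type*} [CStarAlgebra 𝔄] {N : 𝔄} {c z w : ℂ} {r : ℝ}

/-- The function whose value at `S = (A - c)⁻¹` is `(A - z)⁻¹`. -/
def resolventSymbol (c z w : ℂ) : ℂ := w * (1 - (z - c) * w)⁻¹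

lemma resolventSymbol_eq_inv_sub (hw : w ≠ 0) : resolventSymbol c z w = (c + w⁻¹ - z)⁻¹ := by
  rw [resolventSymbol, ← inv_inv w, ← mul_inv, inv_inv w]
  congr 1
  field_simp
  ring

lemma norm_resolventSymbol (hw : w ≠ 0) : ‖resolventSymbol c z w‖ = (dist z (c + w⁻¹))⁻¹ := by
  rw [resolventSymbol_eq_inv_sub hw, norm_inv, dist_comm, dist_eq_norm]

lemma not_isUnit_pencil_of_mem_spectrum (hw : w ∈ spectrum ℂ N) (hw0 : w ≠ 0) :
    ¬IsUnit (pencil N c (c + w⁻¹)) := by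
  intro h
  apply hw
  rw [spectrum.mem_resolventSet_iff]
  have heq : algebraMap ℂ 𝔄 w - N = w • pencil N c (c + w⁻¹) := by
    rw [pencil, add_sub_cancel_left, smul_sub, smul_smul, mul_inv_cancel₀ hw0, one_smul,
      Algebra.algebraMap_eq_smul_one]
  rw [heq]
  exact h.smul (Units.mk0 w hw0)

lemma norm_resolventSymbol_le (hr : 0 < r) (h : ∀ t, ¬IsUnit (pencil N c t) → r ≤ dist z t)
    (hw : w ∈ spectrum ℂ N) : ‖resolventSymbol c z w‖ ≤ r⁻¹ := by
  rcases eq_or_ne w 0 with rfl | hw0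
  · simpa [resolventSymbol] using hr.le
  · rw [norm_resolventSymbol hw0]
    exact inv_anti₀ hr (h _ (not_isUnit_pencil_of_mem_spectrum hw hw0))

lemma one_sub_mul_ne_zero_of_isUnit_pencil (h : IsUnit (pencil N c z)) (hw : w ∈ spectrum ℂ N) :
    1 - (z - c) * w ≠ 0 := by
  intro h0
  have hw0 : w ≠ 0 := by rintro rfl; simp at h0
  refine not_isUnit_pencil_of_mem_spectrum (c := c) hw hw0 ?_
  rwa [← eq_inv_of_mul_eq_one_left (sub_eq_zero.1 h0).symm, add_sub_cancel]

variable [IsStarNormal N]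

lemma pencil_eq_cfc (N : 𝔄) [IsStarNormal N] (c z : ℂ) :
    pencil N c z = cfc (fun w ↦ 1 - (z - c) * w) N := by
  rw [cfc_sub .., cfc_const_mul .., cfc_const_one ℂ N, cfc_id' ℂ N, pencil]

lemma pencilResolvent_eq_cfc (h : IsUnit (pencil N c z)) :
    pencilResolvent N c z = cfc (resolventSymbol c z) N := by
  have hne (w) (hw : w ∈ spectrum ℂ N) := one_sub_mul_ne_zero_of_isUnit_pencil h hw
  unfold resolventSymbol
  rw [cfc_mul (fun w ↦ w) (fun w ↦ (1 - (z - c) * w)⁻¹) N continuousOn_id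
    (ContinuousOn.inv₀ (by fun_prop) hne), cfc_id' ℂ N, cfc_inv _ N hne, ← pencil_eq_cfc,
    pencilResolvent]

lemma norm_pencilResolvent_le (hr : 0 < r) (h : ∀ t, ¬IsUnit (pencil N c t) → r ≤ dist z t) :
    ‖pencilResolvent N c z‖ ≤ r⁻¹ := by
  have hunit : IsUnit (pencil N c z) := by
    by_contra hz
    exact hr.not_ge (by simpa using h z hz)
  rw [pencilResolvent_eq_cfc hunit]
  exact norm_cfc_le (by positivity) fun w hw ↦ norm_resolventSymbol_le hr h hw

lemma isStarNormal_pencilResolvent (h : IsUnit (pencil N c z)) :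
    IsStarNormal (pencilResolvent N c z) :=
  pencilResolvent_eq_cfc h ▸ cfc_predicate _ N

end NormalResolvent

section SquareFunction

variable {N : H →L[ℂ] H} {C a b : ℝ} {ι : Type*} {F : Finset ι} {ρ : ι → ℝ}

section

variable [IsStarNormal N]

lemma intervalIntegrable_cfc {φ : ℝ → ℂ → ℂ} (hab : a ≤ b)
    (hφ : ContinuousOn (Function.uncurry φ) (Icc a b ×ˢ spectrum ℂ N)) :
    IntervalIntegrable (fun θ ↦ cfc (φ θ) N) MeasureTheory.volume a b := by
  obtain ⟨M, hM⟩ := (isCompact_Icc.prod (spectrum.isCompact N)).exists_bound_of_continuousOn hφ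
  rw [intervalIntegrable_iff_integrableOn_Icc_of_le hab]
  exact integrableOn_cfc measurableSet_Icc φ (fun _ ↦ M) N hφ
    (MeasureTheory.ae_restrict_of_forall_mem measurableSet_Icc fun θ hθ w hw ↦ hM (θ, w) ⟨hθ, hw⟩)
    (MeasureTheory.hasFiniteIntegral_const M)

lemma cfc_intervalIntegral {φ : ℝ → ℂ → ℂ} (hab : a ≤ b)
    (hφ : ContinuousOn (Function.uncurry φ) (Icc a b ×ˢ spectrum ℂ N)) :
    cfc (fun w ↦ ∫ θ in a..b, φ θ w) N = ∫ θ in a..b, cfc (φ θ) N := by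
  obtain ⟨M, hM⟩ := (isCompact_Icc.prod (spectrum.isCompact N)).exists_bound_of_continuousOn hφ
  simp only [intervalIntegral.integral_of_le hab, ← MeasureTheory.integral_Icc_eq_integral_Ioc]
  exact cfc_setIntegral measurableSet_Icc φ (fun _ ↦ M) N hφ
    (MeasureTheory.ae_restrict_of_forall_mem measurableSet_Icc fun θ hθ w hw ↦ hM (θ, w) ⟨hθ, hw⟩)
    (MeasureTheory.hasFiniteIntegral_const M)

end

/-- The real part `X ↦ re ⟪f, X f⟫` of the quadratic form at the vector `f`, as a continuous
`ℝ`-linear functional on bounded operators; it is used to move quadratic forms under integrals. -/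
def reQuadraticForm (f : H) : (H →L[ℂ] H) →L[ℝ] ℝ :=
  Complex.reCLM ∘L (innerSL ℂ f).restrictScalars ℝ ∘L
    (ContinuousLinearMap.apply ℂ H f).restrictScalars ℝ

omit [CompleteSpace H] in
lemma reQuadraticForm_le (f : H) {X : H →L[ℂ] H} (hX : ‖X‖ ≤ C) :
    reQuadraticForm f X ≤ C * ‖f‖ ^ 2 :=
  calc reQuadraticForm f X ≤ ‖f‖ * ‖X f‖ := re_inner_le_norm (𝕜 := ℂ) f (X f)
    _ ≤ ‖f‖ * (C * ‖f‖) := by gcongr; exact X.le_of_opNorm_le hX f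
    _ = C * ‖f‖ ^ 2 := by ring

lemma norm_cfc_apply_sq {g : ℂ → ℂ} (hg : ContinuousOn g (spectrum ℂ N)) (f : H) :
    ‖cfc g N f‖ ^ 2 = reQuadraticForm f (cfc (fun w ↦ (‖g w‖ ^ 2 : ℂ)) N) := by
  have h : star (cfc g N) * cfc g N = cfc (fun w ↦ (‖g w‖ ^ 2 : ℂ)) N := by
    rw [← cfc_star, ← cfc_mul ..]
    simp only [RCLike.star_def, Complex.conj_mul']
  rw [← h, ContinuousLinearMap.star_eq_adjoint]
  exact (cfc g N).apply_norm_sq_eq_inner_adjoint_right f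

lemma sum_mul_norm_cfc_apply_sq {g : ι → ℂ → ℂ}
    (hg : ∀ i ∈ F, ContinuousOn (g i) (spectrum ℂ N)) (f : H) :
    ∑ i ∈ F, ρ i * ‖cfc (g i) N f‖ ^ 2 =
      reQuadraticForm f (cfc (fun w ↦ ∑ i ∈ F, ρ i * (‖g i w‖ ^ 2 : ℂ)) N) := by
  have hcont (i) (hi : i ∈ F) : ContinuousOn (fun w ↦ (‖g i w‖ ^ 2 : ℂ)) (spectrum ℂ N) := by
    have := hg i hi
    fun_prop
  have hsum : (fun w ↦ ∑ i ∈ F, ρ i * (‖g i w‖ ^ 2 : ℂ)) =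
      ∑ i ∈ F, fun w ↦ ρ i * (‖g i w‖ ^ 2 : ℂ) := by
    ext w
    rw [Finset.sum_apply]
  rw [hsum, cfc_sum (fun i w ↦ ρ i * (‖g i w‖ ^ 2 : ℂ)) N F fun i hi ↦
    continuousOn_const.mul (hcont i hi), map_sum]
  refine Finset.sum_congr rfl fun i hi ↦ ?_
  rw [norm_cfc_apply_sq (hg i hi), cfc_const_mul _ _ N (hcont i hi), Complex.coe_smul, map_smul,
    smul_eq_mul]

lemma integral_sum_mul_norm_cfc_apply_sq_le [IsStarNormal N] {g : ι → ℝ → ℂ → ℂ} (hab : a ≤ b)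
    (hg : ∀ i ∈ F, ContinuousOn (Function.uncurry (g i)) (Icc a b ×ˢ spectrum ℂ N)) (hC₀ : 0 ≤ C)
    (hC : ∀ w ∈ spectrum ℂ N, |∫ θ in a..b, ∑ i ∈ F, ρ i * ‖g i θ w‖ ^ 2| ≤ C) (f : H) :
    ∫ θ in a..b, ∑ i ∈ F, ρ i * ‖cfc (g i θ) N f‖ ^ 2 ≤ C * ‖f‖ ^ 2 := by
  set Φ : ℝ → ℂ → ℂ := fun θ w ↦ ∑ i ∈ F, ρ i * (‖g i θ w‖ ^ 2 : ℂ)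
  have hright (i) (hi : i ∈ F) (θ) (hθ : θ ∈ Icc a b) : ContinuousOn (g i θ) (spectrum ℂ N) :=
    (hg i hi).comp (f := fun w ↦ (θ, w)) (by fun_prop) fun w hw ↦ ⟨hθ, hw⟩
  have hΦ : ContinuousOn (Function.uncurry Φ) (Icc a b ×ˢ spectrum ℂ N) :=
    continuousOn_finsetSum F fun i hi ↦ continuousOn_const.mul
      ((Complex.continuous_ofReal.comp_continuousOn (hg i hi).norm).pow 2)
  calc ∫ θ in a..b, ∑ i ∈ F, ρ i * ‖cfc (g i θ) N f‖ ^ 2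
      = ∫ θ in a..b, reQuadraticForm f (cfc (Φ θ) N) :=
        intervalIntegral.integral_congr fun θ hθ ↦
          sum_mul_norm_cfc_apply_sq (fun i hi ↦ hright i hi θ (uIcc_of_le hab ▸ hθ)) f
    _ = reQuadraticForm f (cfc (fun w ↦ ∫ θ in a..b, Φ θ w) N) := by
        rw [(reQuadraticForm f).intervalIntegral_comp_comm (intervalIntegrable_cfc hab hΦ),
          cfc_intervalIntegral hab hΦ]
    _ ≤ C * ‖f‖ ^ 2 := by
        refine reQuadraticForm_le f (norm_cfc_le hC₀ fun w hw ↦ ?_)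
        have hreal : ∫ θ in a..b, Φ θ w =
            ((∫ θ in a..b, ∑ i ∈ F, ρ i * ‖g i θ w‖ ^ 2 : ℝ) : ℂ) := by
          rw [← intervalIntegral.integral_ofReal]
          push_cast
          rfl
        rw [hreal, Complex.norm_real]
        exact hC w hw

/-- The square function `∮ ‖(A - z)⁻¹ f‖² |dz|` of the resolvent along the circle with center `m`
and radius `ρ`, where `S = (A - c)⁻¹`. -/
def resolventEnergy (S : H →L[ℂ] H) (c m : ℂ) (ρ : ℝ) (f : H) : ℝ :=
  ρ * ∫ θ in 0..2 * Real.pi, ‖pencilResolvent S c (circleMap m ρ θ) f‖ ^ 2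

section Circle

variable {c m : ℂ} {r : ℝ}

lemma continuous_pencilResolvent_circleMap (hr : 0 ≤ r)
    (hunit : ∀ z ∈ sphere m r, IsUnit (pencil N c z)) :
    Continuous fun θ ↦ pencilResolvent N c (circleMap m r θ) :=
  (continuousOn_pencilResolvent hunit).comp_continuous (continuous_circleMap m r)
    fun θ ↦ circleMap_mem_sphere m hr θ

lemma continuousOn_resolventSymbol_circleMap (hr : 0 ≤ r)
    (hunit : ∀ z ∈ sphere m r, IsUnit (pencil N c z)) (s : Set ℝ) :
    ContinuousOn (Function.uncurry fun θ ↦ resolventSymbol c (circleMap m r θ))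
      (s ×ˢ spectrum ℂ N) := by
  have := continuous_circleMap m r
  exact continuousOn_snd.mul (ContinuousOn.inv₀ (by fun_prop) fun q hq ↦
    one_sub_mul_ne_zero_of_isUnit_pencil (hunit _ (circleMap_mem_sphere m hr _)) hq.2)

end Circle

lemma sum_resolventEnergy_le [IsStarNormal N] {c : ℂ} {m : ι → ℂ} (hρ : ∀ i ∈ F, 0 ≤ ρ i)
    (hunit : ∀ i ∈ F, ∀ z ∈ sphere (m i) (ρ i), IsUnit (pencil N c z)) (hC₀ : 0 ≤ C)
    (hC : ∀ t, ¬IsUnit (pencil N c t) →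
      ∑ i ∈ F, ρ i * ∫ θ in 0..2 * Real.pi, (dist (circleMap (m i) (ρ i) θ) t ^ 2)⁻¹ ≤ C) (f : H) :
    ∑ i ∈ F, resolventEnergy N c (m i) (ρ i) f ≤ C * ‖f‖ ^ 2 := by
  have hpi : 0 ≤ 2 * Real.pi := by positivity
  set g : ι → ℝ → ℂ → ℂ := fun i θ ↦ resolventSymbol c (circleMap (m i) (ρ i) θ)
  have hg (i) (hi : i ∈ F) := continuousOn_resolventSymbol_circleMap (hρ i hi) (hunit i hi)
  have hR (i) (hi : i ∈ F) := continuous_pencilResolvent_circleMap (hρ i hi) (hunit i hi)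
  have hspec (w) (hw : w ∈ spectrum ℂ N) :
      |∫ θ in 0..2 * Real.pi, ∑ i ∈ F, ρ i * ‖g i θ w‖ ^ 2| ≤ C := by
    rcases eq_or_ne w 0 with rfl | hw0
    · simpa [g, resolventSymbol] using hC₀
    rw [abs_of_nonneg (intervalIntegral.integral_nonneg hpi fun θ _ ↦
      Finset.sum_nonneg fun i hi ↦ mul_nonneg (hρ i hi) (sq_nonneg _)),
      intervalIntegral.integral_finsetSum fun i hi ↦ ?_]
    · simpa only [g, norm_resolventSymbol hw0, inv_pow, intervalIntegral.integral_const_mul] using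
        hC _ (not_isUnit_pencil_of_mem_spectrum hw hw0)
    · have hgw : ContinuousOn (fun θ ↦ g i θ w) (uIcc 0 (2 * Real.pi)) :=
        (hg i hi _).comp (f := fun θ ↦ (θ, w)) (by fun_prop) fun θ hθ ↦ ⟨hθ, hw⟩
      exact ContinuousOn.intervalIntegrable (by fun_prop)
  simp only [resolventEnergy, ← intervalIntegral.integral_const_mul]
  rw [← intervalIntegral.integral_finsetSum fun i hi ↦
    Continuous.intervalIntegrable (by have := hR i hi; fun_prop) _ _]
  calc ∫ θ in 0..2 * Real.pi,
        ∑ i ∈ F, ρ i * ‖pencilResolvent N c (circleMap (m i) (ρ i) θ) f‖ ^ 2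
      = ∫ θ in 0..2 * Real.pi, ∑ i ∈ F, ρ i * ‖cfc (g i θ) N f‖ ^ 2 := by
        congr with θ
        refine Finset.sum_congr rfl fun i hi ↦ ?_
        rw [pencilResolvent_eq_cfc (hunit i hi _ (circleMap_mem_sphere (m i) (hρ i hi) θ))]
    _ ≤ C * ‖f‖ ^ 2 :=
        integral_sum_mul_norm_cfc_apply_sq_le hpi (fun i hi ↦ hg i hi _) hC₀ hspec f

end SquareFunction

section PoissonIntegral

variable {m t : ℂ} {r : ℝ}

lemma integral_inv_dist_circleMap_sq_of_mem_ball (ht : t ∈ ball m r) :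
    ∫ θ in 0..2 * Real.pi, (dist (circleMap m r θ) t ^ 2)⁻¹ =
      2 * Real.pi / (r ^ 2 - dist t m ^ 2) := by
  have hpos : 0 < r ^ 2 - dist t m ^ 2 := sub_pos.2 (by gcongr; exact ht)
  have hr : 0 < r := dist_nonneg.trans_lt ht
  have hpoisson := DiffContOnCl.circleAverage_poissonKernel_smul' (f := fun _ ↦ (1 : ℂ))
    diffContOnCl_const ht
  have hkernel (θ : ℝ) : ((‖circleMap m r θ - m‖ ^ 2 - ‖t - m‖ ^ 2) /
      ‖circleMap m r θ - m - (t - m)‖ ^ 2) • (1 : ℂ) =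
      ((r ^ 2 - dist t m ^ 2) * (dist (circleMap m r θ) t ^ 2)⁻¹ : ℝ) := by
    rw [sub_sub_sub_cancel_right, ← dist_eq_norm, ← dist_eq_norm, ← dist_eq_norm,
      circleMap_mem_sphere m hr.le θ, Complex.real_smul, mul_one, div_eq_mul_inv]
  simp_rw [Real.circleAverage_def, hkernel] at hpoisson
  rw [intervalIntegral.integral_ofReal, intervalIntegral.integral_const_mul, Complex.real_smul]
    at hpoisson
  norm_cast at hpoisson
  rw [eq_div_iff hpos.ne', mul_comm]
  exact ((inv_mul_eq_one₀ Real.two_pi_pos.ne').1 hpoisson).symm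

/- Inversion in the circle maps `t` to a point of the ball and multiplies the distances to the
points of the circle by a constant factor. -/
lemma integral_inv_dist_circleMap_sq_of_notMem_closedBall (hr : 0 < r) (ht : t ∉ closedBall m r) :
    ∫ θ in 0..2 * Real.pi, (dist (circleMap m r θ) t ^ 2)⁻¹ =
      2 * Real.pi / (dist t m ^ 2 - r ^ 2) := by
  rw [mem_closedBall, not_le] at ht
  have htm : 0 < dist t m := hr.trans ht
  set t' := EuclideanGeometry.inversion m r t
  have hdist : dist t' m = r ^ 2 / dist t m := EuclideanGeometry.dist_inversion_center m t r
  have ht' : t' ∈ ball m r := by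
    rw [mem_ball, hdist, div_lt_iff₀ htm, sq]
    gcongr
  have hcircle (θ : ℝ) :
      (dist (circleMap m r θ) t ^ 2)⁻¹ =
        (r / dist t m) ^ 2 * (dist (circleMap m r θ) t' ^ 2)⁻¹ := by
    have hθ := circleMap_mem_sphere m hr.le θ
    have h := EuclideanGeometry.dist_inversion_mul_dist_center_eq (R := r)
      (dist_pos.1 htm) (ne_of_mem_sphere hθ hr.ne')
    rw [EuclideanGeometry.inversion_of_mem_sphere hθ, mem_sphere.1 hθ, dist_comm, dist_comm t] at h
    have hmul : r / dist t m * (dist (circleMap m r θ) t')⁻¹ = (dist (circleMap m r θ) t)⁻¹ := by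
      rw [dist_comm t m, dist_comm (circleMap m r θ) t, ← div_eq_mul_inv, div_div,
        mul_comm (dist m t), h, mul_comm, div_mul_cancel_left₀ hr.ne']
    rw [← inv_pow, ← inv_pow, ← mul_pow, hmul]
  simp only [hcircle, intervalIntegral.integral_const_mul,
    integral_inv_dist_circleMap_sq_of_mem_ball ht', hdist]
  have : dist t m ^ 2 - r ^ 2 ≠ 0 := sub_ne_zero.2 (by gcongr : r ^ 2 < dist t m ^ 2).ne'
  field_simp

lemma integral_inv_dist_circleMap_sq (hr : 0 < r) (ht : t ∉ sphere m r) :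
    ∫ θ in 0..2 * Real.pi, (dist (circleMap m r θ) t ^ 2)⁻¹ =
      2 * Real.pi / |r ^ 2 - dist t m ^ 2| := by
  rcases lt_or_gt_of_ne ht with h | h
  · rw [integral_inv_dist_circleMap_sq_of_mem_ball h, abs_of_pos (sub_pos.2 (by gcongr))]
  · rw [integral_inv_dist_circleMap_sq_of_notMem_closedBall hr (not_le.2 h),
      abs_of_neg (sub_neg.2 (by gcongr)), neg_sub]

lemma mul_integral_inv_dist_circleMap_sq {x y t : ℝ} (hxy : x < y) (htx : t ≠ x) (hty : t ≠ y) :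
    (y - x) / 2 * ∫ θ in 0..2 * Real.pi,
      (dist (circleMap ((x + y) / 2 : ℝ) ((y - x) / 2) θ) t ^ 2)⁻¹ =
    Real.pi * ((y - x) / (|t - x| * |y - t|)) := by
  have hprod : ((y - x) / 2) ^ 2 - dist (t : ℂ) ((x + y) / 2 : ℝ) ^ 2 = (t - x) * (y - t) := by
    rw [Complex.dist_of_im_eq (by simp), Complex.ofReal_re, Complex.ofReal_re, Real.dist_eq, sq_abs]
    ring
  have hprod_ne : (t - x) * (y - t) ≠ 0 := mul_ne_zero (sub_ne_zero.2 htx) (sub_ne_zero.2 hty.symm)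
  have hsphere : (t : ℂ) ∉ sphere (((x + y) / 2 : ℝ) : ℂ) ((y - x) / 2) := fun h ↦ by
    rw [mem_sphere.1 h, sub_self] at hprod
    exact hprod_ne hprod.symm
  rw [integral_inv_dist_circleMap_sq (by linarith) hsphere, hprod, abs_mul]
  ring

end PoissonIntegral

section Potential

variable {r t x y : ℝ}

/-- A function of `s`, increasing on `|s - t| ≥ r` with values in `[0, 4 / r]` there, whose
increment over `[x, y]` dominates the integral `π⁻¹ ∮ |dz| / |z - t| ^ 2` over the circle with
diameter `[x, y]`. The sum of these integrals over disjoint circles is therefore bounded by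
telescoping. -/
def circlePotential (r t s : ℝ) : ℝ := if s < t then 1 / (t - s) else 4 / r - 1 / (s - t)

lemma circlePotential_mem_Icc (hr : 0 < r) (hx : r ≤ |x - t|) :
    circlePotential r t x ∈ Icc 0 (4 / r) := by
  have hinv : 1 / |x - t| ≤ 1 / r := one_div_le_one_div_of_le hr hx
  have hpos : 0 ≤ 1 / |x - t| := by positivity
  have hr' : 0 ≤ 1 / r := by positivity
  have h4 : 4 / r = 4 * (1 / r) := by ring
  rw [circlePotential, mem_Icc, h4]
  split_ifs with hxt
  · rw [abs_of_neg (by linarith), neg_sub] at hinv hpos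
    exact ⟨hpos, by linarith⟩
  · rw [abs_of_nonneg (by linarith)] at hinv hpos
    exact ⟨by linarith, by linarith⟩

lemma div_abs_mul_abs_le_circlePotential_sub (hr : 0 < r) (hxy : x ≤ y) (hx : r ≤ |x - t|)
    (hy : r ≤ |y - t|) :
    (y - x) / (|t - x| * |y - t|) ≤ circlePotential r t y - circlePotential r t x := by
  have hx0 : x - t ≠ 0 := abs_pos.1 (hr.trans_le hx)
  have hy0 : y - t ≠ 0 := abs_pos.1 (hr.trans_le hy)
  have hx0' : t - x ≠ 0 := by rwa [← neg_sub, neg_ne_zero] at hx0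
  have hy0' : t - y ≠ 0 := by rwa [← neg_sub, neg_ne_zero] at hy0
  unfold circlePotential
  rcases lt_or_ge y t with hyt | hty
  · rw [if_pos hyt, if_pos (hxy.trans_lt hyt), abs_of_pos (by linarith), abs_of_neg (by linarith)]
    apply le_of_eq; field_simp; ring
  rcases lt_or_ge x t with hxt | htx
  · rw [if_neg hty.not_gt, if_pos hxt]
    rw [abs_of_neg (by linarith), neg_sub] at hx
    rw [abs_of_nonneg (by linarith)] at hy
    have hxr : 1 / (t - x) ≤ 1 / r := one_div_le_one_div_of_le hr hx
    have hyr : 1 / (y - t) ≤ 1 / r := one_div_le_one_div_of_le hr hy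
    calc (y - x) / (|t - x| * |y - t|) = 1 / (t - x) + 1 / (y - t) := by
          rw [abs_of_pos (by linarith), abs_of_pos (by linarith)]; field_simp; ring
      _ ≤ 4 * (1 / r) - 1 / (y - t) - 1 / (t - x) := by linarith
      _ = 4 / r - 1 / (y - t) - 1 / (t - x) := by ring
  · rw [if_neg hty.not_gt, if_neg htx.not_gt, abs_of_neg, abs_of_nonneg]
    · apply le_of_eq; field_simp; ring
    all_goals grind

lemma circlePotential_le_circlePotential (hr : 0 < r) (hxy : x ≤ y) (hx : r ≤ |x - t|)
    (hy : r ≤ |y - t|) : circlePotential r t x ≤ circlePotential r t y :=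
  sub_nonneg.1 ((div_nonneg (sub_nonneg.2 hxy) (by positivity)).trans
    (div_abs_mul_abs_le_circlePotential_sub hr hxy hx hy))

lemma sum_sub_le_of_forall_lt {ι : Type*} [LinearOrder ι] {F : Finset ι} {u v : ι → ℝ} {M : ℝ}
    (hu : ∀ i ∈ F, 0 ≤ u i) (hvu : ∀ i ∈ F, ∀ j ∈ F, i < j → v i ≤ u j) (hM : 0 ≤ M)
    (hv : ∀ i ∈ F, v i ≤ M) : ∑ i ∈ F, (v i - u i) ≤ M := by
  induction F using Finset.induction_on_max generalizing M with
  | empty => simpa using hM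
  | insert a F ha ih =>
    have haF : a ∉ F := fun h ↦ (ha a h).false
    rw [Finset.sum_insert haF]
    have hmem : a ∈ insert a F := Finset.mem_insert_self a F
    have hF (i) (hi : i ∈ F) : i ∈ insert a F := Finset.mem_insert_of_mem hi
    have := ih (fun i hi ↦ hu i (hF i hi)) (fun i hi j hj ↦ hvu i (hF i hi) j (hF j hj)) (hu a hmem)
      fun i hi ↦ hvu i (hF i hi) a hmem (ha i hi)
    linarith [hv a hmem]

lemma sum_mul_integral_inv_dist_circleMap_sq_le {ι : Type*} [LinearOrder ι] {F : Finset ι}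
    {x y : ι → ℝ} (hr : 0 < r) (hxy : ∀ i ∈ F, x i < y i)
    (hyx : ∀ i ∈ F, ∀ j ∈ F, i < j → y i ≤ x j) (hx : ∀ i ∈ F, r ≤ |x i - t|)
    (hy : ∀ i ∈ F, r ≤ |y i - t|) :
    ∑ i ∈ F, (y i - x i) / 2 * ∫ θ in 0..2 * Real.pi,
      (dist (circleMap ((x i + y i) / 2 : ℝ) ((y i - x i) / 2) θ) t ^ 2)⁻¹ ≤
    4 * Real.pi / r := by
  have hne {s : ℝ} (hs : r ≤ |s - t|) : t ≠ s := (sub_ne_zero.1 (abs_pos.1 (hr.trans_le hs))).symm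
  calc ∑ i ∈ F, (y i - x i) / 2 * ∫ θ in 0..2 * Real.pi,
        (dist (circleMap ((x i + y i) / 2 : ℝ) ((y i - x i) / 2) θ) t ^ 2)⁻¹
      ≤ ∑ i ∈ F, Real.pi * (circlePotential r t (y i) - circlePotential r t (x i)) := by
        refine Finset.sum_le_sum fun i hi ↦ ?_
        rw [mul_integral_inv_dist_circleMap_sq (hxy i hi) (hne (hx i hi)) (hne (hy i hi))]
        gcongr
        exact div_abs_mul_abs_le_circlePotential_sub hr (hxy i hi).le (hx i hi) (hy i hi)
    _ ≤ Real.pi * (4 / r) := by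
        rw [← Finset.mul_sum]
        gcongr
        exact sum_sub_le_of_forall_lt (fun i hi ↦ (circlePotential_mem_Icc hr (hx i hi)).1)
          (fun i hi j hj hij ↦ circlePotential_le_circlePotential hr (hyx i hi j hj hij)
            (hy i hi) (hx j hj))
          (by positivity) fun i hi ↦ (circlePotential_mem_Icc hr (hy i hi)).2
    _ = 4 * Real.pi / r := by ring

end Potential

section Bands

/-- The left endpoints `a k` and right endpoints `b k` of a sequence of real intervals, ordered
from left to right and separated by gaps of length at least `d > 0`.  In the notation of the
theorem, `a k = α (2 * k - 1)` and `b k = α (2 * k)`. -/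
structure SeparatedBands (a b : ℤ → ℝ) (d : ℝ) : Prop where
  pos : 0 < d
  left_le_right : ∀ k, a k ≤ b k
  right_add_le : ∀ k, b k + d ≤ a (k + 1)

/-- The `k`-th interval `Δ_k = [a k, b k]`, as a subset of the complex plane. -/
def band (a b : ℤ → ℝ) (k : ℤ) : Set ℂ := Complex.ofReal '' Icc (a k) (b k)

/-- The open `ε`-neighbourhood `U_ε(Δ_k)` of the `k`-th interval in the complex plane. -/
def bandNhd (a b : ℤ → ℝ) (ε : ℝ) (k : ℤ) : Set ℂ := thickening ε (band a b k)

/-- The centre of the circle through the points `a p - d / 2` and `b n + d / 2` of the real axis,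
which is used as a contour around the group of intervals with indices `p, …, n`. -/
def groupCenter (a b : ℤ → ℝ) (d : ℝ) (p n : ℤ) : ℂ :=
  (((a p - d / 2) + (b n + d / 2)) / 2 : ℝ)

/-- The radius of the circle through the points `a p - d / 2` and `b n + d / 2`. -/
def groupRadius (a b : ℤ → ℝ) (d : ℝ) (p n : ℤ) : ℝ := ((b n + d / 2) - (a p - d / 2)) / 2

variable {a b : ℤ → ℝ} {d ε t : ℝ} {k p n : ℤ} {z : ℂ}

lemma mem_bandNhd : z ∈ bandNhd a b ε k ↔ ∃ t ∈ Icc (a k) (b k), dist z (t : ℂ) < ε := by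
  simp [bandNhd, band, mem_thickening_iff]

lemma band_subset_bandNhd (hε : 0 < ε) (k : ℤ) : band a b k ⊆ bandNhd a b ε k :=
  self_subset_thickening hε _

lemma thickening_subset_iUnion_bandNhd {σ : Set ℂ} (hσ : σ ⊆ ⋃ k, band a b k) :
    thickening ε σ ⊆ ⋃ k, bandNhd a b ε k :=
  (thickening_subset_of_subset ε hσ).trans_eq (thickening_iUnion ε _)

lemma mem_ball_groupCenter_ofReal (hp : a p - d / 2 < t) (hn : t < b n + d / 2) :
    (t : ℂ) ∈ ball (groupCenter a b d p n) (groupRadius a b d p n) := by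
  rw [mem_ball, groupCenter, Complex.isometry_ofReal.dist_eq, Real.dist_eq, abs_lt, groupRadius]
  constructor <;> linarith

namespace SeparatedBands

lemma right_add_le_left (hab : SeparatedBands a b d) {k l : ℤ} (hkl : k < l) :
    b k + d ≤ a l := by
  induction l, Int.add_one_le_of_lt hkl using Int.leInduction with
  | base => exact hab.right_add_le k
  | succ l hl ih =>
    linarith [ih (Int.lt_of_add_one_le hl), hab.left_le_right l, hab.right_add_le l, hab.pos]

lemma left_mono (hab : SeparatedBands a b d) : Monotone a := fun k l hkl ↦ by
  rcases hkl.eq_or_lt with rfl | hlt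
  · rfl
  · linarith [hab.right_add_le_left hlt, hab.left_le_right k, hab.pos]

lemma right_mono (hab : SeparatedBands a b d) : Monotone b := fun k l hkl ↦ by
  rcases hkl.eq_or_lt with rfl | hlt
  · rfl
  · linarith [hab.right_add_le_left hlt, hab.left_le_right l, hab.pos]

lemma half_le_groupRadius (hab : SeparatedBands a b d) (hpn : p ≤ n) :
    d / 2 ≤ groupRadius a b d p n := by
  unfold groupRadius
  linarith [hab.left_le_right p, hab.right_mono hpn]

lemma groupRadius_pos (hab : SeparatedBands a b d) (hpn : p ≤ n) : 0 < groupRadius a b d p n :=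
  (half_pos hab.pos).trans_le (hab.half_le_groupRadius hpn)

lemma half_le_abs_left_sub (hab : SeparatedBands a b d) (p : ℤ) (ht : t ∈ Icc (a k) (b k)) :
    d / 2 ≤ |a p - d / 2 - t| := by
  rcases lt_or_ge k p with hkp | hpk
  · exact le_abs.2 (.inl (by linarith [hab.right_add_le_left hkp, ht.2]))
  · exact le_abs.2 (.inr (by linarith [hab.left_mono hpk, ht.1]))

lemma half_le_abs_right_sub (hab : SeparatedBands a b d) (n : ℤ) (ht : t ∈ Icc (a k) (b k)) :
    d / 2 ≤ |b n + d / 2 - t| := by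
  rcases lt_or_ge n k with hnk | hkn
  · exact le_abs.2 (.inr (by linarith [hab.right_add_le_left hnk, ht.1]))
  · exact le_abs.2 (.inl (by linarith [hab.right_mono hkn, ht.2]))

lemma dist_groupCenter_le (hab : SeparatedBands a b d) (hk : k ∈ Icc p n)
    (ht : t ∈ Icc (a k) (b k)) :
    dist (t : ℂ) (groupCenter a b d p n) ≤ groupRadius a b d p n - d / 2 := by
  rw [groupCenter, Complex.isometry_ofReal.dist_eq, Real.dist_eq, abs_le, groupRadius]
  constructor <;> linarith [hab.left_mono hk.1, hab.right_mono hk.2, ht.1, ht.2]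

lemma le_dist_groupCenter (hab : SeparatedBands a b d) (hk : k ∉ Icc p n)
    (ht : t ∈ Icc (a k) (b k)) :
    groupRadius a b d p n + d / 2 ≤ dist (t : ℂ) (groupCenter a b d p n) := by
  rw [groupCenter, Complex.isometry_ofReal.dist_eq, Real.dist_eq, le_abs, groupRadius]
  rcases not_and_or.1 hk with hkp | hnk
  · exact .inr (by linarith [hab.right_add_le_left (not_le.1 hkp), ht.2])
  · exact .inl (by linarith [hab.right_add_le_left (not_le.1 hnk), ht.1])

lemma bandNhd_subset_ball (hab : SeparatedBands a b d) (hk : k ∈ Icc p n) :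
    bandNhd a b ε k ⊆ ball (groupCenter a b d p n) (groupRadius a b d p n - (d / 2 - ε)) := by
  intro z hz
  obtain ⟨t, ht, hzt⟩ := mem_bandNhd.1 hz
  rw [mem_ball]
  linarith [dist_triangle z t (groupCenter a b d p n), hab.dist_groupCenter_le hk ht]

lemma disjoint_bandNhd_closedBall (hab : SeparatedBands a b d) (hε : ε ≤ d / 2)
    (hk : k ∉ Icc p n) :
    Disjoint (bandNhd a b ε k) (closedBall (groupCenter a b d p n) (groupRadius a b d p n)) := by
  refine Set.disjoint_left.2 fun z hz hzm ↦ ?_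
  obtain ⟨t, ht, hzt⟩ := mem_bandNhd.1 hz
  rw [mem_closedBall] at hzm
  linarith [dist_triangle_left (t : ℂ) (groupCenter a b d p n) z, hab.le_dist_groupCenter hk ht]

lemma notMem_iUnion_bandNhd_of_mem_closedBall (hab : SeparatedBands a b d) (hε : ε ≤ d / 2)
    (hz : z ∈ closedBall (groupCenter a b d p n) (groupRadius a b d p n))
    (hz' : z ∉ ⋃ k ∈ Finset.Icc p n, bandNhd a b ε k) : z ∉ ⋃ k, bandNhd a b ε k := by
  simp only [mem_iUnion, not_exists, Finset.mem_Icc] at hz' ⊢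
  intro k hk
  by_cases hkpn : k ∈ Icc p n
  · exact hz' k hkpn hk
  · exact Set.disjoint_left.1 (hab.disjoint_bandNhd_closedBall hε hkpn) hk hz

lemma notMem_iUnion_bandNhd_of_mem_sphere (hab : SeparatedBands a b d) (hε : ε ≤ d / 2)
    (hz : z ∈ sphere (groupCenter a b d p n) (groupRadius a b d p n)) :
    z ∉ ⋃ k, bandNhd a b ε k := by
  refine hab.notMem_iUnion_bandNhd_of_mem_closedBall hε (sphere_subset_closedBall hz) ?_
  simp only [mem_iUnion, not_exists, Finset.mem_Icc]
  intro k hk hzk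
  have := hab.bandNhd_subset_ball hk hzk
  rw [mem_ball, mem_sphere.1 hz] at this
  linarith

lemma disjoint_bandNhd (hab : SeparatedBands a b d) (hε : ε ≤ d / 2) {k l : ℤ} (hkl : k ≠ l) :
    Disjoint (bandNhd a b ε k) (bandNhd a b ε l) := by
  refine (hab.disjoint_bandNhd_closedBall hε (p := l) (n := l) (by simpa using hkl)).mono_right ?_
  exact (hab.bandNhd_subset_ball (by simp)).trans
    ((ball_subset_ball (by linarith)).trans ball_subset_closedBall)

lemma notMem_iUnion_bandNhd_of_mem_gap (hab : SeparatedBands a b d) (hl : b k + ε ≤ t)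
    (hr : t ≤ a (k + 1) - ε) : (t : ℂ) ∉ ⋃ k, bandNhd a b ε k := by
  simp only [mem_iUnion, not_exists]
  intro j hj
  obtain ⟨s, hs, hts⟩ := mem_bandNhd.1 hj
  rw [Complex.isometry_ofReal.dist_eq, Real.dist_eq, abs_lt] at hts
  rcases le_or_gt j k with hjk | hkj
  · linarith [hab.right_mono hjk, hs.2]
  · linarith [hab.left_mono (Int.add_one_le_of_lt hkj), hs.1]

lemma add_mul_le_left (hab : SeparatedBands a b d) (N : ℕ) : a 0 + N * d ≤ a N := by
  induction N with
  | zero => simp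
  | succ N ih =>
    push_cast
    linarith [hab.left_le_right N, hab.right_add_le N]

lemma right_le_sub_mul (hab : SeparatedBands a b d) (N : ℕ) : b (-N) ≤ b 0 - N * d := by
  induction N with
  | zero => simp
  | succ N ih =>
    have hgap := hab.right_add_le (-(N + 1 : ℤ))
    rw [show -(N + 1 : ℤ) + 1 = -N by ring] at hgap
    push_cast
    linarith [hab.left_le_right (-N)]

lemma tendsto_right_atTop (hab : SeparatedBands a b d) :
    Tendsto (fun N : ℕ ↦ b N) atTop atTop :=
  tendsto_atTop_mono (fun N ↦ (hab.add_mul_le_left N).trans (hab.left_le_right N))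
    (tendsto_atTop_add_const_left _ _ (tendsto_natCast_atTop_atTop.atTop_mul_const hab.pos))

lemma tendsto_left_atBot (hab : SeparatedBands a b d) :
    Tendsto (fun N : ℕ ↦ a (-N)) atTop atBot := by
  refine tendsto_atBot_mono (fun N ↦ (hab.left_le_right (-N)).trans (hab.right_le_sub_mul N)) ?_
  simp only [sub_eq_add_neg]
  exact tendsto_atBot_add_const_left _ _
    (tendsto_neg_atTop_atBot.comp (tendsto_natCast_atTop_atTop.atTop_mul_const hab.pos))

end SeparatedBands

variable {𝔄 : Type*} [NormedRing 𝔄] [NormedAlgebra ℂ 𝔄] [CompleteSpace 𝔄] {S : 𝔄} {c : ℂ}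

/-- The Riesz integral of the resolvent with value `S` at `c` over the circle around the group of
intervals with indices `p, …, n`. -/
def groupProj (a b : ℤ → ℝ) (d : ℝ) (S : 𝔄) (c : ℂ) (p n : ℤ) : 𝔄 :=
  rieszProj S c (groupCenter a b d p n) (groupRadius a b d p n)

/-- The Riesz projection `Q_k` of the `k`-th interval. -/
def bandProj (a b : ℤ → ℝ) (d : ℝ) (S : 𝔄) (c : ℂ) (k : ℤ) : 𝔄 := groupProj a b d S c k k

namespace SeparatedBands

variable (hab : SeparatedBands a b d) (hε : 0 < ε) (hεd : ε < d / 2)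
  (hunit : ∀ z ∉ ⋃ k, bandNhd a b ε k, IsUnit (pencil S c z))
include hab hε hεd hunit

omit [CompleteSpace 𝔄] hε in
lemma isUnit_pencil_of_mem_sphere :
    ∀ z ∈ sphere (groupCenter a b d p n) (groupRadius a b d p n), IsUnit (pencil S c z) :=
  fun z hz ↦ hunit z (hab.notMem_iUnion_bandNhd_of_mem_sphere hεd.le hz)

omit hε in
lemma commute_groupProj (hpn : p ≤ n) {X : 𝔄} (hX : Commute X S) :
    Commute X (groupProj a b d S c p n) :=
  commute_rieszProj hX (hab.groupRadius_pos hpn) (hab.isUnit_pencil_of_mem_sphere hεd hunit)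

omit hε in
lemma isBoundedOn_groupProj (hpn : p ≤ n) : IsBoundedOn S (groupProj a b d S c p n) :=
  isBoundedOn_rieszProj (hab.groupRadius_pos hpn) (hab.isUnit_pencil_of_mem_sphere hεd hunit)

lemma isSpectralProj_groupProj (hpn : p ≤ n) :
    IsSpectralProj S c (⋃ k ∈ Finset.Icc p n, bandNhd a b ε k) (groupProj a b d S c p n) := by
  refine isSpectralProj_rieszProj (ρ' := groupRadius a b d p n - (d / 2 - ε))
    (by linarith [hab.half_le_groupRadius hpn]) (by linarith) ?_ fun z hz ↦
    hunit z (hab.notMem_iUnion_bandNhd_of_mem_closedBall hεd.le hz.1 hz.2)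
  exact iUnion₂_subset fun k hk ↦ hab.bandNhd_subset_ball (Finset.mem_Icc.1 hk)

lemma isSpectralProj_bandProj (k : ℤ) :
    IsSpectralProj S c (bandNhd a b ε k) (bandProj a b d S c k) := by
  simpa only [bandProj, Finset.Icc_self, Finset.mem_singleton, iUnion_iUnion_eq_left] using
    hab.isSpectralProj_groupProj hε hεd hunit (le_refl k)

lemma bandProj_mul_bandProj (j k : ℤ) :
    bandProj a b d S c j * bandProj a b d S c k = if j = k then bandProj a b d S c j else 0 := by
  split_ifs with hjk
  · rw [← hjk, (hab.isSpectralProj_bandProj hε hεd hunit j).isIdempotentElem.eq]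
  · have hk := hab.isSpectralProj_bandProj hε hεd hunit k
    exact (hab.isSpectralProj_bandProj hε hεd hunit j).mul_eq_zero
      (hab.isBoundedOn_groupProj hεd hunit le_rfl) hk
      (hab.commute_groupProj hεd hunit le_rfl
        (hab.commute_groupProj hεd hunit le_rfl (Commute.refl S)).symm).symm
      (hab.disjoint_bandNhd hεd.le hjk)

lemma sum_bandProj (hpn : p ≤ n) :
    ∑ k ∈ Finset.Icc p n, bandProj a b d S c k = groupProj a b d S c p n := by
  have hsum : IsSpectralProj S c (⋃ k ∈ Finset.Icc p n, bandNhd a b ε k)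
      (∑ k ∈ Finset.Icc p n, bandProj a b d S c k) :=
    .sum _ (fun k _ ↦ hab.isSpectralProj_bandProj hε hεd hunit k)
      fun j _ k _ hjk ↦ by rw [hab.bandProj_mul_bandProj hε hεd hunit, if_neg hjk]
  exact hsum.eq_of_isBoundedOn
    (.sum _ fun k _ ↦ hab.isBoundedOn_groupProj hεd hunit le_rfl)
    (hab.isSpectralProj_groupProj hε hεd hunit hpn) (hab.isBoundedOn_groupProj hεd hunit hpn)
    (hab.commute_groupProj hεd hunit hpn hsum.commute)

end SeparatedBands

end Bands

section Perturbation

variable {S S' B X : H →L[ℂ] H} {c m w : ℂ} {C δ ε κ ρ : ℝ}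

lemma norm_cauchyIntegral_le {E : Type*} [NormedAddCommGroup E] [NormedSpace ℂ E] {f : ℂ → E}
    {G : ℝ → ℝ} (hρ : 0 ≤ ρ) (hf : ∀ θ, ‖f (circleMap m ρ θ)‖ ≤ G θ) (hG : Continuous G) :
    ‖-((2 * Real.pi * Complex.I : ℂ)⁻¹ • ∮ z in C(m, ρ), f z)‖ ≤
      (2 * Real.pi)⁻¹ * (ρ * ∫ θ in 0..2 * Real.pi, G θ) := by
  have hconst : ‖(2 * Real.pi * Complex.I : ℂ)⁻¹‖ = (2 * Real.pi)⁻¹ := by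
    simp [abs_of_pos Real.pi_pos]
  rw [norm_neg, norm_smul, hconst, circleIntegral, ← intervalIntegral.integral_const_mul]
  refine mul_le_mul_of_nonneg_left ?_ (by positivity)
  refine intervalIntegral.norm_integral_le_of_norm_le Real.two_pi_pos.le (.of_forall fun θ _ ↦ ?_)
    ((hG.const_mul ρ).intervalIntegrable _ _)
  have hderiv : ‖deriv (circleMap m ρ) θ‖ = ρ := by simp [abs_of_nonneg hρ]
  rw [norm_smul, hderiv]
  exact mul_le_mul_of_nonneg_left (hf θ) hρ

omit [CompleteSpace H] in
lemma opNorm_le_of_forall_norm_inner_le (hC : 0 ≤ C)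
    (hX : ∀ f g, ‖inner ℂ g (X f)‖ ≤ C * (‖f‖ ^ 2 + ‖g‖ ^ 2)) : ‖X‖ ≤ 2 * C := by
  refine X.opNorm_le_of_unit_norm (by positivity) fun f hf ↦ ?_
  rw [← innerSL_apply_norm ℂ (X f)]
  refine (innerSL ℂ (X f)).opNorm_le_of_unit_norm (by positivity) fun g hg ↦ ?_
  calc ‖inner ℂ (X f) g‖ = ‖inner ℂ g (X f)‖ := norm_inner_symm _ _
    _ ≤ C * (‖f‖ ^ 2 + ‖g‖ ^ 2) := hX f g
    _ = 2 * C := by rw [hf, hg]; ring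

lemma norm_le_one_of_isIdempotentElem (hX : IsIdempotentElem X) [IsStarNormal X] : ‖X‖ ≤ 1 :=
  IsStarProjection.norm_le _ ⟨hX,
    (ContinuousLinearMap.IsIdempotentElem.isSelfAdjoint_iff_isStarNormal hX).2 ‹_›⟩

omit [CompleteSpace H] in
lemma norm_apply_le_of_sub_eq {R R' : H →L[ℂ] H} (hε : 0 < ε) (hB : ‖B‖ < ε) (hR : ‖R‖ ≤ ε⁻¹)
    (h : R' - R = -(R * B * R')) (f : H) : ‖R' f‖ ≤ (1 - ‖B‖ / ε)⁻¹ * ‖R f‖ := by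
  have hκ : 0 < 1 - ‖B‖ / ε := sub_pos.2 ((div_lt_one hε).2 hB)
  have hf : R' f = R f - R (B (R' f)) := by
    rw [sub_eq_add_neg, add_comm, ← sub_eq_iff_eq_add]
    exact congr($h f)
  have hle : ‖R' f‖ ≤ ‖R f‖ + ‖B‖ / ε * ‖R' f‖ :=
    calc ‖R' f‖ = ‖R f - R (B (R' f))‖ := congrArg norm hf
      _ ≤ ‖R f‖ + ‖R (B (R' f))‖ := norm_sub_le _ _
      _ ≤ ‖R f‖ + ε⁻¹ * (‖B‖ * ‖R' f‖) := by
        gcongr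
        exact (R.le_of_opNorm_le hR _).trans (by gcongr; exact B.le_opNorm _)
      _ = ‖R f‖ + ‖B‖ / ε * ‖R' f‖ := by ring
  rw [← div_eq_inv_mul, le_div_iff₀ hκ]
  linarith

lemma norm_inner_resolvent_sub_le {R R' : H →L[ℂ] H} (hκ : 0 ≤ κ) (h : R' - R = -(R' * B * R))
    (hR' : ∀ f, ‖star R' f‖ ≤ κ * ‖R f‖) (f g : H) :
    ‖inner ℂ g ((R' - R) f)‖ ≤ ‖B‖ * κ / 2 * (‖R f‖ ^ 2 + ‖R g‖ ^ 2) := by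
  have hinner : inner ℂ g ((R' - R) f) = -inner ℂ (star R' g) (B (R f)) := by
    rw [h, ContinuousLinearMap.star_eq_adjoint, ContinuousLinearMap.adjoint_inner_left,
      ← inner_neg_right]
    rfl
  calc ‖inner ℂ g ((R' - R) f)‖ = ‖inner ℂ (star R' g) (B (R f))‖ := by rw [hinner, norm_neg]
    _ ≤ ‖star R' g‖ * ‖B (R f)‖ := norm_inner_le_norm _ _
    _ ≤ (κ * ‖R g‖) * (‖B‖ * ‖R f‖) := by gcongr; exacts [hR' g, B.le_opNorm _]
    _ = ‖B‖ * κ / 2 * (2 * ‖R f‖ * ‖R g‖) := by ring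
    _ ≤ ‖B‖ * κ / 2 * (‖R f‖ ^ 2 + ‖R g‖ ^ 2) := by
      gcongr
      exact two_mul_le_add_sq _ _

lemma norm_inner_rieszProj_sub_le (hρ : 0 < ρ) (hκ : 0 ≤ κ)
    (hunit : ∀ z ∈ sphere m ρ, IsUnit (pencil S c z))
    (hunit' : ∀ z ∈ sphere m ρ, IsUnit (pencil S' c z))
    (hsub : ∀ z ∈ sphere m ρ, pencilResolvent S' c z - pencilResolvent S c z =
      -(pencilResolvent S' c z * B * pencilResolvent S c z))
    (hstar : ∀ z ∈ sphere m ρ, ∀ f,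
      ‖star (pencilResolvent S' c z) f‖ ≤ κ * ‖pencilResolvent S c z f‖) (f g : H) :
    ‖inner ℂ g ((rieszProj S' c m ρ - rieszProj S c m ρ) f)‖ ≤
      ‖B‖ * κ / (4 * Real.pi) * (resolventEnergy S c m ρ f + resolventEnergy S c m ρ g) := by
  let L : (H →L[ℂ] H) →L[ℂ] ℂ := (innerSL ℂ g).comp (ContinuousLinearMap.apply ℂ H f)
  have hint : CircleIntegrable (fun z ↦ L (pencilResolvent S c z)) m ρ :=
    (L.continuous.comp_continuousOn (continuousOn_pencilResolvent hunit)).circleIntegrable hρ.le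
  have hint' : CircleIntegrable (fun z ↦ L (pencilResolvent S' c z)) m ρ :=
    (L.continuous.comp_continuousOn (continuousOn_pencilResolvent hunit')).circleIntegrable hρ.le
  have hdiff : L (rieszProj S' c m ρ - rieszProj S c m ρ) = -((2 * Real.pi * Complex.I : ℂ)⁻¹ •
      ∮ z in C(m, ρ), L (pencilResolvent S' c z - pencilResolvent S c z)) := by
    simp only [map_sub]
    rw [circleIntegral.integral_sub hint' hint, rieszProj, rieszProj,
      map_rieszIntegral L hρ hunit continuousOn_const,
      map_rieszIntegral L hρ hunit' continuousOn_const]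
    simp only [one_smul, smul_sub]
    abel
  have hcont (h : H) : Continuous fun θ ↦ ‖pencilResolvent S c (circleMap m ρ θ) h‖ ^ 2 := by
    have := continuous_pencilResolvent_circleMap hρ.le hunit
    fun_prop
  have hbound := norm_cauchyIntegral_le
    (f := fun z ↦ L (pencilResolvent S' c z - pencilResolvent S c z))
    (G := fun θ ↦ ‖B‖ * κ / 2 * (‖pencilResolvent S c (circleMap m ρ θ) f‖ ^ 2 +
      ‖pencilResolvent S c (circleMap m ρ θ) g‖ ^ 2)) hρ.le (fun θ ↦
    have hθ := circleMap_mem_sphere m hρ.le θ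
    norm_inner_resolvent_sub_le hκ (hsub _ hθ) (hstar _ hθ) f g)
    (((hcont f).add (hcont g)).const_mul _)
  rw [intervalIntegral.integral_const_mul, intervalIntegral.integral_add
    ((hcont f).intervalIntegrable _ _) ((hcont g).intervalIntegrable _ _), ← hdiff] at hbound
  refine hbound.trans_eq ?_
  simp only [resolventEnergy]
  field_simp
  ring

lemma norm_localResolvent_apply_le (hρ : 0 < ρ) (hκ : 0 ≤ κ) (hδ : 0 < δ) (hw : w ∉ sphere m ρ)
    (hunit : ∀ z ∈ sphere m ρ, IsUnit (pencil S c z))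
    (hunit' : ∀ z ∈ sphere m ρ, IsUnit (pencil S' c z))
    (hle : ∀ z ∈ sphere m ρ, ∀ f, ‖pencilResolvent S' c z f‖ ≤ κ * ‖pencilResolvent S c z f‖)
    (f : H) :
    ‖localResolvent S' c m ρ w f‖ ≤ κ / (4 * Real.pi) *
      (δ⁻¹ * (ρ * ∫ θ in 0..2 * Real.pi, (dist (circleMap m ρ θ) w ^ 2)⁻¹) +
        δ * resolventEnergy S c m ρ f) := by
  set y : ℝ → ℝ := fun θ ↦ ‖pencilResolvent S c (circleMap m ρ θ) f‖ ^ 2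
  set u : ℝ → ℝ := fun θ ↦ (dist (circleMap m ρ θ) w ^ 2)⁻¹
  have hy : Continuous y := by
    have := continuous_pencilResolvent_circleMap hρ.le hunit
    fun_prop
  have hu : Continuous u := by
    have := continuous_circleMap m ρ
    refine Continuous.inv₀ (by fun_prop) fun θ ↦ pow_ne_zero 2 (dist_ne_zero.2 fun h ↦ hw ?_)
    exact h ▸ circleMap_mem_sphere m hρ.le θ
  have hpoint (θ : ℝ) : ‖(circleMap m ρ θ - w)⁻¹ • pencilResolvent S' c (circleMap m ρ θ) f‖ ≤
      κ / 2 * (δ⁻¹ * u θ + δ * y θ) := by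
    have hle := hle _ (circleMap_mem_sphere m hρ.le θ) f
    simp only [u, y]
    rw [norm_smul, norm_inv, ← dist_eq_norm, ← inv_pow]
    set D := dist (circleMap m ρ θ) w
    set r := ‖pencilResolvent S c (circleMap m ρ θ) f‖
    calc D⁻¹ * ‖pencilResolvent S' c (circleMap m ρ θ) f‖ ≤ D⁻¹ * (κ * r) := by gcongr
      _ = κ / 2 * (2 * r * D⁻¹) := by ring
      _ ≤ κ / 2 * (δ * r ^ 2 + δ⁻¹ * D⁻¹ ^ 2) := by gcongr; exact two_mul_le_add_mul_sq hδ
      _ = κ / 2 * (δ⁻¹ * D⁻¹ ^ 2 + δ * r ^ 2) := by ring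
  have hbound := norm_cauchyIntegral_le (f := fun z ↦ (z - w)⁻¹ • pencilResolvent S' c z f)
    (G := fun θ ↦ κ / 2 * (δ⁻¹ * u θ + δ * y θ)) hρ.le hpoint
    (((hu.const_mul δ⁻¹).add (hy.const_mul δ)).const_mul (κ / 2))
  rw [intervalIntegral.integral_const_mul, intervalIntegral.integral_add
    ((hu.const_mul δ⁻¹).intervalIntegrable _ _) ((hy.const_mul δ).intervalIntegrable _ _),
    intervalIntegral.integral_const_mul, intervalIntegral.integral_const_mul] at hbound
  have happly := map_rieszIntegral (ContinuousLinearMap.apply ℂ H f) hρ hunit'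
    (continuousOn_sub_inv hw)
  refine (congrArg norm happly).trans_le (hbound.trans_eq ?_)
  simp only [resolventEnergy]
  field_simp
  ring

end Perturbation

lemma hasSum_of_dense_of_norm_sum_le {𝕜 E ι : Type*} [NontriviallyNormedField 𝕜]
    [NormedAddCommGroup E] [NormedSpace 𝕜 E] [DecidableEq ι] {P : ι → E →L[𝕜] E} {M : ℝ}
    (hP : ∀ i j, P i * P j = if i = j then P i else 0)
    (hM : ∀ F : Finset ι, ‖∑ i ∈ F, P i‖ ≤ M)
    (hdense : Dense {y | ∃ F : Finset ι, (∑ i ∈ F, P i) y = y}) (x : E) :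
    HasSum (fun i ↦ P i x) x := by
  have hM₀ : 0 ≤ M := (norm_nonneg _).trans (hM ∅)
  have hsum {F₀ F : Finset ι} (hF : F₀ ⊆ F) :
      (∑ i ∈ F, P i) * ∑ j ∈ F₀, P j = ∑ j ∈ F₀, P j := by
    simp only [Finset.mul_sum, Finset.sum_mul, hP]
    exact Finset.sum_congr rfl fun j hj ↦ by simp [hF hj]
  rw [HasSum, SummationFilter.unconditional_filter, Metric.tendsto_atTop]
  intro η hη
  obtain ⟨y, ⟨F₀, hy⟩, hxy⟩ := hdense.exists_dist_lt x (div_pos hη (by positivity : 0 < M + 1))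
  refine ⟨F₀, fun F hF ↦ ?_⟩
  have hFy : (∑ i ∈ F, P i) y = y := by
    nth_rw 1 [← hy]
    exact congr($(hsum hF) y).trans hy
  have hsub : (∑ i ∈ F, P i x) - x = (∑ i ∈ F, P i) (x - y) - (x - y) := by
    rw [map_sub, hFy, _root_.sum_apply]
    abel
  rw [dist_eq_norm] at hxy ⊢
  calc ‖(∑ i ∈ F, P i x) - x‖ ≤ ‖(∑ i ∈ F, P i) (x - y)‖ + ‖x - y‖ := hsub ▸ norm_sub_le _ _
    _ ≤ M * ‖x - y‖ + ‖x - y‖ := by gcongr; exact ContinuousLinearMap.le_of_opNorm_le _ (hM F) _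
    _ = ‖x - y‖ * (M + 1) := by ring
    _ < η := (lt_div_iff₀ (by positivity)).1 hxy

section SpectralInclusion

variable {T : H →ₗ.[ℂ] H} {B S : H →L[ℂ] H} {c z : ℂ} {ε : ℝ}

lemma IsResolventOf.norm_pencilResolvent_le_inv [IsStarNormal S] (hS : IsResolventOf T c S)
    (hε : 0 < ε) (hz : z ∉ thickening ε (pmSpectrum T)) : ‖_root_.pencilResolvent S c z‖ ≤ ε⁻¹ := by
  refine norm_pencilResolvent_le hε fun t ht ↦ ?_
  have htT : t ∈ pmSpectrum T := fun h ↦ ht (hS.isUnit_pencil_of_mem h)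
  by_contra! hzt
  exact hz (mem_thickening_iff.2 ⟨t, htT, hzt⟩)

lemma isUnit_one_add_mul_of_norm_le {𝔄 : Type*} [NormedRing 𝔄] [CompleteSpace 𝔄] {X R : 𝔄}
    (hX : ‖X‖ < ε) (hR : ‖R‖ ≤ ε⁻¹) : IsUnit (1 + X * R) := by
  have hε : 0 < ε := (norm_nonneg X).trans_lt hX
  rw [← sub_neg_eq_add]
  refine isUnit_one_sub_of_norm_lt_one ?_
  calc ‖-(X * R)‖ ≤ ‖X‖ * ‖R‖ := (norm_neg _).trans_le (norm_mul_le _ _)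
    _ ≤ ‖X‖ * ε⁻¹ := by gcongr
    _ < ε * ε⁻¹ := by gcongr
    _ = 1 := mul_inv_cancel₀ hε.ne'

lemma IsResolventOf.pmSpectrum_pmSumCLM_subset [IsStarNormal S] (hS : IsResolventOf T c S)
    (hB : ‖B‖ < ε) : pmSpectrum (pmSumCLM T B) ⊆ thickening ε (pmSpectrum T) := by
  intro z hz
  by_contra hzT
  have hε : 0 < ε := (norm_nonneg B).trans_lt hB
  have hzmem : z ∈ pmResolventSet T := not_not.1 fun h ↦ hzT (self_subset_thickening hε _ h)
  exact hz ((hS.pencilResolvent hzmem).mem_pmResolventSet_pmSumCLM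
    (isUnit_one_add_mul_of_norm_le hB (hS.norm_pencilResolvent_le_inv hε hzT)))

end SpectralInclusion

section BandPerturbation

variable {a b : ℤ → ℝ} {d ε : ℝ} {S : H →L[ℂ] H}

namespace SeparatedBands

lemma sum_resolventEnergy_group_le {ι : Type*} [LinearOrder ι] {F : Finset ι} {p n : ι → ℤ} {c : ℂ}
    [IsStarNormal S] (hab : SeparatedBands a b d)
    (hunit : ∀ z ∉ ⋃ k, band a b k, IsUnit (pencil S c z)) (hpn : ∀ i ∈ F, p i ≤ n i)
    (hnp : ∀ i ∈ F, ∀ j ∈ F, i < j → n i < p j) (f : H) :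
    ∑ i ∈ F, resolventEnergy S c (groupCenter a b d (p i) (n i)) (groupRadius a b d (p i) (n i)) f ≤
      8 * Real.pi / d * ‖f‖ ^ 2 := by
  have hd := hab.pos
  refine sum_resolventEnergy_le (fun i hi ↦ (hab.groupRadius_pos (hpn i hi)).le)
    (fun i _ z hz ↦ hunit z fun h ↦ hab.notMem_iUnion_bandNhd_of_mem_sphere le_rfl hz
      (iUnion_mono (band_subset_bandNhd (half_pos hd)) h)) (by positivity) (fun t ht ↦ ?_) f
  obtain ⟨k, s, hs, rfl⟩ := mem_iUnion.1 (not_not.1 fun h ↦ ht (hunit t h))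
  refine (sum_mul_integral_inv_dist_circleMap_sq_le (half_pos hd) (fun i hi ↦ ?_)
    (fun i hi j hj hij ↦ ?_) (fun i _ ↦ hab.half_le_abs_left_sub (p i) hs)
    fun i _ ↦ hab.half_le_abs_right_sub (n i) hs).trans_eq (by field_simp; ring)
  · linarith [hab.left_le_right (p i), hab.right_mono (hpn i hi)]
  · linarith [hab.right_add_le_left (hnp i hi j hj hij)]

lemma norm_sum_bandProj_le_one {c : ℂ} (hab : SeparatedBands a b d) (hε : 0 < ε) (hεd : ε < d / 2)
    (hunit : ∀ z ∉ ⋃ k, bandNhd a b ε k, IsUnit (pencil S c z)) (hS : IsSelfAdjoint S)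
    (F : Finset ℤ) : ‖∑ k ∈ F, bandProj a b d S c k‖ ≤ 1 := by
  set P := ∑ k ∈ F, bandProj a b d S c k
  have hP : IsSpectralProj S c (⋃ k ∈ F, bandNhd a b ε k) P :=
    .sum F (fun k _ ↦ hab.isSpectralProj_bandProj hε hεd hunit k) fun j _ k _ hjk ↦ by
      rw [hab.bandProj_mul_bandProj hε hεd hunit, if_neg hjk]
  have hstar : Commute (star P) S := by simpa only [hS.star_eq] using hP.commute.star_star
  have hnormal : IsStarNormal P :=
    ⟨Commute.sum_right _ _ _ fun k _ ↦ hab.commute_groupProj hεd hunit le_rfl hstar⟩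
  exact norm_le_one_of_isIdempotentElem hP.isIdempotentElem

end SeparatedBands

/-- The setting of the theorem, together with a base point `c` in the gap between the intervals
`Δ_0` and `Δ_1` and the resolvents `S = (T - c)⁻¹` and `S' = (T + B - c)⁻¹`, through which the
unbounded operators `T` and `T + B` are accessed. -/
structure BandPerturbation (T : H →ₗ.[ℂ] H) (B S S' : H →L[ℂ] H) (a b : ℤ → ℝ) (d ε c : ℝ) :
    Prop where
  isSelfAdjoint : IsSelfAdjoint T
  bands : SeparatedBands a b d
  pmSpectrum_subset : pmSpectrum T ⊆ ⋃ k, band a b k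
  norm_lt : ‖B‖ < ε
  lt_half : ε < d / 2
  isResolventOf : IsResolventOf T c S
  isResolventOf_pmSumCLM : IsResolventOf (pmSumCLM T B) c S'
  right_lt : b 0 < c
  lt_right_add : c < b 0 + d / 2

namespace BandPerturbation

variable {T : H →ₗ.[ℂ] H} {B S' X : H →L[ℂ] H} {c : ℝ} {p n k : ℤ} {z : ℂ}

lemma pos (h : BandPerturbation T B S S' a b d ε c) : 0 < ε := (norm_nonneg B).trans_lt h.norm_lt

lemma inv_one_sub_nonneg (h : BandPerturbation T B S S' a b d ε c) : 0 ≤ (1 - ‖B‖ / ε)⁻¹ :=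
  inv_nonneg.2 (sub_nonneg.2 ((div_le_one h.pos).2 h.norm_lt.le))

lemma isSelfAdjoint_resolvent (h : BandPerturbation T B S S' a b d ε c) : IsSelfAdjoint S :=
  h.isResolventOf.isSelfAdjoint h.isSelfAdjoint

lemma isStarNormal (h : BandPerturbation T B S S' a b d ε c) : IsStarNormal S :=
  h.isSelfAdjoint_resolvent.isStarNormal

lemma notMem_thickening (h : BandPerturbation T B S S' a b d ε c)
    (hz : z ∉ ⋃ k, bandNhd a b ε k) : z ∉ thickening ε (pmSpectrum T) :=
  fun hzT ↦ hz (thickening_subset_iUnion_bandNhd h.pmSpectrum_subset hzT)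

lemma mem_pmResolventSet (h : BandPerturbation T B S S' a b d ε c) (hz : z ∉ ⋃ k, band a b k) :
    z ∈ pmResolventSet T :=
  not_not.1 fun hzT ↦ hz (h.pmSpectrum_subset hzT)

lemma mem_pmResolventSet_of_notMem_bandNhd (h : BandPerturbation T B S S' a b d ε c)
    (hz : z ∉ ⋃ k, bandNhd a b ε k) : z ∈ pmResolventSet T :=
  h.mem_pmResolventSet fun hzb ↦ hz (iUnion_mono (band_subset_bandNhd h.pos) hzb)

lemma mem_pmResolventSet_pmSumCLM (h : BandPerturbation T B S S' a b d ε c)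
    (hz : z ∉ ⋃ k, bandNhd a b ε k) : z ∈ pmResolventSet (pmSumCLM T B) :=
  have := h.isStarNormal
  not_not.1 fun hzT ↦ h.notMem_thickening hz
    (h.isResolventOf.pmSpectrum_pmSumCLM_subset h.norm_lt hzT)

lemma isUnit_pencil (h : BandPerturbation T B S S' a b d ε c) :
    ∀ z ∉ ⋃ k, bandNhd a b ε k, IsUnit (pencil S (c : ℂ) z) := fun _ hz ↦
  h.isResolventOf.isUnit_pencil_of_mem (h.mem_pmResolventSet_of_notMem_bandNhd hz)

lemma isUnit_pencil_pmSumCLM (h : BandPerturbation T B S S' a b d ε c) :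
    ∀ z ∉ ⋃ k, bandNhd a b ε k, IsUnit (pencil S' (c : ℂ) z) := fun _ hz ↦
  h.isResolventOf_pmSumCLM.isUnit_pencil_of_mem (h.mem_pmResolventSet_pmSumCLM hz)

lemma norm_pencilResolvent_le_inv (h : BandPerturbation T B S S' a b d ε c)
    (hz : z ∉ ⋃ k, bandNhd a b ε k) : ‖pencilResolvent S (c : ℂ) z‖ ≤ ε⁻¹ :=
  have := h.isStarNormal
  h.isResolventOf.norm_pencilResolvent_le_inv h.pos (h.notMem_thickening hz)

lemma pencilResolvent_sub_eq (h : BandPerturbation T B S S' a b d ε c)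
    (hz : z ∉ ⋃ k, bandNhd a b ε k) : pencilResolvent S' (c : ℂ) z - pencilResolvent S (c : ℂ) z =
      -(pencilResolvent S' (c : ℂ) z * B * pencilResolvent S (c : ℂ) z) :=
  (h.isResolventOf.pencilResolvent (h.mem_pmResolventSet_of_notMem_bandNhd hz)).sub_eq_neg_mul_mul
    (h.isResolventOf_pmSumCLM.pencilResolvent (h.mem_pmResolventSet_pmSumCLM hz))

lemma norm_pencilResolvent_apply_le (h : BandPerturbation T B S S' a b d ε c)
    (hz : z ∉ ⋃ k, bandNhd a b ε k) (f : H) :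
    ‖pencilResolvent S' (c : ℂ) z f‖ ≤ (1 - ‖B‖ / ε)⁻¹ * ‖pencilResolvent S (c : ℂ) z f‖ :=
  norm_apply_le_of_sub_eq h.pos h.norm_lt (h.norm_pencilResolvent_le_inv hz)
    ((h.isResolventOf.pencilResolvent
      (h.mem_pmResolventSet_of_notMem_bandNhd hz)).sub_eq_neg_mul_mul'
      (h.isResolventOf_pmSumCLM.pencilResolvent (h.mem_pmResolventSet_pmSumCLM hz))) f

lemma norm_star_pencilResolvent_apply_le (h : BandPerturbation T B S S' a b d ε c)
    (hz : z ∉ ⋃ k, bandNhd a b ε k) (f : H) :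
    ‖star (pencilResolvent S' (c : ℂ) z) f‖ ≤
      (1 - ‖B‖ / ε)⁻¹ * ‖pencilResolvent S (c : ℂ) z f‖ := by
  have := h.isStarNormal
  have hnormal := isStarNormal_pencilResolvent (h.isUnit_pencil z hz)
  have hstar : star (pencilResolvent S' (c : ℂ) z) - star (pencilResolvent S (c : ℂ) z) =
      -(star (pencilResolvent S (c : ℂ) z) * star B * star (pencilResolvent S' (c : ℂ) z)) := by
    rw [← star_sub, h.pencilResolvent_sub_eq hz, star_neg, star_mul, star_mul, mul_assoc]
  have hle := norm_apply_le_of_sub_eq h.pos ((norm_star B).trans_lt h.norm_lt)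
    ((norm_star _).trans_le (h.norm_pencilResolvent_le_inv hz)) hstar f
  rwa [norm_star, ContinuousLinearMap.star_eq_adjoint (pencilResolvent S (c : ℂ) z),
    ← ContinuousLinearMap.isStarNormal_iff_norm_eq_adjoint.1 hnormal f] at hle

lemma sum_resolventEnergy_le (h : BandPerturbation T B S S' a b d ε c) (F : Finset ℤ) (f : H) :
    ∑ k ∈ F, resolventEnergy S c (groupCenter a b d k k) (groupRadius a b d k k) f ≤
      8 * Real.pi / d * ‖f‖ ^ 2 :=
  have := h.isStarNormal
  h.bands.sum_resolventEnergy_group_le (p := id) (n := id)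
    (fun _ hz ↦ h.isResolventOf.isUnit_pencil_of_mem (h.mem_pmResolventSet hz))
    (fun _ _ ↦ le_rfl) (fun _ _ _ _ hij ↦ hij) f

lemma resolventEnergy_le (h : BandPerturbation T B S S' a b d ε c) (hpn : p ≤ n) (f : H) :
    resolventEnergy S c (groupCenter a b d p n) (groupRadius a b d p n) f ≤
      8 * Real.pi / d * ‖f‖ ^ 2 := by
  have := h.isStarNormal
  simpa only [Finset.univ_unique, Finset.sum_singleton] using
    h.bands.sum_resolventEnergy_group_le (F := (Finset.univ : Finset Unit))
      (p := fun _ ↦ p) (n := fun _ ↦ n)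
      (fun _ hz ↦ h.isResolventOf.isUnit_pencil_of_mem (h.mem_pmResolventSet hz))
      (fun _ _ ↦ hpn) (fun _ _ _ _ hij ↦ absurd hij (lt_irrefl _)) f

lemma norm_inner_bandProj_sub_le (h : BandPerturbation T B S S' a b d ε c) (k : ℤ) (f g : H) :
    ‖inner ℂ g ((bandProj a b d S' c k - bandProj a b d S c k) f)‖ ≤
      ‖B‖ * (1 - ‖B‖ / ε)⁻¹ / (4 * Real.pi) *
        (resolventEnergy S c (groupCenter a b d k k) (groupRadius a b d k k) f +
          resolventEnergy S c (groupCenter a b d k k) (groupRadius a b d k k) g) :=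
  have hsphere {z : ℂ} (hz : z ∈ sphere (groupCenter a b d k k) (groupRadius a b d k k)) :=
    h.bands.notMem_iUnion_bandNhd_of_mem_sphere h.lt_half.le hz
  norm_inner_rieszProj_sub_le (h.bands.groupRadius_pos le_rfl) h.inv_one_sub_nonneg
    (fun z hz ↦ h.isUnit_pencil z (hsphere hz))
    (fun z hz ↦ h.isUnit_pencil_pmSumCLM z (hsphere hz))
    (fun _ hz ↦ h.pencilResolvent_sub_eq (hsphere hz))
    (fun _ hz ↦ h.norm_star_pencilResolvent_apply_le (hsphere hz)) f g

lemma norm_sum_bandProj_sub_le (h : BandPerturbation T B S S' a b d ε c) (F : Finset ℤ) :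
    ‖∑ k ∈ F, (bandProj a b d S' c k - bandProj a b d S c k)‖ ≤
      2 * (2 * (‖B‖ * (1 - ‖B‖ / ε)⁻¹) / d) := by
  have hd := h.bands.pos
  have hκ := h.inv_one_sub_nonneg
  refine opNorm_le_of_forall_norm_inner_le (by positivity) fun f g ↦ ?_
  rw [_root_.sum_apply, inner_sum]
  calc ‖∑ k ∈ F, inner ℂ g ((bandProj a b d S' c k - bandProj a b d S c k) f)‖
      ≤ ∑ k ∈ F, ‖inner ℂ g ((bandProj a b d S' c k - bandProj a b d S c k) f)‖ := norm_sum_le _ _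
    _ ≤ _ := Finset.sum_le_sum fun k _ ↦ h.norm_inner_bandProj_sub_le k f g
    _ ≤ ‖B‖ * (1 - ‖B‖ / ε)⁻¹ / (4 * Real.pi) *
        (8 * Real.pi / d * ‖f‖ ^ 2 + 8 * Real.pi / d * ‖g‖ ^ 2) := by
      rw [← Finset.mul_sum, Finset.sum_add_distrib]
      gcongr
      exacts [h.sum_resolventEnergy_le F f, h.sum_resolventEnergy_le F g]
    _ = 2 * (‖B‖ * (1 - ‖B‖ / ε)⁻¹) / d * (‖f‖ ^ 2 + ‖g‖ ^ 2) := by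
      field_simp
      ring

lemma norm_sum_bandProj_le (h : BandPerturbation T B S S' a b d ε c) (F : Finset ℤ) :
    ‖∑ k ∈ F, bandProj a b d S' c k‖ ≤ 1 + 2 * (2 * (‖B‖ * (1 - ‖B‖ / ε)⁻¹) / d) := by
  have hsplit : ∑ k ∈ F, bandProj a b d S' c k = ∑ k ∈ F, bandProj a b d S c k +
      ∑ k ∈ F, (bandProj a b d S' c k - bandProj a b d S c k) := by
    rw [Finset.sum_sub_distrib, add_sub_cancel]
  rw [hsplit]
  exact (norm_add_le _ _).trans (add_le_add
    (h.bands.norm_sum_bandProj_le_one h.pos h.lt_half h.isUnit_pencil h.isSelfAdjoint_resolvent F)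
    (h.norm_sum_bandProj_sub_le F))

lemma norm_localResolvent_apply_le (h : BandPerturbation T B S S' a b d ε c) (hpn : p ≤ n)
    (hp : a p - d / 2 < c) (hn : c < b n + d / 2) (f : H) :
    ‖localResolvent S' c (groupCenter a b d p n) (groupRadius a b d p n) c f‖ ≤
      (1 - ‖B‖ / ε)⁻¹ / 4 * √((c - (a p - d / 2))⁻¹ + (b n + d / 2 - c)⁻¹) *
        (1 + 8 / d * ‖f‖ ^ 2) := by
  have hd := h.bands.pos
  have hκ := h.inv_one_sub_nonneg
  have hpc := sub_pos.2 hp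
  have hnc := sub_pos.2 hn
  set δ := √((c - (a p - d / 2))⁻¹ + (b n + d / 2 - c)⁻¹)
  have hδ : 0 < δ := Real.sqrt_pos.2 (by positivity)
  have hpoisson : groupRadius a b d p n * ∫ θ in 0..2 * Real.pi,
      (dist (circleMap (groupCenter a b d p n) (groupRadius a b d p n) θ) c ^ 2)⁻¹ =
        Real.pi * δ ^ 2 := by
    rw [groupCenter, groupRadius,
      mul_integral_inv_dist_circleMap_sq (hp.trans hn) hp.ne' hn.ne, abs_of_pos hpc,
      abs_of_pos hnc, Real.sq_sqrt (by positivity), inv_add_inv hpc.ne' hnc.ne']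
    ring
  have hsphere {z : ℂ} (hz : z ∈ sphere (groupCenter a b d p n) (groupRadius a b d p n)) :=
    h.bands.notMem_iUnion_bandNhd_of_mem_sphere h.lt_half.le hz
  calc _ ≤ (1 - ‖B‖ / ε)⁻¹ / (4 * Real.pi) * (δ⁻¹ * (Real.pi * δ ^ 2) +
        δ * resolventEnergy S c (groupCenter a b d p n) (groupRadius a b d p n) f) := by
        rw [← hpoisson]
        exact _root_.norm_localResolvent_apply_le (h.bands.groupRadius_pos hpn) hκ hδ
          (fun hc ↦ (mem_ball.1 (mem_ball_groupCenter_ofReal hp hn)).ne (mem_sphere.1 hc))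
          (fun z hz ↦ h.isUnit_pencil z (hsphere hz))
          (fun z hz ↦ h.isUnit_pencil_pmSumCLM z (hsphere hz))
          (fun _ hz ↦ h.norm_pencilResolvent_apply_le (hsphere hz)) f
    _ ≤ (1 - ‖B‖ / ε)⁻¹ / (4 * Real.pi) * (δ⁻¹ * (Real.pi * δ ^ 2) +
        δ * (8 * Real.pi / d * ‖f‖ ^ 2)) := by
        gcongr
        exact h.resolventEnergy_le hpn f
    _ = _ := by field_simp

lemma groupProj_apply_sub (h : BandPerturbation T B S S' a b d ε c) (hpn : p ≤ n)
    (hp : a p - d / 2 < c) (hn : c < b n + d / 2) (f : H) :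
    groupProj a b d S' c p n (S' f) - S' f =
      localResolvent S' c (groupCenter a b d p n) (groupRadius a b d p n) c f := by
  have hlocal := pencil_mul_localResolvent_of_mem_ball (h.bands.groupRadius_pos hpn)
    (h.bands.isUnit_pencil_of_mem_sphere h.lt_half h.isUnit_pencil_pmSumCLM)
    (mem_ball_groupCenter_ofReal hp hn)
  have hcomm := h.bands.commute_groupProj h.lt_half h.isUnit_pencil_pmSumCLM hpn (Commute.refl S')
  rw [pencil, sub_self, zero_smul, sub_zero, one_mul, ← groupProj, mul_sub, mul_one, hcomm.eq]
    at hlocal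
  exact congr($hlocal f).symm

lemma tendsto_groupProj_apply (h : BandPerturbation T B S S' a b d ε c) (f : H) :
    Tendsto (fun N : ℕ ↦ groupProj a b d S' c (-N) N (S' f)) atTop (𝓝 (S' f)) := by
  have hleft : Tendsto (fun N : ℕ ↦ (c - (a (-N) - d / 2))⁻¹) atTop (𝓝 0) := by
    simp only [sub_sub_eq_add_sub, sub_eq_add_neg (c + d / 2)]
    exact (tendsto_atTop_add_const_left _ _
      (tendsto_neg_atBot_atTop.comp h.bands.tendsto_left_atBot)).inv_tendsto_atTop
  have hright : Tendsto (fun N : ℕ ↦ (b N + d / 2 - c)⁻¹) atTop (𝓝 0) :=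
    (tendsto_atTop_add_const_right _ _
      (tendsto_atTop_add_const_right _ _ h.bands.tendsto_right_atTop)).inv_tendsto_atTop
  have hbound := ((hleft.add hright).sqrt.const_mul ((1 - ‖B‖ / ε)⁻¹ / 4)).mul_const
    (1 + 8 / d * ‖f‖ ^ 2)
  rw [add_zero, Real.sqrt_zero, mul_zero, zero_mul] at hbound
  rw [tendsto_iff_norm_sub_tendsto_zero]
  refine squeeze_zero (fun _ ↦ norm_nonneg _) (fun N ↦ ?_) hbound
  have hd := h.bands.pos
  have hN : (-N : ℤ) ≤ N := by omega
  have hp : a (-N) - d / 2 < c := by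
    linarith [h.bands.left_mono (show (-N : ℤ) ≤ 0 by omega), h.bands.left_le_right 0, h.right_lt]
  have hn : c < b N + d / 2 := by
    linarith [h.bands.right_mono (Int.natCast_nonneg N), h.lt_right_add]
  rw [h.groupProj_apply_sub hN hp hn]
  exact h.norm_localResolvent_apply_le hN hp hn f

lemma hasSum_bandProj_apply (h : BandPerturbation T B S S' a b d ε c) (x : H) :
    HasSum (fun k ↦ bandProj a b d S' c k x) x := by
  have hunit := h.isUnit_pencil_pmSumCLM
  refine hasSum_of_dense_of_norm_sum_le (h.bands.bandProj_mul_bandProj h.pos h.lt_half hunit)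
    h.norm_sum_bandProj_le (dense_closure.1 ?_) x
  have hdense : DenseRange S' := IsResolventOf.denseRange (A := pmSumCLM T B)
    h.isSelfAdjoint.dense_domain h.isResolventOf_pmSumCLM
  refine hdense.mono (range_subset_iff.2 fun f ↦ ?_)
  refine mem_closure_of_tendsto (h.tendsto_groupProj_apply f) (.of_forall fun N ↦
    ⟨Finset.Icc (-N) N, ?_⟩)
  have hN : (-N : ℤ) ≤ N := by omega
  rw [h.bands.sum_bandProj h.pos h.lt_half hunit hN]
  exact congr($((h.bands.isSpectralProj_groupProj h.pos h.lt_half hunit hN).isIdempotentElem.eq) _)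

lemma isRieszProjFor_bandProj (h : BandPerturbation T B S S' a b d ε c) (k : ℤ) :
    IsRieszProjFor (pmSumCLM T B) (bandNhd a b ε k) (bandProj a b d S' c k) :=
  (h.bands.isSpectralProj_bandProj h.pos h.lt_half h.isUnit_pencil_pmSumCLM k).isRieszProjFor
    h.isResolventOf_pmSumCLM

lemma eq_bandProj (h : BandPerturbation T B S S' a b d ε c)
    (hX : IsRieszProjFor (pmSumCLM T B) (bandNhd a b ε k) X) : X = bandProj a b d S' c k := by
  have hX := hX.isSpectralProj h.isResolventOf_pmSumCLM
  have hunit := h.isUnit_pencil_pmSumCLM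
  have hQ (j : ℤ) := h.bands.isSpectralProj_bandProj h.pos h.lt_half hunit j
  have hbdd (j : ℤ) : IsBoundedOn S' (bandProj a b d S' c j) :=
    h.bands.isBoundedOn_groupProj h.lt_half hunit le_rfl
  have hcomm (j : ℤ) : Commute (bandProj a b d S' c j) X :=
    (h.bands.commute_groupProj h.lt_half hunit le_rfl hX.commute).symm
  ext x
  have hsum : HasSum (fun j ↦ bandProj a b d S' c j (X x)) (bandProj a b d S' c k (X x)) :=
    hasSum_single k fun j hjk ↦ congr($((hQ j).mul_eq_zero (hbdd j) hX (hcomm j)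
      (h.bands.disjoint_bandNhd h.lt_half.le hjk)) x)
  rw [(h.hasSum_bandProj_apply (X x)).unique hsum]
  exact congr($((hQ k).mul_eq_left (hbdd k) hX (hcomm k) subset_rfl) x)

end BandPerturbation

lemma exists_bandPerturbation {T : H →ₗ.[ℂ] H} {B : H →L[ℂ] H} (hT : IsSelfAdjoint T)
    (hab : SeparatedBands a b d) (hspec : pmSpectrum T ⊆ ⋃ k, band a b k) (hB : ‖B‖ < ε)
    (hεd : ε < d / 2) : ∃ S S' c, BandPerturbation T B S S' a b d ε c := by
  have hε : 0 < ε := (norm_nonneg B).trans_lt hB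
  have hc : ((b 0 + ε : ℝ) : ℂ) ∉ ⋃ k, bandNhd a b ε k :=
    hab.notMem_iUnion_bandNhd_of_mem_gap le_rfl (by linarith [hab.right_add_le 0])
  obtain ⟨S, hS⟩ : ((b 0 + ε : ℝ) : ℂ) ∈ pmResolventSet T :=
    not_not.1 fun h ↦ hc (iUnion_mono (band_subset_bandNhd hε) (hspec h))
  have := (hS.isSelfAdjoint hT).isStarNormal
  obtain ⟨S', hS'⟩ : ((b 0 + ε : ℝ) : ℂ) ∈ pmResolventSet (pmSumCLM T B) :=
    not_not.1 fun h ↦ hc (thickening_subset_iUnion_bandNhd hspec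
      (hS.pmSpectrum_pmSumCLM_subset hB h))
  exact ⟨S, S', b 0 + ε, hT, hab, hspec, hB, hεd, hS, hS', by linarith, by linarith⟩

end BandPerturbation

/-- Theorem C. Let `T` be self-adjoint with spectrum inside the pairwise
disjoint intervals `Δ_k = [α_{2k−1}, α_{2k}]`, `k ∈ ℤ`, with `inf_k (α_{2k+1} − α_{2k}) = d > 0`,
and let `B` be a bounded operator with `‖B‖ = b* < d/2`.  Then for every `ε ∈ (b*, d/2)` the
spectrum of `A = T + B` lies in the union of the mutually disjoint `ε`-neighborhoods
`U_ε(Δ_k)`, and the Riesz projections `Q_k` of `A` for `U_ε(Δ_k)` exist and the subspaces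
`L_k = Q_k(H)`, `k ∈ ℤ`, form an unconditional basis of subspaces of `H` (the family is
minimal and `Σ_k Q_k x` converges unconditionally to `x` for every `x`). -/
theorem stmt3 (T : H →ₗ.[ℂ] H) (hsa : IsSelfAdjoint T)
    (α : ℤ → ℝ) (hmono : Monotone α) (d : ℝ) (hd : 0 < d)
    (hglb : IsGLB (Set.range fun k : ℤ => α (2 * k + 1) - α (2 * k)) d)
    (hspec : pmSpectrum T ⊆ ⋃ k : ℤ, Complex.ofReal '' Set.Icc (α (2 * k - 1)) (α (2 * k)))
    (B : H →L[ℂ] H) (bstar : ℝ) (hB : ‖B‖ = bstar) (hbd : bstar < d / 2) :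
    ∀ ε : ℝ, bstar < ε → ε < d / 2 →
      (∀ k l : ℤ, k ≠ l →
        Disjoint
          (Metric.thickening ε (Complex.ofReal '' Set.Icc (α (2 * k - 1)) (α (2 * k))))
          (Metric.thickening ε (Complex.ofReal '' Set.Icc (α (2 * l - 1)) (α (2 * l))))) ∧
      (pmSpectrum (pmSumCLM T B) ⊆
        ⋃ k : ℤ, Metric.thickening ε (Complex.ofReal '' Set.Icc (α (2 * k - 1)) (α (2 * k)))) ∧
      (∃ Q : ℤ → H →L[ℂ] H, ∀ k : ℤ,
        IsRieszProjFor (pmSumCLM T B)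
          (Metric.thickening ε (Complex.ofReal '' Set.Icc (α (2 * k - 1)) (α (2 * k))))
          (Q k)) ∧
      ∀ Q : ℤ → H →L[ℂ] H,
        (∀ k : ℤ,
          IsRieszProjFor (pmSumCLM T B)
            (Metric.thickening ε (Complex.ofReal '' Set.Icc (α (2 * k - 1)) (α (2 * k))))
            (Q k)) →
        (∀ j k : ℤ, (Q j).comp (Q k) = if j = k then Q j else 0) ∧
        ∀ x : H, HasSum (fun k : ℤ => Q k x) x := by
  intro ε hbε hεd
  have hab : SeparatedBands (fun k ↦ α (2 * k - 1)) (fun k ↦ α (2 * k)) d := by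
    refine ⟨hd, fun k ↦ hmono (by omega), fun k ↦ ?_⟩
    have hgap : d ≤ α (2 * k + 1) - α (2 * k) := hglb.1 ⟨k, rfl⟩
    rw [show 2 * (k + 1) - 1 = 2 * k + 1 by ring]
    linarith
  obtain ⟨S, S', c, h⟩ := exists_bandPerturbation hsa hab hspec (hB.trans_lt hbε) hεd
  refine ⟨fun k l ↦ hab.disjoint_bandNhd hεd.le,
    fun z hz ↦ not_not.1 fun hzU ↦ hz (h.mem_pmResolventSet_pmSumCLM hzU),
    ⟨_, h.isRieszProjFor_bandProj⟩, fun Q hQ ↦ ?_⟩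
  obtain rfl : Q = bandProj _ _ d S' c := funext fun k ↦ h.eq_bandProj (hQ k)
  exact ⟨hab.bandProj_mul_bandProj h.pos hεd h.isUnit_pencil_pmSumCLM, h.hasSum_bandProj_apply⟩
end
end

section
/- For every τ ∈ (0,1) and every ratio ρ = a/c > 0 there exists a constant C > 0, depending only on τ and ρ, with the following property. Let f be a holomorphic and bounded function, not identically zero, on the rectangle Π = {λ ∈ ℂ : |Re λ| < a, |Im λ| < c} with a/c = ρ, and let Π' = {λ : |Re λ| < a(1−τ), |Im λ| < c(1−τ)}. Set M = sup_{λ∈Π} |f(λ)| and M' = sup_{λ∈Π'} |f(λ)|. Then the number of zeros of f in the rectangle Π', counted with multiplicity, is at most C·(ln M − ln M'). -/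
/-!
Normalise `f` by its supremum so that `|f| ≤ 1` on the domain. By Jensen's inequality, each zero of
`f` in a small disc lowers `log |f|` on that disc by a fixed amount. The three-circle theorem,
iterated along chains of discs, carries this smallness to any compact subset of the domain at the
price of a fixed factor, and compactness makes the amount lost per zero uniform. So `N` zeros force
`M' ≤ M * exp (-κ * N)`, with `κ` depending only on the two domains, up to a common scaling.
-/

open Bornology Filter Metric Set
open scoped Pointwise Topology

section ThreeCircles

variable {E : Type*} [NormedAddCommGroup E] [NormedSpace ℂ E] {f : ℂ → E} {p z : ℂ} {a b r R : ℝ}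

theorem mapsTo_add_exp_verticalStrip (p : ℂ) (hr : 0 < r) (hR : 0 < R) :
    MapsTo (fun w ↦ p + Complex.exp w)
      (Complex.HadamardThreeLines.verticalStrip (Real.log r) (Real.log R))
      (ball p R \ closedBall p r) := by
  rintro w ⟨hw₁, hw₂⟩
  simp only [Set.mem_sdiff, mem_ball_iff_norm, mem_closedBall_iff_norm, add_sub_cancel_left,
    Complex.norm_exp, not_le]
  exact ⟨(Real.lt_log_iff_exp_lt hR).1 hw₂, (Real.log_lt_iff_lt_exp hr).1 hw₁⟩

theorem mapsTo_add_exp_verticalClosedStrip (p : ℂ) (hr : 0 < r) (hrR : r < R) :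
    MapsTo (fun w ↦ p + Complex.exp w)
      (Complex.HadamardThreeLines.verticalClosedStrip (Real.log r) (Real.log R))
      (closure (ball p R \ closedBall p r)) := by
  have := (mapsTo_add_exp_verticalStrip p hr (hr.trans hrR)).closure_of_continuousOn
    (f := fun w ↦ p + Complex.exp w) (by fun_prop)
  rwa [Complex.HadamardThreeLines.verticalStrip, Complex.closure_preimage_re,
    closure_Ioo (Real.log_lt_log hr hrR).ne] at this

theorem add_exp_mem_sphere (p : ℂ) (hr : 0 < r) {w : ℂ} (hw : w.re = Real.log r) :
    p + Complex.exp w ∈ sphere p r := by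
  rw [mem_sphere_iff_norm, add_sub_cancel_left, Complex.norm_exp, hw, Real.exp_log hr]

theorem norm_le_rpow_mul_rpow_of_annulus (hr : 0 < r) (hrR : r < R)
    (hf : DiffContOnCl ℂ f (ball p R \ closedBall p r))
    (ha : ∀ w ∈ sphere p r, ‖f w‖ ≤ a) (hb : ∀ w ∈ sphere p R, ‖f w‖ ≤ b)
    (hz : r ≤ dist z p) (hz' : dist z p ≤ R) :
    ‖f z‖ ≤ a ^ (1 - Real.log (dist z p / r) / Real.log (R / r)) *
      b ^ (Real.log (dist z p / r) / Real.log (R / r)) := by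
  have hR : 0 < R := hr.trans hrR
  have hd : 0 < dist z p := hr.trans_le hz
  have hzp : z - p ≠ 0 := by rwa [sub_ne_zero, ← dist_pos]
  have hcomp : DiffContOnCl ℂ (f ∘ fun w ↦ p + Complex.exp w)
      (Complex.HadamardThreeLines.verticalStrip (Real.log r) (Real.log R)) :=
    hf.comp (Complex.differentiable_exp.const_add p).diffContOnCl
      (mapsTo_add_exp_verticalStrip p hr hR)
  have hbdd : BddAbove (norm ∘ (f ∘ fun w ↦ p + Complex.exp w) ''
      Complex.HadamardThreeLines.verticalClosedStrip (Real.log r) (Real.log R)) := by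
    have hcompact : IsCompact (closure (ball p R \ closedBall p r)) :=
      (isBounded_ball.subset sdiff_subset).isCompact_closure
    refine (hcompact.bddAbove_image hf.continuousOn.norm).mono ?_
    rintro _ ⟨w, hw, rfl⟩
    exact ⟨_, mapsTo_add_exp_verticalClosedStrip p hr hrR hw, rfl⟩
  have hre : (Complex.log (z - p)).re = Real.log (dist z p) := by
    rw [Complex.log_re, dist_eq_norm]
  have hstrip : Complex.log (z - p) ∈
      Complex.HadamardThreeLines.verticalClosedStrip (Real.log r) (Real.log R) := by
    rw [Complex.HadamardThreeLines.verticalClosedStrip, mem_preimage, hre]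
    exact ⟨Real.log_le_log hr hz, Real.log_le_log hd hz'⟩
  have hlines := Complex.HadamardThreeLines.norm_le_interp_of_mem_verticalClosedStrip'
    (Real.log_lt_log hr hrR) hstrip hcomp hbdd (fun w hw ↦ ha _ (add_exp_mem_sphere p hr hw))
    (fun w hw ↦ hb _ (add_exp_mem_sphere p hR hw))
  rwa [hre, Function.comp_apply, Complex.exp_log hzp, add_sub_cancel,
    ← Real.log_div hd.ne' hr.ne', ← Real.log_div hR.ne' hr.ne'] at hlines

end ThreeCircles

/-- The Schur class of `U`: holomorphic maps from `U` to the closed unit disc. Boundedness enters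
the estimates below only through membership in this class, after division by the supremum. -/
def SchurClass (U : Set ℂ) : Set (ℂ → ℂ) :=
  {f | DifferentiableOn ℂ f U ∧ MapsTo f U (closedBall 0 1)}

/-- The conclusion of the two-constants theorem for `V` and `W` in the domain `U`: smallness on
`V` propagates to `W` at a rate `θ`, which plays the part of a lower bound on `W` for the harmonic
measure of `V` in `U`. -/
def TwoConstantsBound (U V W : Set ℂ) : Prop :=
  ∃ θ > 0, ∀ f ∈ SchurClass U, ∀ t ≥ 0,
    (∀ z ∈ V, ‖f z‖ ≤ Real.exp (-t)) → ∀ z ∈ W, ‖f z‖ ≤ Real.exp (-(θ * t))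

/-- Zeros of a Schur function in `S` make it exponentially small on `T`, at a uniform rate `κ` per
zero. The sum over `Z` counts multiplicities; points of `Z` that are not zeros contribute `0`. -/
def ZeroDecayBound (U S T : Set ℂ) : Prop :=
  ∃ κ > 0, ∀ f ∈ SchurClass U, ∀ Z : Finset ℂ, ↑Z ⊆ S → ∀ z ∈ T,
    ‖f z‖ ≤ Real.exp (-(κ * ∑ w ∈ Z, (analyticOrderNatAt f w : ℝ)))

theorem SchurClass.norm_le_one {U : Set ℂ} {f : ℂ → ℂ} {z : ℂ} (hf : f ∈ SchurClass U)
    (hz : z ∈ U) : ‖f z‖ ≤ 1 :=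
  mem_closedBall_zero_iff.1 (hf.2 hz)

theorem SchurClass.mono {U U' : Set ℂ} (h : U ⊆ U') : SchurClass U' ⊆ SchurClass U :=
  fun _ hf ↦ ⟨hf.1.mono h, hf.2.mono_left h⟩

namespace TwoConstantsBound

variable {U U' V V' W W' : Set ℂ}

theorem mono (hU : U ⊆ U') (hV : V ⊆ V') (hW : W' ⊆ W) :
    TwoConstantsBound U V W → TwoConstantsBound U' V' W' := by
  rintro ⟨θ, hθ, h⟩
  exact ⟨θ, hθ, fun f hf t ht hfV z hz ↦
    h f (SchurClass.mono hU hf) t ht (fun w hw ↦ hfV w (hV hw)) z (hW hz)⟩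

theorem trans {V₁ V₂ V₃ : Set ℂ} :
    TwoConstantsBound U V₁ V₂ → TwoConstantsBound U V₂ V₃ → TwoConstantsBound U V₁ V₃ := by
  rintro ⟨θ, hθ, h⟩ ⟨θ', hθ', h'⟩
  refine ⟨θ' * θ, mul_pos hθ' hθ, fun f hf t ht hfV z hz ↦ ?_⟩
  rw [mul_assoc]
  exact h' f hf (θ * t) (by positivity) (h f hf t ht hfV) z hz

theorem union_right :
    TwoConstantsBound U V W → TwoConstantsBound U V W' → TwoConstantsBound U V (W ∪ W') := by
  rintro ⟨θ, hθ, h⟩ ⟨θ', hθ', h'⟩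
  refine ⟨min θ θ', lt_min hθ hθ', fun f hf t ht hfV z hz ↦ ?_⟩
  rcases hz with hz | hz
  · exact (h f hf t ht hfV z hz).trans (by gcongr; exact min_le_left θ θ')
  · exact (h' f hf t ht hfV z hz).trans (by gcongr; exact min_le_right θ θ')

theorem ball_ball {p : ℂ} {δ r R : ℝ} (hδ : 0 < δ) (hr : 0 < r) (hrR : r < R) :
    TwoConstantsBound (ball p R) (ball p δ) (ball p r) := by
  obtain ⟨s, hs, hsδr⟩ := exists_between (lt_min hδ hr)
  obtain ⟨hsδ, hsr⟩ := lt_min_iff.1 hsδr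
  obtain ⟨ρ, hrρ, hρR⟩ := exists_between hrR
  have hlog_rs : 0 < Real.log (r / s) := Real.log_pos ((one_lt_div hs).2 hsr)
  have hlog : Real.log (r / s) < Real.log (ρ / s) := by gcongr
  refine ⟨1 - Real.log (r / s) / Real.log (ρ / s),
    sub_pos.2 ((div_lt_one (hlog_rs.trans hlog)).2 hlog), fun f hf t ht hfδ z hz ↦ ?_⟩
  rcases lt_or_ge (dist z p) s with hzs | hzs
  · refine (hfδ z (hzs.trans hsδ)).trans (Real.exp_le_exp.2 (neg_le_neg ?_))
    exact mul_le_of_le_one_left ht (sub_le_self _ (div_pos hlog_rs (hlog_rs.trans hlog)).le)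
  · have hclosed : closedBall p ρ ⊆ ball p R := closedBall_subset_ball hρR
    have hann : DiffContOnCl ℂ f (ball p ρ \ closedBall p s) :=
      ((hf.1.mono hclosed).diffContOnCl_ball subset_rfl).mono sdiff_subset
    calc ‖f z‖
        ≤ Real.exp (-t) ^ (1 - Real.log (dist z p / s) / Real.log (ρ / s)) *
            1 ^ (Real.log (dist z p / s) / Real.log (ρ / s)) :=
          norm_le_rpow_mul_rpow_of_annulus hs (hsr.trans hrρ) hann
            (fun w hw ↦ hfδ w (sphere_subset_ball hsδ hw))
            (fun w hw ↦ SchurClass.norm_le_one hf (hclosed (sphere_subset_closedBall hw))) hzs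
            (hz.le.trans hrρ.le)
      _ = Real.exp (-((1 - Real.log (dist z p / s) / Real.log (ρ / s)) * t)) := by
          rw [Real.one_rpow, mul_one, ← Real.exp_mul]; ring_nf
      _ ≤ Real.exp (-((1 - Real.log (r / s) / Real.log (ρ / s)) * t)) := by
          have : 0 < dist z p := hs.trans_le hzs
          gcongr
          · exact (hlog_rs.trans hlog).le
          · exact (mem_ball.1 hz).le

theorem exists_mem_nhds_of_ball_subset {p q : ℂ} {r R : ℝ} (hU : ball p R ⊆ U) (hrR : r < R)
    (hq : q ∈ ball p r) (hV : V ∈ 𝓝 p) : ∃ W ∈ 𝓝 q, TwoConstantsBound U V W := by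
  obtain ⟨δ, hδ, hδV⟩ := Metric.mem_nhds_iff.1 hV
  exact ⟨ball p r, isOpen_ball.mem_nhds hq,
    (ball_ball hδ (pos_of_mem_ball hq) hrR).mono hU hδV subset_rfl⟩

theorem exists_mem_nhds {p q : ℂ} (hUo : IsOpen U) (hUc : IsPreconnected U) (hp : p ∈ U)
    (hq : q ∈ U) : ∀ V ∈ 𝓝 p, ∃ W ∈ 𝓝 q, TwoConstantsBound U V W := by
  refine hUc.induction₂' (fun x y ↦ ∀ V ∈ 𝓝 x, ∃ W ∈ 𝓝 y, TwoConstantsBound U V W)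
    (fun x hx ↦ ?_) (fun x y z _ _ _ hxy hyz V hV ↦ ?_) hp hq
  · obtain ⟨R, hR, hRU⟩ := Metric.isOpen_iff.1 hUo x hx
    have hnear : ball x (R / 3) ∈ 𝓝[U] x :=
      mem_nhdsWithin_of_mem_nhds (ball_mem_nhds x (by positivity))
    filter_upwards [hnear] with y hy
    have hyU : ball y (2 * R / 3) ⊆ U :=
      (ball_subset_ball' (by linarith [mem_ball.1 hy])).trans hRU
    exact ⟨fun V ↦ exists_mem_nhds_of_ball_subset hRU (by linarith) hy,
      fun V ↦ exists_mem_nhds_of_ball_subset hyU (by linarith) (mem_ball_comm.1 hy)⟩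
  · obtain ⟨W, hW, hVW⟩ := hxy V hV
    obtain ⟨W', hW', hWW'⟩ := hyz W hW
    exact ⟨W', hW', hVW.trans hWW'⟩

theorem of_isCompact {p : ℂ} {K : Set ℂ} (hUo : IsOpen U) (hUc : IsPreconnected U) (hp : p ∈ U)
    (hV : V ∈ 𝓝 p) (hK : IsCompact K) (hKU : K ⊆ U) : TwoConstantsBound U V K := by
  refine hK.induction_on ⟨1, one_pos, by simp⟩ (fun _ _ hST h ↦ h.mono subset_rfl subset_rfl hST)
    (fun _ _ ↦ union_right) fun q hq ↦ ?_
  obtain ⟨W, hW, h⟩ := exists_mem_nhds hUo hUc hp (hKU hq) V hV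
  exact ⟨W, mem_nhdsWithin_of_mem_nhds hW, h⟩

end TwoConstantsBound

section Jensen

variable {f : ℂ → ℂ} {p : ℂ} {r R : ℝ}

theorem sum_analyticOrderNatAt_le_finsum_divisor {K : Set ℂ} (hK : IsCompact K)
    (hf : AnalyticOnNhd ℂ f K) {Z : Finset ℂ} (hZ : ↑Z ⊆ K) :
    ∑ w ∈ Z, (analyticOrderNatAt f w : ℝ) ≤
      ((∑ᶠ w, MeromorphicOn.divisor f K w : ℤ) : ℝ) := by
  have hord : ∀ w ∈ Z, (analyticOrderNatAt f w : ℤ) = MeromorphicOn.divisor f K w := by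
    intro w hw
    rw [MeromorphicOn.AnalyticOnNhd.divisor_apply hf (hZ hw), analyticOrderNatAt]
    cases analyticOrderAt f w <;> rfl
  have hfin := (MeromorphicOn.divisor f K).finiteSupport hK
  have hsub : ∑ w ∈ Z, MeromorphicOn.divisor f K w ≤ ∑ᶠ w, MeromorphicOn.divisor f K w := by
    classical
    rw [finsum_eq_sum_of_support_subset (s := Z ∪ hfin.toFinset) _ (by simp)]
    exact Finset.sum_le_sum_of_subset_of_nonneg Finset.subset_union_left
      fun w _ _ ↦ MeromorphicOn.AnalyticOnNhd.divisor_nonneg hf w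
  rw [← Finset.sum_congr rfl hord] at hsub
  exact_mod_cast hsub

theorem norm_le_exp_neg_log_mul_sum_analyticOrderNatAt (hr : 0 < r) (hrR : r < R)
    (hf : AnalyticOnNhd ℂ f (closedBall p R)) (hbound : ∀ z ∈ sphere p R, ‖f z‖ ≤ 1)
    {Z : Finset ℂ} (hZ : ↑Z ⊆ closedBall p r) :
    ‖f p‖ ≤ Real.exp (-(Real.log (R / r) * ∑ w ∈ Z, (analyticOrderNatAt f w : ℝ))) := by
  rcases eq_or_ne (f p) 0 with hfp | hfp
  · simpa [hfp] using (Real.exp_pos _).le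
  have hR : 0 < R := hr.trans hrR
  have hjensen := AnalyticOnNhd.sum_divisor_le (R := R) (M := 1) (abs_pos_of_pos hr)
    (by rwa [abs_of_pos hr, abs_of_pos hR]) le_rfl (by rwa [abs_of_pos hR]) hfp
    (by rwa [abs_of_pos hR])
  rw [abs_of_pos hr, le_div_iff₀ (Real.log_pos ((one_lt_div hr).2 hrR)), one_div, Real.log_inv]
    at hjensen
  rw [← Real.log_le_iff_le_exp (norm_pos_iff.2 hfp), le_neg]
  refine le_trans ?_ hjensen
  rw [mul_comm]
  gcongr
  · exact (Real.log_pos ((one_lt_div hr).2 hrR)).le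
  · exact sum_analyticOrderNatAt_le_finsum_divisor (isCompact_closedBall p r)
      (hf.mono (closedBall_subset_closedBall hrR.le)) hZ

end Jensen

namespace ZeroDecayBound

variable {U S S' T V : Set ℂ}

theorem mono (hS : S' ⊆ S) : ZeroDecayBound U S T → ZeroDecayBound U S' T := by
  rintro ⟨κ, hκ, h⟩
  exact ⟨κ, hκ, fun f hf Z hZ ↦ h f hf Z (hZ.trans hS)⟩

theorem trans_twoConstantsBound :
    ZeroDecayBound U S V → TwoConstantsBound U V T → ZeroDecayBound U S T := by
  rintro ⟨κ, hκ, h⟩ ⟨θ, hθ, h'⟩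
  refine ⟨θ * κ, mul_pos hθ hκ, fun f hf Z hZ ↦ ?_⟩
  rw [mul_assoc]
  exact h' f hf _ (by positivity) (h f hf Z hZ)

theorem union_left : ZeroDecayBound U S T → ZeroDecayBound U S' T →
    ZeroDecayBound U (S ∪ S') T := by
  classical
  rintro ⟨κ, hκ, h⟩ ⟨κ', hκ', h'⟩
  refine ⟨min κ κ' / 2, half_pos (lt_min hκ hκ'), fun f hf Z hZ z hz ↦ ?_⟩
  have hS := h f hf (Z.filter (· ∈ S)) (by simp [subset_def]) z hz
  have hS' := h' f hf (Z.filter (· ∉ S)) (fun w hw ↦ by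
    obtain ⟨hwZ, hwS⟩ := Finset.mem_filter.1 hw
    exact (hZ hwZ).resolve_left hwS) z hz
  set s := ∑ w ∈ Z with w ∈ S, (analyticOrderNatAt f w : ℝ)
  set s' := ∑ w ∈ Z with w ∉ S, (analyticOrderNatAt f w : ℝ)
  have hsum : ∑ w ∈ Z, (analyticOrderNatAt f w : ℝ) = s + s' :=
    (Finset.sum_filter_add_sum_filter_not Z (· ∈ S) _).symm
  rw [hsum]
  rcases le_total s s' with hss' | hss'
  · refine hS'.trans (Real.exp_le_exp.2 (neg_le_neg ?_))
    calc min κ κ' / 2 * (s + s') ≤ κ' / 2 * (s' + s') := by gcongr; exact min_le_right κ κ'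
      _ = κ' * s' := by ring
  · refine hS.trans (Real.exp_le_exp.2 (neg_le_neg ?_))
    calc min κ κ' / 2 * (s + s') ≤ κ / 2 * (s + s) := by gcongr; exact min_le_left κ κ'
      _ = κ * s := by ring

theorem ball_ball {p : ℂ} {r : ℝ} (hr : 0 < r) (hU : ball p (4 * r) ⊆ U) :
    ZeroDecayBound U (ball p r) (ball p r) := by
  refine ⟨Real.log (3 / 2), Real.log_pos (by norm_num), fun f hf Z hZ z hz ↦ ?_⟩
  have hzU : closedBall z (3 * r) ⊆ ball p (4 * r) :=
    closedBall_subset_ball' (by linarith [mem_ball.1 hz])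
  have hpz : ball p r ⊆ closedBall z (2 * r) :=
    ball_subset_closedBall.trans (closedBall_subset_closedBall' (by linarith [mem_ball'.1 hz]))
  have := norm_le_exp_neg_log_mul_sum_analyticOrderNatAt (by positivity) (by linarith)
    (((hf.1.mono hU).analyticOnNhd isOpen_ball).mono hzU)
    (fun w hw ↦ SchurClass.norm_le_one hf (hU (hzU (sphere_subset_closedBall hw))))
    (hZ.trans hpz)
  rwa [mul_div_mul_right 3 2 hr.ne'] at this

theorem of_isCompact {K : Set ℂ} (hUo : IsOpen U) (hUc : IsPreconnected U) (hK : IsCompact K)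
    (hKU : K ⊆ U) : ZeroDecayBound U K K := by
  refine hK.induction_on (p := fun S ↦ ZeroDecayBound U S K) ?_ (fun _ _ ↦ mono)
    (fun _ _ ↦ union_left) fun p hp ↦ ?_
  · refine ⟨1, one_pos, fun f hf Z hZ z hz ↦ ?_⟩
    obtain rfl : Z = ∅ := by simpa using hZ
    simpa using SchurClass.norm_le_one hf (hKU hz)
  · obtain ⟨R, hR, hRU⟩ := Metric.isOpen_iff.1 hUo p (hKU hp)
    have hV : ball p (R / 4) ∈ 𝓝 p := ball_mem_nhds p (by positivity)
    have hlocal : ZeroDecayBound U (ball p (R / 4)) (ball p (R / 4)) :=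
      ball_ball (by positivity) (by rwa [mul_div_cancel₀ R four_ne_zero])
    exact ⟨_, mem_nhdsWithin_of_mem_nhds hV,
      hlocal.trans_twoConstantsBound (.of_isCompact hUo hUc (hKU hp) hV hK hKU)⟩

end ZeroDecayBound

section Scaling

variable {U V : Set ℂ} {c : ℂ} {M : ℝ} {f : ℂ → ℂ}

theorem div_comp_mul_mem_schurClass (hM : 0 < M)
    (hf : DifferentiableOn ℂ f (c • U)) (hfM : ∀ z ∈ c • U, ‖f z‖ ≤ M) :
    (fun w ↦ f (c * w) / M) ∈ SchurClass U := by
  have hmaps : MapsTo (c * ·) U (c • U) := fun w hw ↦ smul_mem_smul_set hw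
  refine ⟨(hf.comp (by fun_prop) hmaps).div_const _, fun w hw ↦ ?_⟩
  rw [mem_closedBall_zero_iff, norm_div, Complex.norm_real, Real.norm_of_nonneg hM.le]
  exact div_le_one_of_le₀ (hfM _ (hmaps hw)) hM.le

theorem analyticOrderNatAt_div_comp_mul {d w : ℂ} (hc : c ≠ 0) (hd : d ≠ 0)
    (hf : AnalyticAt ℂ f (c * w)) :
    analyticOrderNatAt (fun w ↦ f (c * w) / d) w = analyticOrderNatAt f (c * w) := by
  have hmul : analyticOrderAt (f ∘ (c * ·)) w = analyticOrderAt f (c * w) :=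
    analyticOrderAt_comp_of_deriv_ne_zero (by fun_prop) (by simpa [deriv_const_mul_field] using hc)
  have hconst : analyticOrderAt (fun _ ↦ d⁻¹ : ℂ → ℂ) w = 0 :=
    analyticAt_const.analyticOrderAt_eq_zero.2 (inv_ne_zero hd)
  have hcomp : AnalyticAt ℂ (f ∘ (c * ·)) w := hf.comp (by fun_prop)
  have hdiv : (fun w ↦ f (c * w) / d) = (f ∘ (c * ·)) * fun _ ↦ d⁻¹ :=
    funext fun _ ↦ div_eq_mul_inv _ _
  rw [analyticOrderNatAt, analyticOrderNatAt, hdiv, analyticOrderAt_mul hcomp analyticAt_const,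
    hmul, hconst, add_zero]

theorem ZeroDecayBound.exists_norm_le_mul_exp {S T : Set ℂ} (hUo : IsOpen U) (hSU : S ⊆ U)
    (h : ZeroDecayBound U S T) : ∃ κ > 0, ∀ c : ℂ, c ≠ 0 → ∀ f : ℂ → ℂ, ∀ M > 0,
      DifferentiableOn ℂ f (c • U) → (∀ z ∈ c • U, ‖f z‖ ≤ M) →
      ∀ Z : Finset ℂ, ↑Z ⊆ c • S → ∀ z ∈ c • T,
        ‖f z‖ ≤ M * Real.exp (-(κ * ∑ w ∈ Z, (analyticOrderNatAt f w : ℝ))) := by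
  classical
  obtain ⟨κ, hκ, h⟩ := h
  refine ⟨κ, hκ, fun c hc f M hM hf hfM Z hZ z hz ↦ ?_⟩
  have hM' : (M : ℂ) ≠ 0 := Complex.ofReal_ne_zero.2 hM.ne'
  have hfan : AnalyticOnNhd ℂ f (c • U) := hf.analyticOnNhd (hUo.smul₀ hc)
  obtain ⟨u, hu, rfl⟩ := hz
  have hZ' : ↑(c⁻¹ • Z) ⊆ S := by
    rw [Finset.coe_smul_finset]
    exact (smul_set_subset_iff₀ (inv_ne_zero hc)).2 (by rwa [inv_inv])
  have hsum : ∑ w ∈ c⁻¹ • Z, (analyticOrderNatAt (fun w ↦ f (c * w) / M) w : ℝ) =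
      ∑ w ∈ Z, (analyticOrderNatAt f w : ℝ) := by
    rw [Finset.smul_finset_def, Finset.sum_image (smul_right_injective ℂ (inv_ne_zero hc)).injOn]
    refine Finset.sum_congr rfl fun w hw ↦ ?_
    have hcw : c * c⁻¹ • w = w := mul_inv_cancel_left₀ hc w
    have hfw : AnalyticAt ℂ f w := hfan w (smul_set_mono hSU (hZ hw))
    rw [analyticOrderNatAt_div_comp_mul hc hM' (by rwa [hcw]), hcw]
  have hu' := h _ (div_comp_mul_mem_schurClass hM hf hfM) (c⁻¹ • Z) hZ' u hu
  rwa [hsum, norm_div, Complex.norm_real, Real.norm_of_nonneg hM.le, div_le_iff₀' hM] at hu'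

theorem sSup_norm_image_pos (hU : IsPreconnected U) (hf : AnalyticOnNhd ℂ f U) (hVo : IsOpen V)
    (hVne : V.Nonempty) (hVU : V ⊆ U) (hbdd : BddAbove ((‖f ·‖) '' U))
    (hne : ∃ z ∈ U, f z ≠ 0) : 0 < sSup ((‖f ·‖) '' V) := by
  obtain ⟨v, hv⟩ := hVne
  obtain ⟨u, hu, hfu⟩ := hne
  have hbddV := hbdd.mono (image_mono hVU)
  by_contra! hle
  have hzero : ∀ z ∈ V, f z = 0 := fun z hz ↦
    norm_le_zero_iff.1 ((le_csSup hbddV (mem_image_of_mem _ hz)).trans hle)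
  exact hfu (hf.eqOn_zero_of_preconnected_of_eventuallyEq_zero hU (hVU hv)
    (eventually_of_mem (hVo.mem_nhds hv) hzero) hu)

end Scaling

theorem stmt6_general {U V : Set ℂ} (hUo : IsOpen U) (hUc : IsPreconnected U) (hVo : IsOpen V)
    (hVne : V.Nonempty) (hVb : IsBounded V) (hVU : closure V ⊆ U) :
    ∃ C > 0, ∀ c : ℂ, c ≠ 0 → ∀ f : ℂ → ℂ, DifferentiableOn ℂ f (c • U) →
      BddAbove ((‖f ·‖) '' (c • U)) → (∃ z ∈ c • U, f z ≠ 0) →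
      ∀ Z : Finset ℂ, ↑Z ⊆ c • V → ∑ z ∈ Z, (analyticOrderNatAt f z : ℝ) ≤
        C * (Real.log (sSup ((‖f ·‖) '' (c • U))) - Real.log (sSup ((‖f ·‖) '' (c • V)))) := by
  obtain ⟨κ, hκ, hdecay⟩ := (ZeroDecayBound.of_isCompact hUo hUc hVb.isCompact_closure hVU
    ).exists_norm_le_mul_exp hUo hVU
  refine ⟨κ⁻¹, inv_pos.2 hκ, fun c hc f hf hbdd hne Z hZ ↦ ?_⟩
  set M := sSup ((‖f ·‖) '' (c • U))
  set M' := sSup ((‖f ·‖) '' (c • V))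
  set N := ∑ z ∈ Z, (analyticOrderNatAt f z : ℝ)
  have hcUo : IsOpen (c • U) := hUo.smul₀ hc
  have hcUc : IsPreconnected (c • U) := hUc.image _ (by fun_prop)
  have hfan : AnalyticOnNhd ℂ f (c • U) := hf.analyticOnNhd hcUo
  have hM : 0 < M := sSup_norm_image_pos hcUc hfan hcUo (hne.imp fun _ h ↦ h.1) subset_rfl hbdd hne
  have hM' : 0 < M' := sSup_norm_image_pos hcUc hfan (hVo.smul₀ hc) hVne.smul_set
    (smul_set_mono (subset_closure.trans hVU)) hbdd hne
  have hle : M' ≤ M * Real.exp (-(κ * N)) :=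
    csSup_le (hVne.smul_set.image _) <| forall_mem_image.2 fun z hz ↦
      hdecay c hc f M hM hf (fun w hw ↦ le_csSup hbdd (mem_image_of_mem _ hw)) Z
        (hZ.trans (smul_set_mono subset_closure)) z (smul_set_mono subset_closure hz)
  have hlog : Real.log M' ≤ Real.log M - κ * N := by
    simpa [Real.log_mul hM.ne', sub_eq_add_neg] using Real.log_le_log hM' hle
  rw [inv_mul_eq_div, le_div_iff₀' hκ]
  linarith

section Rectangle

variable {a b c : ℝ}

/-- The open rectangle with half-sides `a` and `b` centred at the origin. -/
def centeredRectangle (a b : ℝ) : Set ℂ :=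
  {z | |z.re| < a ∧ |z.im| < b}

theorem centeredRectangle_eq_reProdIm (a b : ℝ) :
    centeredRectangle a b = Ioo (-a) a ×ℂ Ioo (-b) b := by
  ext z
  simp only [centeredRectangle, mem_ofPred_eq, Complex.mem_reProdIm, mem_Ioo, abs_lt]

theorem isOpen_centeredRectangle (a b : ℝ) : IsOpen (centeredRectangle a b) := by
  rw [centeredRectangle_eq_reProdIm]
  exact isOpen_Ioo.reProdIm isOpen_Ioo

theorem isPreconnected_centeredRectangle (a b : ℝ) : IsPreconnected (centeredRectangle a b) := by
  rw [centeredRectangle_eq_reProdIm]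
  exact (((convex_Ioo (-a) a).linear_preimage Complex.reLm).inter
    ((convex_Ioo (-b) b).linear_preimage Complex.imLm)).isPreconnected

theorem isBounded_centeredRectangle (a b : ℝ) : IsBounded (centeredRectangle a b) := by
  rw [centeredRectangle_eq_reProdIm]
  exact (isBounded_Ioo (-a) a).reProdIm (isBounded_Ioo (-b) b)

theorem closure_centeredRectangle_subset {a' b' : ℝ} (ha : a < a') (hb : b < b') :
    closure (centeredRectangle a b) ⊆ centeredRectangle a' b' := by
  simp only [centeredRectangle_eq_reProdIm, Complex.closure_reProdIm]
  have hIoo {s t : ℝ} (h : s < t) : closure (Ioo (-s) s) ⊆ Ioo (-t) t :=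
    (closure_minimal Ioo_subset_Icc_self isClosed_Icc).trans (Icc_subset_Ioo (neg_lt_neg h) h)
  exact inter_subset_inter (preimage_mono (hIoo ha)) (preimage_mono (hIoo hb))

theorem smul_centeredRectangle (hc : 0 < c) (a b : ℝ) :
    (c : ℂ) • centeredRectangle a b = centeredRectangle (a * c) (b * c) := by
  ext z
  rw [mem_smul_set_iff_inv_smul_mem₀ (Complex.ofReal_ne_zero.2 hc.ne')]
  simp only [centeredRectangle, mem_ofPred_eq, smul_eq_mul, ← Complex.ofReal_inv,
    Complex.re_ofReal_mul, Complex.im_ofReal_mul, abs_mul, abs_inv, abs_of_pos hc,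
    inv_mul_lt_iff₀ hc, mul_comm c]

end Rectangle

theorem analyticOrderNatAt_eq_of_eventually_eq {f g : ℂ → ℂ} {z : ℂ} {n : ℕ}
    (hg : AnalyticAt ℂ g z) (hgz : g z ≠ 0) (hfg : ∀ᶠ w in 𝓝 z, f w = (w - z) ^ n * g w) :
    analyticOrderNatAt f z = n := by
  have hf : AnalyticAt ℂ f z := ((by fun_prop : AnalyticAt ℂ (fun w ↦ (w - z) ^ n * g w) z)).congr
    (hfg.mono fun _ h ↦ h.symm)
  rw [analyticOrderNatAt, hf.analyticOrderAt_eq_natCast.2 ⟨g, hg, hgz, hfg⟩, ENat.toNat_natCast]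

/-- zero-counting estimate. For every `τ ∈ (0,1)` and aspect ratio `ρ > 0`
there is a constant `C > 0`, depending only on `τ` and `ρ`, such that for every pair of
rectangles `Π = {|Re z| < a, |Im z| < c}`, `Π' = {|Re z| < a(1−τ), |Im z| < c(1−τ)}` with
`a = ρ·c`, and every bounded holomorphic `f` on `Π` which is not identically zero, the number
of zeros of `f` in `Π'`, counted with multiplicity, is at most `C(ln M − ln M')`, where
`M = sup_Π |f|` and `M' = sup_{Π'} |f|`.  (Multiplicities are recorded by any function
`ord` such that `f(w) = (w − z)^{ord z} g(w)` with `g` analytic and nonvanishing at `z`;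
the number of zeros counted with multiplicity is the supremum over finite sets of zeros
of the sums of their orders.) -/
theorem stmt6 (τ ρ : ℝ) (hτ : τ ∈ Set.Ioo (0 : ℝ) 1) (hρ : 0 < ρ) :
    ∃ C : ℝ, 0 < C ∧
      ∀ a c : ℝ, 0 < c → a = ρ * c →
      ∀ f : ℂ → ℂ,
        DifferentiableOn ℂ f {z : ℂ | |z.re| < a ∧ |z.im| < c} →
        BddAbove ((fun z => ‖f z‖) '' {z : ℂ | |z.re| < a ∧ |z.im| < c}) →
        (∃ z₀ : ℂ, (|z₀.re| < a ∧ |z₀.im| < c) ∧ f z₀ ≠ 0) →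
        ∀ ord : ℂ → ℕ,
          (∀ z : ℂ, (|z.re| < a * (1 - τ) ∧ |z.im| < c * (1 - τ)) → f z = 0 →
            1 ≤ ord z ∧ ∃ g : ℂ → ℂ, AnalyticAt ℂ g z ∧ g z ≠ 0 ∧
              ∀ᶠ w in nhds z, f w = (w - z) ^ ord z * g w) →
          ∀ Z : Finset ℂ,
            (∀ z ∈ Z, (|z.re| < a * (1 - τ) ∧ |z.im| < c * (1 - τ)) ∧ f z = 0) →
            (∑ z ∈ Z, (ord z : ℝ)) ≤
              C * (Real.log (sSup ((fun z => ‖f z‖) '' {z : ℂ | |z.re| < a ∧ |z.im| < c})) -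
                Real.log (sSup ((fun z => ‖f z‖) ''
                  {z : ℂ | |z.re| < a * (1 - τ) ∧ |z.im| < c * (1 - τ)}))) := by
  have hσ : 0 < 1 - τ := sub_pos.2 hτ.2
  have hσ_lt : 1 - τ < 1 := sub_lt_self 1 hτ.1
  have hρσ : 0 < ρ * (1 - τ) := mul_pos hρ hσ
  obtain ⟨C, hC, hbound⟩ := stmt6_general (isOpen_centeredRectangle ρ 1)
    (isPreconnected_centeredRectangle ρ 1) (isOpen_centeredRectangle (ρ * (1 - τ)) (1 - τ))
    ⟨0, by simp [centeredRectangle, hσ, hρσ]⟩ (isBounded_centeredRectangle _ _)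
    (closure_centeredRectangle_subset (mul_lt_of_lt_one_right hρ hσ_lt) hσ_lt)
  refine ⟨C, hC, fun a c hc hac f hf hbdd hne ord hord Z hZ ↦ ?_⟩
  have hord_eq : ∀ z ∈ Z, analyticOrderNatAt f z = ord z := fun z hz ↦
    let ⟨_, _, hg, hgz, hfg⟩ := hord z (hZ z hz).1 (hZ z hz).2
    analyticOrderNatAt_eq_of_eventually_eq hg hgz hfg
  have hscaled := hbound c (Complex.ofReal_ne_zero.2 hc.ne') f
  simp only [smul_centeredRectangle hc, one_mul, mul_right_comm ρ (1 - τ) c, mul_comm (1 - τ) c,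
    ← hac] at hscaled
  have hle := hscaled hf hbdd hne Z fun z hz ↦ (hZ z hz).1
  rwa [Finset.sum_congr rfl fun z hz ↦ congrArg Nat.cast (hord_eq z hz)] at hle
end

section
/- Let p ∈ (0,1) and h > 0. Then the function F₁(t) = ∫₁^∞ ξ^p / ((t − ξ)² + h²ξ^{2p}) dξ is well defined (the improper integral converges) for every t ≥ 0, and F₁ is bounded on [0, ∞). -/
open MeasureTheory

/-!
Up to the factor `π / |h|`, the integrand at `ξ` is the Cauchy density centred at `t` whose scale
`|h| ξ ^ p` depends on `ξ`. Where `|t - ξ| < ξ / 2` the points `t` and `ξ` agree up to a factor `2`,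
so the scale may be frozen at a multiple of `|h| t ^ p`, at the cost of the constant `4 ^ |p|`;
whatever the frozen scale, the Cauchy density has mass at most `1`. Where `ξ / 2 ≤ |t - ξ|` the
integrand is at most `4 ξ ^ (p - 2)`, which is integrable at infinity because `p < 1`.
-/

open ProbabilityTheory
open scoped NNReal Real

section CauchyDensity

variable {t x : ℝ} {γ δ C : ℝ≥0}

lemma cauchyPDFReal_nonneg : 0 ≤ cauchyPDFReal t γ x := by
  rw [cauchyPDFReal_def]
  positivity

lemma integral_cauchyPDFReal_le_one : ∫ x, cauchyPDFReal t γ x ≤ 1 := by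
  rcases eq_or_ne γ 0 with rfl | hγ
  · simp
  · exact (integral_cauchyPDFReal_eq_one t hγ).le

lemma cauchyPDFReal_le_mul_cauchyPDFReal (hγδ : γ ≤ δ) (hδγ : δ ≤ C * γ) :
    cauchyPDFReal t δ x ≤ C * cauchyPDFReal t γ x := by
  rcases eq_or_ne γ 0 with rfl | hγ
  · obtain rfl : δ = 0 := by simpa using hδγ
    simp
  · have hδγ' : (δ : ℝ) ≤ C * γ := mod_cast hδγ
    rw [cauchyPDFReal_def, cauchyPDFReal_def]
    calc π⁻¹ * δ * ((x - t) ^ 2 + δ ^ 2)⁻¹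
        ≤ π⁻¹ * (C * γ) * ((x - t) ^ 2 + γ ^ 2)⁻¹ := by gcongr
      _ = C * (π⁻¹ * γ * ((x - t) ^ 2 + γ ^ 2)⁻¹) := by ring

end CauchyDensity

lemma rpow_le_rpow_abs_mul_rpow {a b c : ℝ≥0} {p : ℝ} (ha : 0 < a) (hab : a ≤ c * b)
    (hba : b ≤ c * a) : a ^ p ≤ c ^ |p| * b ^ p := by
  rcases le_total 0 p with hp | hp
  · rw [abs_of_nonneg hp, ← NNReal.mul_rpow]
    exact NNReal.rpow_le_rpow hab hp
  · obtain ⟨hc, hb⟩ : 0 < c ∧ 0 < b := by simpa using ha.trans_le hab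
    rw [abs_of_nonpos hp]
    calc a ^ p = c ^ (-p) * (c * a) ^ p := by
          rw [NNReal.mul_rpow, ← mul_assoc, ← NNReal.rpow_add hc.ne', neg_add_cancel,
            NNReal.rpow_zero, one_mul]
      _ ≤ c ^ (-p) * b ^ p := by
          gcongr c ^ (-p) * ?_
          exact NNReal.rpow_le_rpow_of_nonpos hb hba hp

/-- The scale `|h| x ^ p` of the Cauchy density that gives the integrand at the point `x`. It is
also evaluated at the centre `t`, which may be negative; `x` is then replaced by `0`. -/
noncomputable def powerScale (h p x : ℝ) : ℝ≥0 :=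
  ‖h‖₊ * x.toNNReal ^ p

section Integrand

variable {a h p t x : ℝ}

lemma powerScale_le_two_rpow_mul_powerScale {y : ℝ} (hx : 0 < x) (hxy : x ≤ 2 * y)
    (hyx : y ≤ 2 * x) : powerScale h p x ≤ 2 ^ |p| * powerScale h p y := by
  have hpow : x.toNNReal ^ p ≤ 2 ^ |p| * y.toNNReal ^ p := by
    refine rpow_le_rpow_abs_mul_rpow (Real.toNNReal_pos.2 hx) ?_ ?_
    · simpa [Real.toNNReal_mul] using Real.toNNReal_le_toNNReal hxy
    · simpa [Real.toNNReal_mul] using Real.toNNReal_le_toNNReal hyx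
  calc powerScale h p x ≤ ‖h‖₊ * (2 ^ |p| * y.toNNReal ^ p) := mul_le_mul_right hpow _
    _ = 2 ^ |p| * powerScale h p y := mul_left_comm _ _ _

lemma div_sq_add_sq_eq_mul_cauchyPDFReal (hh : h ≠ 0) (hx : 0 < x) :
    x ^ p / ((t - x) ^ 2 + h ^ 2 * x ^ (2 * p)) =
      π / |h| * cauchyPDFReal t (powerScale h p x) x := by
  have hscale : (powerScale h p x : ℝ) = |h| * x ^ p := by simp [powerScale, hx.le]
  have hsq : x ^ (2 * p) = (x ^ p) ^ 2 := by
    rw [mul_comm]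
    exact Real.rpow_mul_natCast hx.le p 2
  rw [cauchyPDFReal_def, hscale, hsq, mul_pow, sq_abs, ← sub_sq_comm t x]
  field

lemma div_sq_add_sq_le_rpow (hx : 0 < x) (hfar : x / 2 ≤ |t - x|) :
    x ^ p / ((t - x) ^ 2 + h ^ 2 * x ^ (2 * p)) ≤ 4 * x ^ (p - 2) := by
  have hdenom : (x / 2) ^ 2 ≤ (t - x) ^ 2 + h ^ 2 * x ^ (2 * p) := by
    have hdist : (x / 2) ^ 2 ≤ (t - x) ^ 2 := by
      rw [← sq_abs (t - x)]
      gcongr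
    exact le_add_of_le_of_nonneg hdist (by positivity)
  calc x ^ p / ((t - x) ^ 2 + h ^ 2 * x ^ (2 * p)) ≤ x ^ p / (x / 2) ^ 2 := by gcongr
    _ = 4 * x ^ (p - 2) := by
        rw [Real.rpow_sub hx, Real.rpow_two]
        field

lemma div_sq_add_sq_le_cauchyPDFReal (hh : h ≠ 0) (hnear : |t - x| < x / 2) :
    x ^ p / ((t - x) ^ 2 + h ^ 2 * x ^ (2 * p)) ≤
      4 ^ |p| * π / |h| * cauchyPDFReal t (powerScale h p t / 2 ^ |p|) x := by
  obtain ⟨htx, hxt⟩ := abs_lt.1 hnear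
  have hx : 0 < x := by linarith
  have ht : 0 < t := by linarith
  have hlower : powerScale h p t / 2 ^ |p| ≤ powerScale h p x :=
    NNReal.div_le_of_le_mul' (powerScale_le_two_rpow_mul_powerScale ht (by linarith) (by linarith))
  have hupper : powerScale h p x ≤ 4 ^ |p| * (powerScale h p t / 2 ^ |p|) := by
    have hfour : (4 : ℝ≥0) ^ |p| = 2 ^ |p| * 2 ^ |p| := by
      rw [← NNReal.mul_rpow]
      norm_num
    calc powerScale h p x ≤ 2 ^ |p| * powerScale h p t :=
          powerScale_le_two_rpow_mul_powerScale hx (by linarith) (by linarith)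
      _ = 4 ^ |p| * (powerScale h p t / 2 ^ |p|) := by
          rw [hfour]
          field
  calc x ^ p / ((t - x) ^ 2 + h ^ 2 * x ^ (2 * p))
      = π / |h| * cauchyPDFReal t (powerScale h p x) x := div_sq_add_sq_eq_mul_cauchyPDFReal hh hx
    _ ≤ π / |h| * ((4 ^ |p| : ℝ≥0) * cauchyPDFReal t (powerScale h p t / 2 ^ |p|) x) := by
        gcongr
        exact cauchyPDFReal_le_mul_cauchyPDFReal hlower hupper
    _ = 4 ^ |p| * π / |h| * cauchyPDFReal t (powerScale h p t / 2 ^ |p|) x := by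
        push_cast
        ring

/-- An integrable majorant of the integrand whose integral is bounded uniformly in `t`: the tail
bound, which governs the region far from `t`, plus the Cauchy density of frozen scale, which governs
the region near `t`. -/
noncomputable def peakMajorant (h p t x : ℝ) : ℝ :=
  4 * x ^ (p - 2) + 4 ^ |p| * π / |h| * cauchyPDFReal t (powerScale h p t / 2 ^ |p|) x

lemma div_sq_add_sq_le_peakMajorant (hh : h ≠ 0) (hx : 0 < x) :
    x ^ p / ((t - x) ^ 2 + h ^ 2 * x ^ (2 * p)) ≤ peakMajorant h p t x := by
  rcases le_or_gt (x / 2) |t - x| with hfar | hnear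
  · exact le_add_of_le_of_nonneg (div_sq_add_sq_le_rpow hx hfar)
      (mul_nonneg (by positivity) cauchyPDFReal_nonneg)
  · exact le_add_of_nonneg_of_le (by positivity) (div_sq_add_sq_le_cauchyPDFReal hh hnear)

lemma integrableOn_Ici_rpow_sub_two (hp : p < 1) (ha : 0 < a) :
    IntegrableOn (fun x : ℝ => x ^ (p - 2)) (Set.Ici a) :=
  Iff.mpr integrableOn_Ici_iff_integrableOn_Ioi (integrableOn_Ioi_rpow_of_lt (by linarith) ha)

lemma integral_Ici_rpow_sub_two (hp : p < 1) (ha : 0 < a) :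
    ∫ x in Set.Ici a, x ^ (p - 2) = a ^ (p - 1) / (1 - p) := by
  rw [integral_Ici_eq_integral_Ioi, integral_Ioi_rpow_of_lt (by linarith) ha,
    show p - 2 + 1 = p - 1 by ring, ← neg_sub 1 p, neg_div_neg_eq]

lemma integrableOn_peakMajorant (hp : p < 1) (ha : 0 < a) :
    IntegrableOn (peakMajorant h p t) (Set.Ici a) :=
  ((integrableOn_Ici_rpow_sub_two hp ha).const_mul 4).add
    ((integrable_cauchyPDFReal t).integrableOn.const_mul _)

lemma integral_peakMajorant_le (hp : p < 1) (ha : 0 < a) :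
    ∫ x in Set.Ici a, peakMajorant h p t x ≤
      4 * a ^ (p - 1) / (1 - p) + 4 ^ |p| * π / |h| := by
  have hmass : ∫ x in Set.Ici a, cauchyPDFReal t (powerScale h p t / 2 ^ |p|) x ≤ 1 :=
    (setIntegral_le_integral (integrable_cauchyPDFReal t)
      (ae_of_all _ fun _ => cauchyPDFReal_nonneg)).trans integral_cauchyPDFReal_le_one
  unfold peakMajorant
  rw [integral_add ((integrableOn_Ici_rpow_sub_two hp ha).const_mul 4)
    ((integrable_cauchyPDFReal t).integrableOn.const_mul _), integral_const_mul,
    integral_const_mul, integral_Ici_rpow_sub_two hp ha, ← mul_div_assoc]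
  gcongr
  exact mul_le_of_le_one_right (by positivity) hmass

lemma integrableOn_div_sq_add_sq (hp : p < 1) (hh : h ≠ 0) (ha : 0 < a) :
    IntegrableOn (fun x : ℝ => x ^ p / ((t - x) ^ 2 + h ^ 2 * x ^ (2 * p))) (Set.Ici a) := by
  refine (integrableOn_peakMajorant (h := h) (t := t) hp ha).mono'
    (Measurable.aestronglyMeasurable (by fun_prop)) ?_
  filter_upwards [ae_restrict_mem measurableSet_Ici] with x hx
  have hx0 : 0 < x := ha.trans_le hx
  rw [Real.norm_of_nonneg (by positivity)]
  exact div_sq_add_sq_le_peakMajorant hh hx0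

end Integrand

theorem stmt10_general {p h a : ℝ} (hp : p < 1) (hh : h ≠ 0) (ha : 0 < a) (t : ℝ) :
    IntegrableOn (fun ξ : ℝ => ξ ^ p / ((t - ξ) ^ 2 + h ^ 2 * ξ ^ (2 * p))) (Set.Ici a) ∧
    ∫ ξ in Set.Ici a, ξ ^ p / ((t - ξ) ^ 2 + h ^ 2 * ξ ^ (2 * p)) ≤
      4 * a ^ (p - 1) / (1 - p) + 4 ^ |p| * π / |h| := by
  have hint := integrableOn_div_sq_add_sq (t := t) hp hh ha
  refine ⟨hint, ?_⟩
  calc ∫ ξ in Set.Ici a, ξ ^ p / ((t - ξ) ^ 2 + h ^ 2 * ξ ^ (2 * p))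
      ≤ ∫ ξ in Set.Ici a, peakMajorant h p t ξ :=
        setIntegral_mono_on hint (integrableOn_peakMajorant hp ha) measurableSet_Ici
          fun ξ hξ => div_sq_add_sq_le_peakMajorant hh (ha.trans_le hξ)
    _ ≤ 4 * a ^ (p - 1) / (1 - p) + 4 ^ |p| * π / |h| := integral_peakMajorant_le hp ha

/-- For `p ∈ (0,1)` and `h > 0`, the function
`F₁(t) = ∫₁^∞ ξ^p / ((t − ξ)² + h²ξ^{2p}) dξ` is well defined (the integrand is
integrable on `[1, ∞)`) for every `t ≥ 0`, and `F₁` is bounded on `[0, ∞)`. -/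
theorem stmt10 (p h : ℝ) (hp : p ∈ Set.Ioo (0 : ℝ) 1) (hh : 0 < h) :
    (∀ t : ℝ, 0 ≤ t →
      IntegrableOn (fun ξ : ℝ => ξ ^ p / ((t - ξ) ^ 2 + h ^ 2 * ξ ^ (2 * p)))
        (Set.Ici (1 : ℝ))) ∧
    ∃ C : ℝ, ∀ t : ℝ, 0 ≤ t →
      (∫ ξ in Set.Ici (1 : ℝ), ξ ^ p / ((t - ξ) ^ 2 + h ^ 2 * ξ ^ (2 * p))) ≤ C :=
  have hgen := stmt10_general hp.2 hh.ne' one_pos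
  ⟨fun t _ => (hgen t).1, _, fun t _ => (hgen t).2⟩
end

section
/- Let p ∈ (0,1) and h > 0. Then the function F₂(t) = ∫₁^∞ t² ξ^{p−2} / ((t − ξ)² + h²ξ^{2p}) dξ is well defined (the improper integral converges) for every t ≥ 0, and F₂ is bounded on [0, ∞). Moreover, for every t ≥ 2^{1/(1−p)} one has ∫₁^t t² ξ^{p−2} / ((t − ξ)² + h²ξ^{2p}) dξ ≤ 4/(1−p) + 4 + 4^p/h². -/
open MeasureTheory

/-!
Away from `ξ ≈ t`, where `|t| ≤ 2|t - ξ|`, the integrand is at most `4ξ^{p-2}`. On a window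
`u ≤ ξ ≤ cu` around `t` the power `ξ^p` varies by a factor of at most `c^{|p|}`; using
`t² ≤ 2(t - ξ)² + 2ξ²`, the integrand is there at most `2ξ^{p-2}` plus `2πc^{|p|}/|h|` times the
density of a Cauchy distribution centred at `t`. The scale of that distribution depends on `t`, its
mass does not, so integrating the sum of the two majorants gives a bound uniform in `t`. On `[1, t]`
only half of the mass is used, the window is `[t/2, t]`, and
`π·2^{|p|}/|h| ≤ 4·2^{|p|}/|h| ≤ 4 + 4^{|p|}/h²`.
-/

open ProbabilityTheory Real Set

open scoped NNReal

lemma setIntegral_cauchyPDFReal_le_one (x₀ : ℝ) {γ : ℝ≥0} (hγ : γ ≠ 0) (s : Set ℝ) :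
    ∫ x in s, cauchyPDFReal x₀ γ x ≤ 1 :=
  integral_cauchyPDFReal_eq_one x₀ hγ ▸ setIntegral_le_integral (integrable_cauchyPDFReal x₀)
    (.of_forall fun x ↦ (cauchyPDF_pos x₀ hγ x).le)

lemma intervalIntegral_cauchyPDFReal_le_half (a x₀ : ℝ) {γ : ℝ≥0} (hγ : γ ≠ 0) :
    ∫ x in a..x₀, cauchyPDFReal x₀ γ x ≤ 1 / 2 := by
  have hγ' : (γ : ℝ) ≠ 0 := NNReal.coe_ne_zero.mpr hγ
  calc ∫ x in a..x₀, cauchyPDFReal x₀ γ x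
      = π⁻¹ * γ * ∫ x in a - x₀..0, ((γ : ℝ) ^ 2 + x ^ 2)⁻¹ := by
        simp only [cauchyPDFReal_def, intervalIntegral.integral_const_mul,
          intervalIntegral.integral_comp_sub_right (fun x ↦ (x ^ 2 + (γ : ℝ) ^ 2)⁻¹), sub_self,
          add_comm]
    _ = π⁻¹ * -arctan ((a - x₀) / γ) := by
        rw [integral_inv_sq_add_sq hγ', zero_div, arctan_zero]
        field_simp
        ring
    _ ≤ π⁻¹ * (π / 2) := by
        gcongr
        linarith [neg_pi_div_two_lt_arctan ((a - x₀) / γ)]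
    _ = 1 / 2 := by field_simp

lemma exists_rpow_mem_Icc {u c : ℝ} (p : ℝ) (hu : 0 < u) (hc : 0 < c) :
    ∃ s, 0 < s ∧ ∀ x ∈ Icc u (c * u), x ^ p ∈ Icc s (c ^ |p| * s) := by
  rcases le_total 0 p with hp | hp
  · refine ⟨u ^ p, by positivity, fun x hx ↦ ⟨rpow_le_rpow hu.le hx.1 hp, ?_⟩⟩
    rw [abs_of_nonneg hp, ← mul_rpow hc.le hu.le]
    exact rpow_le_rpow (hu.le.trans hx.1) hx.2 hp
  · refine ⟨(c * u) ^ p, by positivity, fun x hx ↦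
      ⟨rpow_le_rpow_of_nonpos (hu.trans_le hx.1) hx.2 hp, ?_⟩⟩
    rw [abs_of_nonpos hp, mul_rpow hc.le hu.le, ← mul_assoc, ← rpow_add hc, neg_add_cancel,
      rpow_zero, one_mul]
    exact rpow_le_rpow_of_nonpos hu hx.1 hp

lemma integrableOn_Ici_rpow_of_lt {a c : ℝ} (ha : a < -1) (hc : 0 < c) :
    IntegrableOn (fun x : ℝ ↦ x ^ a) (Ici c) := by
  rw [integrableOn_Ici_iff_integrableOn_Ioi]
  exact integrableOn_Ioi_rpow_of_lt ha hc

lemma setIntegral_rpow_le {a c : ℝ} (ha : a < -1) (hc : 0 < c) {S : Set ℝ} (hS : S ⊆ Ici c) :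
    ∫ x in S, x ^ a ≤ -c ^ (a + 1) / (a + 1) := by
  have hnonneg : ∀ x ∈ Ici c, 0 ≤ x ^ a := fun x hx ↦ rpow_nonneg (hc.le.trans hx) a
  calc ∫ x in S, x ^ a
      ≤ ∫ x in Ici c, x ^ a := setIntegral_mono_set (integrableOn_Ici_rpow_of_lt ha hc)
        (ae_restrict_of_forall_mem measurableSet_Ici hnonneg) hS.eventuallyLE
    _ = -c ^ (a + 1) / (a + 1) := by
        rw [integral_Ici_eq_integral_Ioi, integral_Ioi_rpow_of_lt ha hc]

/-- The integrand of `F₂(t)`, as a function of `ξ`. -/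
noncomputable def f₂Integrand (p h t ξ : ℝ) : ℝ :=
  t ^ 2 * ξ ^ (p - 2) / ((t - ξ) ^ 2 + h ^ 2 * ξ ^ (2 * p))

section Pointwise

variable {p h t ξ : ℝ}

lemma f₂Integrand_nonneg (hξ : 0 ≤ ξ) : 0 ≤ f₂Integrand p h t ξ := by
  unfold f₂Integrand
  positivity

lemma f₂Integrand_le_of_abs_le (hξ : 0 < ξ) (ht : |t| ≤ 2 * |t - ξ|) :
    f₂Integrand p h t ξ ≤ 4 * ξ ^ (p - 2) := by
  have hsq : t ^ 2 ≤ (2 * (t - ξ)) ^ 2 := sq_le_sq.mpr (by rwa [abs_mul, abs_two])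
  refine div_le_of_le_mul₀ (by positivity) (by positivity) ?_
  calc t ^ 2 * ξ ^ (p - 2) ≤ 4 * ((t - ξ) ^ 2 + h ^ 2 * ξ ^ (2 * p)) * ξ ^ (p - 2) := by
        gcongr
        linarith [show 0 ≤ h ^ 2 * ξ ^ (2 * p) by positivity]
    _ = 4 * ξ ^ (p - 2) * ((t - ξ) ^ 2 + h ^ 2 * ξ ^ (2 * p)) := by ring

lemma f₂Integrand_le_add (hξ : 0 < ξ) :
    f₂Integrand p h t ξ ≤
      2 * ξ ^ (p - 2) + 2 * (ξ ^ p / ((t - ξ) ^ 2 + h ^ 2 * ξ ^ (2 * p))) := by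
  have hpow : ξ ^ (p - 2) * ξ ^ 2 = ξ ^ p := by
    rw [← rpow_natCast ξ 2, ← rpow_add hξ, Nat.cast_ofNat, sub_add_cancel]
  have hsq : t ^ 2 ≤ 2 * (t - ξ) ^ 2 + 2 * ξ ^ 2 := by linarith [sq_nonneg (t - 2 * ξ)]
  have hfrac : (t - ξ) ^ 2 / ((t - ξ) ^ 2 + h ^ 2 * ξ ^ (2 * p)) ≤ 1 :=
    div_le_one_of_le₀ (le_add_of_nonneg_right (by positivity)) (by positivity)
  calc f₂Integrand p h t ξ
      ≤ (2 * (t - ξ) ^ 2 + 2 * ξ ^ 2) * ξ ^ (p - 2) /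
          ((t - ξ) ^ 2 + h ^ 2 * ξ ^ (2 * p)) := by
        unfold f₂Integrand
        gcongr
    _ = 2 * ξ ^ (p - 2) * ((t - ξ) ^ 2 / ((t - ξ) ^ 2 + h ^ 2 * ξ ^ (2 * p))) +
          2 * (ξ ^ p / ((t - ξ) ^ 2 + h ^ 2 * ξ ^ (2 * p))) := by
        rw [← hpow]
        ring
    _ ≤ 2 * ξ ^ (p - 2) + 2 * (ξ ^ p / ((t - ξ) ^ 2 + h ^ 2 * ξ ^ (2 * p))) :=
        add_le_add (mul_le_of_le_one_right (by positivity) hfrac) le_rfl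

lemma rpow_div_le_cauchyPDFReal {s C : ℝ} {γ : ℝ≥0} (hs : 0 < s) (hh : h ≠ 0) (hγ : γ = |h| * s)
    (hξ : 0 ≤ ξ) (hξp : ξ ^ p ∈ Icc s (C * s)) :
    ξ ^ p / ((t - ξ) ^ 2 + h ^ 2 * ξ ^ (2 * p)) ≤ π * C / |h| * cauchyPDFReal t γ ξ := by
  calc ξ ^ p / ((t - ξ) ^ 2 + h ^ 2 * ξ ^ (2 * p))
      ≤ C * s / ((t - ξ) ^ 2 + h ^ 2 * s ^ 2) := by
        rw [mul_comm 2 p, rpow_mul hξ, rpow_ofNat]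
        have hCs : 0 ≤ C * s := hs.le.trans (hξp.1.trans hξp.2)
        gcongr
        exacts [hξp.2, hξp.1]
    _ = π * C / |h| * cauchyPDFReal t γ ξ := by
        rw [cauchyPDFReal_def, hγ, mul_pow, sq_abs, ← neg_sub t ξ, neg_sq]
        field_simp

/-- The pointwise majorant of `f₂Integrand p h t`: the integrable tail `4ξ^{p-2}` plus a Cauchy
density centred at `t` whose weight does not involve `t`. -/
noncomputable def f₂Majorant (p h c t : ℝ) (γ : ℝ≥0) (ξ : ℝ) : ℝ :=
  4 * ξ ^ (p - 2) + 2 * π * c ^ |p| / |h| * cauchyPDFReal t γ ξ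

lemma exists_f₂Integrand_le_f₂Majorant {u c : ℝ} (p : ℝ) (hh : h ≠ 0) (hu : 0 < u) (hc : 0 < c) :
    ∃ γ : ℝ≥0, γ ≠ 0 ∧ ∀ t ξ, 0 < ξ → (|t| ≤ 2 * |t - ξ| ∨ ξ ∈ Icc u (c * u)) →
      f₂Integrand p h t ξ ≤ f₂Majorant p h c t γ ξ := by
  obtain ⟨s, hs, hpow⟩ := exists_rpow_mem_Icc p hu hc
  have hγ : 0 < |h| * s := mul_pos (abs_pos.mpr hh) hs
  have hγ₀ : (⟨|h| * s, hγ.le⟩ : ℝ≥0) ≠ 0 := NNReal.coe_ne_zero.mp hγ.ne'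
  refine ⟨_, hγ₀, fun t ξ hξ hcases ↦ ?_⟩
  unfold f₂Majorant
  rcases hcases with hfar | hnear
  · have := cauchyPDF_pos t hγ₀ ξ
    exact (f₂Integrand_le_of_abs_le hξ hfar).trans (le_add_of_nonneg_right (by positivity))
  · calc f₂Integrand p h t ξ
        ≤ 2 * ξ ^ (p - 2) + 2 * (ξ ^ p / ((t - ξ) ^ 2 + h ^ 2 * ξ ^ (2 * p))) :=
          f₂Integrand_le_add hξ
      _ ≤ 4 * ξ ^ (p - 2) + 2 * (π * c ^ |p| / |h| * cauchyPDFReal t ⟨|h| * s, hγ.le⟩ ξ) := by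
          gcongr
          · norm_num
          · exact rpow_div_le_cauchyPDFReal hs hh rfl hξ.le (hpow ξ hnear)
      _ = _ := by ring

lemma exists_forall_abs_le_or_mem_Icc (t : ℝ) :
    ∃ u, 0 < u ∧ ∀ ξ, 0 ≤ ξ → |t| ≤ 2 * |t - ξ| ∨ ξ ∈ Icc u (4 * u) := by
  rcases le_or_gt t 0 with ht | ht
  · refine ⟨1, one_pos, fun ξ hξ ↦ .inl ?_⟩
    rw [abs_of_nonpos ht, abs_of_nonpos (by linarith)]
    linarith
  · refine ⟨t / 2, by positivity, fun ξ _ ↦ or_iff_not_imp_left.mpr fun hfar ↦ ?_⟩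
    rw [abs_of_pos ht] at hfar
    constructor <;> linarith [le_abs_self (t - ξ), neg_abs_le (t - ξ)]

end Pointwise

section Integration

variable {p h : ℝ}

lemma integrableOn_f₂Majorant (hp : p < 1) (h c t : ℝ) (γ : ℝ≥0) :
    IntegrableOn (f₂Majorant p h c t γ) (Ici 1) :=
  .add (.const_mul (integrableOn_Ici_rpow_of_lt (by linarith) one_pos) 4)
    (.const_mul (integrable_cauchyPDFReal t).integrableOn _)

lemma integrableOn_f₂Integrand (hp : p < 1) (hh : h ≠ 0) (t : ℝ) :
    IntegrableOn (f₂Integrand p h t) (Ici 1) := by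
  obtain ⟨u, hu, hwin⟩ := exists_forall_abs_le_or_mem_Icc t
  obtain ⟨γ, -, hle⟩ := exists_f₂Integrand_le_f₂Majorant p hh hu four_pos
  have hmeas : Measurable (f₂Integrand p h t) := by
    unfold f₂Integrand
    fun_prop
  refine (integrableOn_f₂Majorant hp h 4 t γ).mono' hmeas.aestronglyMeasurable
    (ae_restrict_of_forall_mem measurableSet_Ici fun ξ hξ ↦ ?_)
  have hξ0 : 0 < ξ := one_pos.trans_le hξ
  rw [norm_of_nonneg (f₂Integrand_nonneg hξ0.le)]
  exact hle t ξ hξ0 (hwin ξ hξ0.le)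

lemma setIntegral_f₂Integrand_le (hp : p < 1) (hh : h ≠ 0) {t u c M : ℝ} {S : Set ℝ}
    (hSm : MeasurableSet S) (hS : S ⊆ Ici 1) (hu : 0 < u) (hc : 0 < c)
    (hwin : ∀ ξ ∈ S, |t| ≤ 2 * |t - ξ| ∨ ξ ∈ Icc u (c * u))
    (hM : ∀ γ : ℝ≥0, γ ≠ 0 → ∫ ξ in S, cauchyPDFReal t γ ξ ≤ M) :
    ∫ ξ in S, f₂Integrand p h t ξ ≤ 4 / (1 - p) + 2 * π * c ^ |p| / |h| * M := by
  obtain ⟨γ, hγ, hle⟩ := exists_f₂Integrand_le_f₂Majorant p hh hu hc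
  have hpow : IntegrableOn (fun ξ : ℝ ↦ ξ ^ (p - 2)) S :=
    (integrableOn_Ici_rpow_of_lt (by linarith) one_pos).mono_set hS
  calc ∫ ξ in S, f₂Integrand p h t ξ
      ≤ ∫ ξ in S, f₂Majorant p h c t γ ξ :=
        setIntegral_mono_on ((integrableOn_f₂Integrand hp hh t).mono_set hS)
          ((integrableOn_f₂Majorant hp h c t γ).mono_set hS) hSm
          fun ξ hξ ↦ hle t ξ (one_pos.trans_le (hS hξ)) (hwin ξ hξ)
    _ = 4 * (∫ ξ in S, ξ ^ (p - 2)) + 2 * π * c ^ |p| / |h| * ∫ ξ in S, cauchyPDFReal t γ ξ := by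
        unfold f₂Majorant
        rw [integral_add (hpow.const_mul 4)
          ((integrable_cauchyPDFReal t).integrableOn.const_mul _), integral_const_mul,
          integral_const_mul]
    _ ≤ 4 * (-1 ^ (p - 2 + 1) / (p - 2 + 1)) + 2 * π * c ^ |p| / |h| * M := by
        gcongr
        exacts [setIntegral_rpow_le (by linarith) one_pos hS, hM γ hγ]
    _ = 4 / (1 - p) + 2 * π * c ^ |p| / |h| * M := by
        rw [one_rpow, show p - 2 + 1 = -(1 - p) by ring, neg_div_neg_eq, mul_one_div]

lemma setIntegral_Ici_f₂Integrand_le (hp : p < 1) (hh : h ≠ 0) (t : ℝ) :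
    ∫ ξ in Ici 1, f₂Integrand p h t ξ ≤ 4 / (1 - p) + 2 * π * 4 ^ |p| / |h| := by
  obtain ⟨u, hu, hwin⟩ := exists_forall_abs_le_or_mem_Icc t
  simpa only [mul_one] using setIntegral_f₂Integrand_le hp hh measurableSet_Ici subset_rfl hu
    four_pos (fun ξ hξ ↦ hwin ξ (zero_le_one.trans hξ))
    fun γ hγ ↦ setIntegral_cauchyPDFReal_le_one t hγ _

lemma integral_f₂Integrand_le (hp : p < 1) (hh : h ≠ 0) {t : ℝ} (ht : 1 ≤ t) :
    ∫ ξ in 1..t, f₂Integrand p h t ξ ≤ 4 / (1 - p) + π * (2 ^ |p| / |h|) := by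
  have hwin : ∀ ξ ∈ Ioc 1 t, |t| ≤ 2 * |t - ξ| ∨ ξ ∈ Icc (t / 2) (2 * (t / 2)) := by
    intro ξ hξ
    rw [abs_of_pos (by linarith), abs_of_nonneg (sub_nonneg.mpr hξ.2), mem_Icc]
    rcases le_total ξ (t / 2) with h | h
    · exact .inl (by linarith)
    · exact .inr ⟨h, by linarith [hξ.2]⟩
  have hM : ∀ γ : ℝ≥0, γ ≠ 0 → ∫ ξ in Ioc 1 t, cauchyPDFReal t γ ξ ≤ 1 / 2 := by
    intro γ hγ
    rw [← intervalIntegral.integral_of_le ht]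
    exact intervalIntegral_cauchyPDFReal_le_half 1 t hγ
  rw [intervalIntegral.integral_of_le ht]
  refine (setIntegral_f₂Integrand_le hp hh measurableSet_Ioc
    (fun ξ hξ ↦ hξ.1.le) (by linarith) two_pos hwin hM).trans_eq ?_
  ring

end Integration

lemma pi_mul_le_four_add_sq {x : ℝ} (hx : 0 ≤ x) : π * x ≤ 4 + x ^ 2 :=
  calc π * x ≤ 4 * x := by gcongr; exact pi_le_four
    _ ≤ 4 + x ^ 2 := by linarith [sq_nonneg (x - 2)]

theorem stmt11_general (p h : ℝ) (hp : p < 1) (hh : h ≠ 0) :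
    (∀ t : ℝ, IntegrableOn (f₂Integrand p h t) (Ici 1)) ∧
    (∀ t : ℝ, ∫ ξ in Ici 1, f₂Integrand p h t ξ ≤ 4 / (1 - p) + 2 * π * 4 ^ |p| / |h|) ∧
    ∀ t : ℝ, 1 ≤ t →
      ∫ ξ in 1..t, f₂Integrand p h t ξ ≤ 4 / (1 - p) + 4 + 4 ^ |p| / h ^ 2 := by
  refine ⟨integrableOn_f₂Integrand hp hh, setIntegral_Ici_f₂Integrand_le hp hh, fun t ht ↦ ?_⟩
  have hsq : ((2 : ℝ) ^ |p| / |h|) ^ 2 = 4 ^ |p| / h ^ 2 := by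
    rw [div_pow, sq_abs, rpow_pow_comm zero_le_two]
    norm_num
  calc ∫ ξ in 1..t, f₂Integrand p h t ξ ≤ 4 / (1 - p) + π * (2 ^ |p| / |h|) :=
        integral_f₂Integrand_le hp hh ht
    _ ≤ 4 / (1 - p) + (4 + (2 ^ |p| / |h|) ^ 2) := by
        gcongr
        exact pi_mul_le_four_add_sq (by positivity)
    _ = 4 / (1 - p) + 4 + 4 ^ |p| / h ^ 2 := by rw [hsq, add_assoc]

/-- For `p ∈ (0,1)` and `h > 0`, the function
`F₂(t) = ∫₁^∞ t²ξ^{p−2} / ((t − ξ)² + h²ξ^{2p}) dξ` is well defined for every `t ≥ 0`,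
and `F₂` is bounded on `[0, ∞)`.  Moreover, for every `t ≥ 2^{1/(1−p)}` one has
`∫₁^t t²ξ^{p−2} / ((t − ξ)² + h²ξ^{2p}) dξ ≤ 4/(1−p) + 4 + 4^p/h²`. -/
theorem stmt11 (p h : ℝ) (hp : p ∈ Set.Ioo (0 : ℝ) 1) (hh : 0 < h) :
    (∀ t : ℝ, 0 ≤ t →
      IntegrableOn (fun ξ : ℝ => t ^ 2 * ξ ^ (p - 2) / ((t - ξ) ^ 2 + h ^ 2 * ξ ^ (2 * p)))
        (Set.Ici (1 : ℝ))) ∧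
    (∃ C : ℝ, ∀ t : ℝ, 0 ≤ t →
      (∫ ξ in Set.Ici (1 : ℝ), t ^ 2 * ξ ^ (p - 2) / ((t - ξ) ^ 2 + h ^ 2 * ξ ^ (2 * p))) ≤ C) ∧
    ∀ t : ℝ, (2 : ℝ) ^ (1 / (1 - p)) ≤ t →
      (∫ ξ in (1 : ℝ)..t, t ^ 2 * ξ ^ (p - 2) / ((t - ξ) ^ 2 + h ^ 2 * ξ ^ (2 * p)))
        ≤ 4 / (1 - p) + 4 + 4 ^ p / h ^ 2 := by
  obtain ⟨hint, hbound, hle⟩ := stmt11_general p h hp.2 hh.ne'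
  exact ⟨fun t _ ↦ hint t, ⟨_, fun t _ ↦ hbound t⟩, fun t ht ↦
    (hle t ((one_le_rpow one_le_two (by simpa using hp.2.le)).trans ht)).trans_eq
      (by rw [abs_of_pos hp.1])⟩
end
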